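/- Let z ∈ (1/2, 1), set α = 1/z, let μ be the unique absolutely continuous f_z-invariant Borel probability measure on [0,1], and let φ : [0,1] → ℝ be Hölder continuous with ∫ φ dμ = 0 and φ(0) ≠ 0. Set Φ_n = ∑_{j=0}^{n-1} φ ∘ f_z^j. Then for every q > α there exist constants C₁, C₂ > 0 such that C₁ n^{q+1−α} ≤ ∫ |Φ_n|^q dμ ≤ C₂ n^{q+1−α} for all n ≥ 1. -/

import Mathlib

open MeasureTheory Set NNReal Filter

/-- The Liverani–Saussol–Vaienti (Pomeau–Manneville type) map with parameter `z`. -/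
noncomputable def lsv (z : ℝ) (y : ℝ) : ℝ :=
  if y < 1 / 2 then y * (1 + 2 ^ z * y ^ z) else 2 * y - 1

/-- The Birkhoff sum `Φ_n = ∑_{j=0}^{n-1} φ ∘ f_z^j`. -/
noncomputable def lsvBirkhoff (z : ℝ) (φ : ℝ → ℝ) (n : ℕ) (x : ℝ) : ℝ :=
  ∑ j ∈ Finset.range n, φ ((lsv z)^[j] x)

/-!
Write `α = 1 / z`. A point of `[1/2, 1)` needs more than `n` steps to return there with probability
of order `n ^ (-α)`, so `μ [0, x_n)` is of order `n ^ (1 - α)`, where `x_n` is the `n`-th preimage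
of `1 / 2` along the left branch. Points of `[0, x_{n+N})` stay near `0` for `n` steps, hence
`Φ_n ≈ n φ(0)` there, which is the lower bound.

The upper bound integrates `q t ^ (q - 1)` against the tail estimate
`μ {|Φ_n| > t} ≤ C n t ^ (-α)`, where `0 < t ≤ n sup |φ|`. For that estimate, lift `φ` to the
Rokhlin tower over the induced map and truncate at a level `s` proportional to `t`. Up to a
coboundary bounded by a small multiple of `t`, the truncated lift is the truncated excursion sum
placed on the top of the tower. The transfer operator of the induced map contracts a cone of
log-Hölder functions, so Gordin's method turns these sums, after centering, into approximate
martingale differences with second moment of order `s ^ (2 - α)`, and Chebyshev gives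
`n s ^ (2 - α) / t ^ 2`. The tower is visited above level `s` with probability of order
`s ^ (1 - α) + n s ^ (-α)`, and the centering drifts by at most a multiple of `n s ^ (1 - α)`,
which is small compared with `t` unless the claimed bound exceeds one anyway.
-/

namespace LSV

/-! ### The left branch and its inverse iterates -/

section LeftBranch

variable {z : ℝ}

/-- The left branch `y ↦ y (1 + 2^z y^z)` of the map, without the restriction to `y < 1/2`. -/
noncomputable def leftBranch (z x : ℝ) : ℝ := x * (1 + 2 ^ z * x ^ z)

/-- The derivative of the left branch on `(0, ∞)`. -/
noncomputable def leftBranchDeriv (z x : ℝ) : ℝ := 1 + (1 + z) * (2 ^ z * x ^ z)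

lemma leftBranch_zero (z : ℝ) : leftBranch z 0 = 0 := by simp [leftBranch]

lemma two_rpow_mul_half_rpow (z : ℝ) : (2 : ℝ) ^ z * (1 / 2 : ℝ) ^ z = 1 := by
  rw [← Real.mul_rpow (by norm_num) (by norm_num)]
  norm_num

lemma leftBranch_half (z : ℝ) : leftBranch z (1 / 2) = 1 := by
  rw [leftBranch, two_rpow_mul_half_rpow]
  norm_num

lemma two_rpow_mul_rpow_le {a b : ℝ} (hz : 0 ≤ z) (ha : 0 ≤ a) (hab : a ≤ b) :
    2 ^ z * a ^ z ≤ 2 ^ z * b ^ z :=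
  mul_le_mul_of_nonneg_left (Real.rpow_le_rpow ha hab hz) (by positivity)

lemma sub_le_leftBranch_sub {a b : ℝ} (hz : 0 ≤ z) (ha : 0 ≤ a) (hab : a ≤ b) :
    b - a ≤ leftBranch z b - leftBranch z a := by
  have hmul : a * (2 ^ z * a ^ z) ≤ b * (2 ^ z * b ^ z) :=
    mul_le_mul hab (two_rpow_mul_rpow_le hz ha hab) (by positivity) (ha.trans hab)
  unfold leftBranch
  linarith

lemma leftBranch_strictMonoOn (hz : 0 ≤ z) : StrictMonoOn (leftBranch z) (Ici 0) := by
  intro a ha b _ hab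
  linarith [sub_le_leftBranch_sub hz ha hab.le]

lemma leftBranch_continuous (hz : 0 ≤ z) : Continuous (leftBranch z) :=
  continuous_id.mul (continuous_const.add (continuous_const.mul (Real.continuous_rpow_const hz)))

lemma leftBranch_hasDerivAt {x : ℝ} (hx : 0 < x) :
    HasDerivAt (leftBranch z) (leftBranchDeriv z x) x := by
  have hpow : HasDerivAt (fun x : ℝ => x ^ z) (z * x ^ (z - 1)) x :=
    Real.hasDerivAt_rpow_const (Or.inl hx.ne')
  refine ((hasDerivAt_id x).mul ((hpow.const_mul (2 ^ z)).const_add 1)).congr_deriv ?_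
  have hsplit : x ^ z = x ^ (z - 1) * x := by rw [← Real.rpow_add_one hx.ne', sub_add_cancel]
  simp only [id, leftBranchDeriv]
  rw [hsplit]
  ring

lemma leftBranchDeriv_pos {x : ℝ} (hz : 0 ≤ z) (hx : 0 ≤ x) : 0 < leftBranchDeriv z x := by
  unfold leftBranchDeriv
  positivity

lemma leftBranch_bijOn (hz : 0 ≤ z) : BijOn (leftBranch z) (Ioo 0 (1 / 2)) (Ioo 0 1) := by
  have hmono := leftBranch_strictMonoOn hz
  refine ⟨fun x hx => ⟨?_, ?_⟩, hmono.injOn.mono fun x hx => hx.1.le, ?_⟩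
  · rw [← leftBranch_zero z]
    exact hmono (mem_Ici.2 le_rfl) (mem_Ici.2 hx.1.le) hx.1
  · rw [← leftBranch_half z]
    exact hmono (mem_Ici.2 hx.1.le) (mem_Ici.2 (by norm_num)) hx.2
  · have hivt := intermediate_value_Ioo (a := (0 : ℝ)) (b := 1 / 2) (by norm_num)
      (leftBranch_continuous hz).continuousOn
    rwa [leftBranch_zero, leftBranch_half] at hivt

/-- The inverse of the left branch, meaningful on `(0, 1)` where it takes values in `(0, 1/2)`. -/
noncomputable def leftInv (z : ℝ) : ℝ → ℝ := Function.invFunOn (leftBranch z) (Ioo 0 (1 / 2))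

lemma leftInv_bijOn (hz : 0 ≤ z) : BijOn (leftInv z) (Ioo 0 1) (Ioo 0 (1 / 2)) :=
  (leftBranch_bijOn hz).symm (leftBranch_bijOn hz).invOn_invFunOn.symm

lemma leftInv_lt_half {y : ℝ} (hz : 0 ≤ z) (hy : y ∈ Ioo (0 : ℝ) 1) : leftInv z y < 1 / 2 :=
  ((leftInv_bijOn hz).mapsTo hy).2

lemma leftInv_mapsTo (hz : 0 ≤ z) : MapsTo (leftInv z) (Ioo 0 1) (Ioo 0 1) := fun _ hy =>
  ⟨((leftInv_bijOn hz).mapsTo hy).1, (leftInv_lt_half hz hy).trans (by norm_num)⟩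

lemma leftBranch_leftInv {y : ℝ} (hz : 0 ≤ z) (hy : y ∈ Ioo (0 : ℝ) 1) :
    leftBranch z (leftInv z y) = y :=
  (leftBranch_bijOn hz).invOn_invFunOn.2 hy

lemma leftInv_leftBranch {x : ℝ} (hz : 0 ≤ z) (hx : x ∈ Ioo (0 : ℝ) (1 / 2)) :
    leftInv z (leftBranch z x) = x :=
  (leftBranch_bijOn hz).invOn_invFunOn.1 hx

lemma leftInv_strictMonoOn (hz : 0 ≤ z) : StrictMonoOn (leftInv z) (Ioo 0 1) := by
  intro a ha b hb hab
  rw [← (leftBranch_strictMonoOn hz).lt_iff_lt (mem_Ici.2 (leftInv_mapsTo hz ha).1.le)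
    (mem_Ici.2 (leftInv_mapsTo hz hb).1.le), leftBranch_leftInv hz ha, leftBranch_leftInv hz hb]
  exact hab

lemma abs_leftInv_sub_le {a b : ℝ} (hz : 0 ≤ z) (ha : a ∈ Ioo (0 : ℝ) 1)
    (hb : b ∈ Ioo (0 : ℝ) 1) : |leftInv z a - leftInv z b| ≤ |a - b| := by
  wlog hab : a ≤ b generalizing a b
  · rw [abs_sub_comm, abs_sub_comm a b]
    exact this hb ha (le_of_not_ge hab)
  have hmono := (leftInv_strictMonoOn hz).monotoneOn ha hb hab
  have hexp := sub_le_leftBranch_sub hz (leftInv_mapsTo hz ha).1.le hmono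
  rw [leftBranch_leftInv hz ha, leftBranch_leftInv hz hb] at hexp
  rwa [abs_sub_comm, abs_sub_comm a b, abs_of_nonneg (sub_nonneg.2 hab),
    abs_of_nonneg (sub_nonneg.2 hmono)]

lemma leftInv_continuousOn (hz : 0 ≤ z) : ContinuousOn (leftInv z) (Ioo 0 1) := by
  refine (LipschitzOnWith.of_dist_le_mul (K := 1) fun x hx y hy => ?_).continuousOn
  simpa [Real.dist_eq] using abs_leftInv_sub_le hz hx hy

lemma leftInv_hasDerivAt {y : ℝ} (hz : 0 ≤ z) (hy : y ∈ Ioo (0 : ℝ) 1) :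
    HasDerivAt (leftInv z) (leftBranchDeriv z (leftInv z y))⁻¹ y := by
  have hpos := (leftInv_mapsTo hz hy).1
  refine HasDerivAt.of_local_left_inverse (f := leftBranch z)
    ((leftInv_continuousOn hz).continuousAt (Ioo_mem_nhds hy.1 hy.2))
    (leftBranch_hasDerivAt hpos) (leftBranchDeriv_pos hz hpos.le).ne' ?_
  filter_upwards [Ioo_mem_nhds hy.1 hy.2] with w hw
  exact leftBranch_leftInv hz hw

end LeftBranch

section InverseIterates

variable {z : ℝ}

lemma leftInv_iterate_mem {y : ℝ} (hz : 0 ≤ z) (hy : y ∈ Ioo (0 : ℝ) 1) (n : ℕ) :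
    (leftInv z)^[n] y ∈ Ioo (0 : ℝ) 1 :=
  (leftInv_mapsTo hz).iterate n hy

lemma leftInv_iterate_succ_lt_half {y : ℝ} (hz : 0 ≤ z) (hy : y ∈ Ioo (0 : ℝ) 1) (n : ℕ) :
    (leftInv z)^[n + 1] y < 1 / 2 := by
  rw [Function.iterate_succ_apply']
  exact leftInv_lt_half hz (leftInv_iterate_mem hz hy n)

lemma leftBranch_leftInv_iterate_succ {y : ℝ} (hz : 0 ≤ z) (hy : y ∈ Ioo (0 : ℝ) 1) (n : ℕ) :
    leftBranch z ((leftInv z)^[n + 1] y) = (leftInv z)^[n] y := by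
  rw [Function.iterate_succ_apply', leftBranch_leftInv hz (leftInv_iterate_mem hz hy n)]

lemma leftInv_iterate_strictMonoOn (hz : 0 ≤ z) (n : ℕ) :
    StrictMonoOn (leftInv z)^[n] (Ioo 0 1) := by
  induction n with
  | zero => exact strictMonoOn_id
  | succ n ih => exact ih.comp (leftInv_strictMonoOn hz) (leftInv_mapsTo hz)

lemma abs_leftInv_iterate_sub_le {a b : ℝ} (hz : 0 ≤ z) (ha : a ∈ Ioo (0 : ℝ) 1)
    (hb : b ∈ Ioo (0 : ℝ) 1) (n : ℕ) :
    |(leftInv z)^[n] a - (leftInv z)^[n] b| ≤ |a - b| := by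
  induction n with
  | zero => exact le_rfl
  | succ n ih =>
    rw [Function.iterate_succ_apply', Function.iterate_succ_apply']
    exact (abs_leftInv_sub_le hz (leftInv_iterate_mem hz ha n)
      (leftInv_iterate_mem hz hb n)).trans ih

/-- The derivative of the `n`-th iterate of the inverse left branch. -/
noncomputable def leftInvIterDeriv (z : ℝ) (n : ℕ) (y : ℝ) : ℝ :=
  ∏ i ∈ Finset.range n, (leftBranchDeriv z ((leftInv z)^[i + 1] y))⁻¹

lemma leftInvIterDeriv_succ (z : ℝ) (n : ℕ) (y : ℝ) : leftInvIterDeriv z (n + 1) y =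
    leftInvIterDeriv z n y * (leftBranchDeriv z ((leftInv z)^[n + 1] y))⁻¹ :=
  Finset.prod_range_succ _ _

lemma leftInv_iterate_hasDerivAt {y : ℝ} (hz : 0 ≤ z) (hy : y ∈ Ioo (0 : ℝ) 1) (n : ℕ) :
    HasDerivAt (leftInv z)^[n] (leftInvIterDeriv z n y) y := by
  induction n with
  | zero =>
    rw [leftInvIterDeriv, Finset.range_zero, Finset.prod_empty]
    exact hasDerivAt_id y
  | succ n ih =>
    have hcomp := (leftInv_hasDerivAt hz (leftInv_iterate_mem hz hy n)).comp y ih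
    rwa [leftInvIterDeriv_succ, mul_comm, Function.iterate_succ_apply', Function.iterate_succ']

lemma leftInvIterDeriv_pos {y : ℝ} (hz : 0 ≤ z) (hy : y ∈ Ioo (0 : ℝ) 1) (n : ℕ) :
    0 < leftInvIterDeriv z n y :=
  Finset.prod_pos fun _ _ =>
    inv_pos.2 (leftBranchDeriv_pos hz (leftInv_iterate_mem hz hy _).1.le)

lemma leftInvIterDeriv_antitoneOn (hz : 0 ≤ z) (n : ℕ) :
    AntitoneOn (leftInvIterDeriv z n) (Ioo 0 1) := by
  intro a ha b hb hab
  refine Finset.prod_le_prod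
    (fun i _ => (inv_pos.2 (leftBranchDeriv_pos hz (leftInv_iterate_mem hz hb _).1.le)).le)
    fun i _ => inv_anti₀ (leftBranchDeriv_pos hz (leftInv_iterate_mem hz ha _).1.le) ?_
  have hpow := two_rpow_mul_rpow_le hz (leftInv_iterate_mem hz ha (i + 1)).1.le
    ((leftInv_iterate_strictMonoOn hz (i + 1)).monotoneOn ha hb hab)
  unfold leftBranchDeriv
  gcongr

lemma monotoneOn_one_add_sq_div {c : ℝ} (hc : 0 ≤ c) (hc2 : c ≤ 2) :
    MonotoneOn (fun u : ℝ => (1 + u) ^ 2 / (1 + c * u)) (Ici 0) := by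
  intro u (hu : 0 ≤ u) v (hv : 0 ≤ v) huv
  simp only
  rw [div_le_div_iff₀ (by positivity) (by positivity), ← sub_nonneg]
  have hfactor : (1 + v) ^ 2 * (1 + c * u) - (1 + u) ^ 2 * (1 + c * v)
      = (v - u) * ((2 - c) + (u + v) + c * u * v) := by ring
  rw [hfactor]
  have := sub_nonneg.2 hc2
  have := sub_nonneg.2 huv
  positivity

-- In the coordinate `-1 / y` the inverse branches are convex, which controls their distortion.
lemma leftInvIterDeriv_mul_sq_monotoneOn (hz : 0 ≤ z) (hz1 : z ≤ 1) (n : ℕ) :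
    MonotoneOn (fun y => leftInvIterDeriv z n y * (y / (leftInv z)^[n] y) ^ 2) (Ioo 0 1) := by
  induction n with
  | zero =>
    refine (monotoneOn_const (c := (1 : ℝ))).congr fun y hy => ?_
    simp [leftInvIterDeriv, hy.1.ne']
  | succ n ih =>
    have hmaps : MapsTo (fun y => 2 ^ z * (leftInv z)^[n + 1] y ^ z) (Ioo 0 1) (Ici 0) :=
      fun y hy => by
        have := (leftInv_iterate_mem hz hy (n + 1)).1
        exact mem_Ici.2 (by positivity)
    have hmono : MonotoneOn (fun y => 2 ^ z * (leftInv z)^[n + 1] y ^ z) (Ioo 0 1) :=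
      fun a ha b hb hab => two_rpow_mul_rpow_le hz (leftInv_iterate_mem hz ha (n + 1)).1.le
        ((leftInv_iterate_strictMonoOn hz (n + 1)).monotoneOn ha hb hab)
    have hfactor := (monotoneOn_one_add_sq_div (c := 1 + z) (by linarith) (by linarith)).comp
      hmono hmaps
    refine (ih.mul hfactor
      (fun y hy => mul_nonneg (leftInvIterDeriv_pos hz hy n).le (sq_nonneg _))
      fun y hy => ?_).congr fun y hy => ?_
    · have : 0 ≤ 2 ^ z * (leftInv z)^[n + 1] y ^ z := hmaps hy
      rw [Function.comp_apply]
      positivity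
    · have : 0 ≤ 2 ^ z * (leftInv z)^[n + 1] y ^ z := hmaps hy
      have hG := (leftInv_iterate_mem hz hy (n + 1)).1
      rw [Pi.mul_apply, Function.comp_apply]
      rw [leftInvIterDeriv_succ, ← leftBranch_leftInv_iterate_succ hz hy n, leftBranch,
        leftBranchDeriv]
      field_simp

/-- The base `[1/2, 1)` on which the map is induced. -/
def base : Set ℝ := Ico (1 / 2) 1

lemma half_mem_Ioo : (1 / 2 : ℝ) ∈ Ioo (0 : ℝ) 1 := by constructor <;> norm_num

lemma half_mem_base : (1 / 2 : ℝ) ∈ base := by constructor <;> norm_num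

lemma base_subset_Ioo : base ⊆ Ioo 0 1 := fun _ hy => ⟨by linarith [hy.1], hy.2⟩

lemma base_subset_Ico : base ⊆ Ico 0 1 := base_subset_Ioo.trans Ioo_subset_Ico_self

lemma measurableSet_base : MeasurableSet base := measurableSet_Ico

lemma abs_sub_le_half {x y : ℝ} (hx : x ∈ base) (hy : y ∈ base) : |x - y| ≤ 1 / 2 :=
  abs_le.2 ⟨by linarith [hx.1, hy.2], by linarith [hx.2, hy.1]⟩

lemma leftInvIterDeriv_le_exp_mul {a b : ℝ} (hz : 0 ≤ z) (hz1 : z ≤ 1) (ha : a ∈ base)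
    (hb : b ∈ base) (n : ℕ) :
    leftInvIterDeriv z n a ≤ Real.exp (4 * |a - b|) * leftInvIterDeriv z n b := by
  have ha' := base_subset_Ioo ha
  have hb' := base_subset_Ioo hb
  have hposb := leftInvIterDeriv_pos hz hb' n
  rcases le_total b a with hba | hab
  · have hexp : 1 ≤ Real.exp (4 * |a - b|) := Real.one_le_exp (by positivity)
    nlinarith [leftInvIterDeriv_antitoneOn hz n hb' ha' hba]
  have hkoebe := leftInvIterDeriv_mul_sq_monotoneOn hz hz1 n ha' hb' hab
  have hGle := (leftInv_iterate_strictMonoOn hz n).monotoneOn ha' hb' hab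
  have hGa := (leftInv_iterate_mem hz ha' n).1
  have hGb := (leftInv_iterate_mem hz hb' n).1
  have ha0 := ha'.1
  have hb0 := hb'.1
  have hratio : b / a ≤ Real.exp (2 * |a - b|) := by
    rw [abs_sub_comm, abs_of_nonneg (sub_nonneg.2 hab), div_le_iff₀ ha0]
    have := Real.add_one_le_exp (2 * (b - a))
    nlinarith [ha.1]
  calc leftInvIterDeriv z n a
      = leftInvIterDeriv z n a * (a / (leftInv z)^[n] a) ^ 2 * ((leftInv z)^[n] a / a) ^ 2 := by
        field_simp
    _ ≤ leftInvIterDeriv z n b * (b / (leftInv z)^[n] b) ^ 2 * ((leftInv z)^[n] a / a) ^ 2 := by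
        gcongr
    _ ≤ leftInvIterDeriv z n b * (b / (leftInv z)^[n] b) ^ 2 * ((leftInv z)^[n] b / a) ^ 2 := by
        gcongr
    _ = (b / a) ^ 2 * leftInvIterDeriv z n b := by field_simp
    _ ≤ Real.exp (2 * |a - b|) ^ 2 * leftInvIterDeriv z n b := by gcongr
    _ = Real.exp (4 * |a - b|) * leftInvIterDeriv z n b := by
        rw [← Real.exp_nat_mul]
        ring_nf

end InverseIterates

/-! ### Preimages of the discontinuity -/

section PreimagesOfHalf

variable {z : ℝ}

/-- The point of `(0, 1/2]` which reaches `1/2` after exactly `n` steps along the left branch. -/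
noncomputable def preHalf (z : ℝ) (n : ℕ) : ℝ := (leftInv z)^[n] (1 / 2)

lemma preHalf_mem (hz : 0 ≤ z) (n : ℕ) : preHalf z n ∈ Ioo (0 : ℝ) 1 :=
  leftInv_iterate_mem hz half_mem_Ioo n

lemma preHalf_succ_lt_half (hz : 0 ≤ z) (n : ℕ) : preHalf z (n + 1) < 1 / 2 :=
  leftInv_iterate_succ_lt_half hz half_mem_Ioo n

lemma leftBranch_preHalf_succ (hz : 0 ≤ z) (n : ℕ) :
    leftBranch z (preHalf z (n + 1)) = preHalf z n :=
  leftBranch_leftInv_iterate_succ hz half_mem_Ioo n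

lemma preHalf_succ_lt (hz : 0 ≤ z) (n : ℕ) : preHalf z (n + 1) < preHalf z n := by
  unfold preHalf
  rw [Function.iterate_succ_apply]
  exact leftInv_iterate_strictMonoOn hz n (leftInv_mapsTo hz half_mem_Ioo) half_mem_Ioo
    (leftInv_lt_half hz half_mem_Ioo)

lemma preHalf_sub_succ (hz : 0 ≤ z) (n : ℕ) :
    preHalf z n - preHalf z (n + 1) = 2 ^ z * preHalf z (n + 1) ^ (1 + z) := by
  rw [← leftBranch_preHalf_succ hz n, leftBranch, Real.rpow_add (preHalf_mem hz (n + 1)).1,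
    Real.rpow_one]
  ring

lemma one_sub_le_inv_one_add_rpow {u : ℝ} (hz1 : z ≤ 1) (hu : 0 ≤ u) :
    1 - u ≤ ((1 + u) ^ z)⁻¹ := by
  have hpow : (1 + u) ^ z ≤ 1 + u :=
    Real.rpow_le_self_of_one_le (by linarith) hz1
  calc 1 - u ≤ (1 + u)⁻¹ := by
        rw [← one_div, le_div_iff₀ (by linarith)]
        nlinarith
    _ ≤ ((1 + u) ^ z)⁻¹ := inv_anti₀ (by positivity) hpow

lemma inv_one_add_rpow_le {u : ℝ} (hz : 0 ≤ z) (hz1 : z ≤ 1) (hu : 0 ≤ u) (hu1 : u ≤ 1) :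
    ((1 + u) ^ z)⁻¹ ≤ 1 - z * u / 2 := by
  have hinv : (1 + u)⁻¹ = 1 + -(u / (1 + u)) := by
    field_simp
    ring
  have hle : u / (1 + u) ≤ 1 := by
    rw [div_le_one (by linarith)]
    linarith
  have hge : u / 2 ≤ u / (1 + u) := div_le_div_of_nonneg_left hu (by linarith) (by linarith)
  rw [← Real.inv_rpow (by linarith), hinv]
  calc (1 + -(u / (1 + u))) ^ z ≤ 1 + z * -(u / (1 + u)) :=
        rpow_one_add_le_one_add_mul_self (by linarith) hz hz1
    _ ≤ 1 - z * u / 2 := by linarith [mul_le_mul_of_nonneg_left hge hz]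

lemma two_rpow_le_two (hz1 : z ≤ 1) : (2 : ℝ) ^ z ≤ 2 :=
  Real.rpow_le_self_of_one_le (by norm_num) hz1

lemma two_rpow_mul_preHalf_rpow_le_one (hz : 0 ≤ z) (n : ℕ) : 2 ^ z * preHalf z (n + 1) ^ z ≤ 1 :=
  (two_rpow_mul_rpow_le hz (preHalf_mem hz _).1.le (preHalf_succ_lt_half hz n).le).trans_eq
    (two_rpow_mul_half_rpow z)

lemma inv_preHalf_rpow_eq (hz : 0 ≤ z) (n : ℕ) : (preHalf z n ^ z)⁻¹ =
    (preHalf z (n + 1) ^ z)⁻¹ * ((1 + 2 ^ z * preHalf z (n + 1) ^ z) ^ z)⁻¹ := by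
  have hpos := (preHalf_mem hz (n + 1)).1.le
  rw [← mul_inv, ← Real.mul_rpow hpos (by positivity), ← leftBranch, leftBranch_preHalf_succ hz]

lemma inv_preHalf_rpow_add_le (hz : 0 ≤ z) (hz1 : z ≤ 1) (n : ℕ) :
    (preHalf z n ^ z)⁻¹ + z / 2 ≤ (preHalf z (n + 1) ^ z)⁻¹ := by
  have hpow : 0 < preHalf z (n + 1) ^ z := Real.rpow_pos_of_pos (preHalf_mem hz _).1 z
  have htwo : (1 : ℝ) ≤ 2 ^ z := Real.one_le_rpow (by norm_num) hz
  have hstep := mul_le_mul_of_nonneg_left (inv_one_add_rpow_le hz hz1 (by positivity)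
    (two_rpow_mul_preHalf_rpow_le_one hz n)) (inv_pos.2 hpow).le
  rw [← inv_preHalf_rpow_eq hz n] at hstep
  have hexpand : (preHalf z (n + 1) ^ z)⁻¹ * (1 - z * (2 ^ z * preHalf z (n + 1) ^ z) / 2) =
      (preHalf z (n + 1) ^ z)⁻¹ - z * 2 ^ z / 2 := by
    field_simp
  rw [hexpand] at hstep
  linarith [mul_le_mul_of_nonneg_left htwo hz]

lemma inv_preHalf_rpow_succ_le (hz : 0 ≤ z) (hz1 : z ≤ 1) (n : ℕ) :
    (preHalf z (n + 1) ^ z)⁻¹ ≤ (preHalf z n ^ z)⁻¹ + 2 := by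
  have hpow : 0 < preHalf z (n + 1) ^ z := Real.rpow_pos_of_pos (preHalf_mem hz _).1 z
  have hstep := mul_le_mul_of_nonneg_left
    (one_sub_le_inv_one_add_rpow hz1 (u := 2 ^ z * preHalf z (n + 1) ^ z) (by positivity))
    (inv_pos.2 hpow).le
  rw [← inv_preHalf_rpow_eq hz n] at hstep
  have hexpand : (preHalf z (n + 1) ^ z)⁻¹ * (1 - 2 ^ z * preHalf z (n + 1) ^ z) =
      (preHalf z (n + 1) ^ z)⁻¹ - 2 ^ z := by
    field_simp
  rw [hexpand] at hstep
  linarith [two_rpow_le_two hz1]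

lemma inv_preHalf_zero_rpow (z : ℝ) : (preHalf z 0 ^ z)⁻¹ = 2 ^ z :=
  (eq_inv_of_mul_eq_one_left (two_rpow_mul_half_rpow z)).symm

lemma mul_le_inv_preHalf_rpow (hz : 0 ≤ z) (hz1 : z ≤ 1) (n : ℕ) :
    z / 2 * (n + 1) ≤ (preHalf z n ^ z)⁻¹ := by
  induction n with
  | zero =>
    rw [inv_preHalf_zero_rpow, Nat.cast_zero]
    linarith [Real.one_le_rpow (show (1 : ℝ) ≤ 2 by norm_num) hz]
  | succ n ih =>
    push_cast
    linarith [inv_preHalf_rpow_add_le hz hz1 n]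

lemma inv_preHalf_rpow_le_mul (hz : 0 ≤ z) (hz1 : z ≤ 1) (n : ℕ) :
    (preHalf z n ^ z)⁻¹ ≤ 2 * (n + 1) := by
  induction n with
  | zero =>
    rw [inv_preHalf_zero_rpow, Nat.cast_zero]
    linarith [two_rpow_le_two hz1]
  | succ n ih =>
    push_cast
    linarith [inv_preHalf_rpow_succ_le hz hz1 n]

lemma preHalf_eq_rpow (hz : 0 < z) (n : ℕ) :
    preHalf z n = ((preHalf z n ^ z)⁻¹) ^ (-(1 / z)) := by
  have hpos := (preHalf_mem hz.le n).1.le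
  have hexp : -z * -(1 / z) = 1 := by field_simp
  rw [← Real.rpow_neg hpos, ← Real.rpow_mul hpos, hexp, Real.rpow_one]

lemma exists_preHalf_le (hz : 0 < z) (hz1 : z ≤ 1) :
    ∃ C : ℝ, 0 < C ∧ ∀ n : ℕ, preHalf z n ≤ C * ((n : ℝ) + 1) ^ (-(1 / z)) := by
  refine ⟨(z / 2) ^ (-(1 / z)), by positivity, fun n => ?_⟩
  rw [preHalf_eq_rpow hz n, ← Real.mul_rpow (by positivity) (by positivity)]
  exact Real.rpow_le_rpow_of_nonpos (by positivity) (mul_le_inv_preHalf_rpow hz.le hz1 n)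
    (neg_nonpos.2 (by positivity))

lemma exists_le_preHalf (hz : 0 < z) (hz1 : z ≤ 1) :
    ∃ C : ℝ, 0 < C ∧ ∀ n : ℕ, C * ((n : ℝ) + 1) ^ (-(1 / z)) ≤ preHalf z n := by
  refine ⟨2 ^ (-(1 / z)), by positivity, fun n => ?_⟩
  have hpos := (preHalf_mem hz.le n).1
  rw [preHalf_eq_rpow hz n, ← Real.mul_rpow (by positivity) (by positivity)]
  exact Real.rpow_le_rpow_of_nonpos (by positivity) (inv_preHalf_rpow_le_mul hz.le hz1 n)
    (neg_nonpos.2 (by positivity))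

lemma preHalf_tendsto_zero (hz : 0 < z) (hz1 : z ≤ 1) :
    Tendsto (preHalf z) atTop (nhds 0) := by
  obtain ⟨C, -, hle⟩ := exists_preHalf_le hz hz1
  have hlim : Tendsto (fun n : ℕ => C * ((n : ℝ) + 1) ^ (-(1 / z))) atTop (nhds (C * 0)) :=
    ((tendsto_rpow_neg_atTop (by positivity)).comp
      (tendsto_atTop_add_const_right _ _ tendsto_natCast_atTop_atTop)).const_mul C
  rw [mul_zero] at hlim
  exact squeeze_zero (fun n => (preHalf_mem hz.le n).1.le) hle hlim

lemma exists_preHalf_sub_succ_le (hz : 0 < z) (hz1 : z ≤ 1) : ∃ C : ℝ, 0 < C ∧ ∀ n : ℕ,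
    preHalf z n - preHalf z (n + 1) ≤ C * ((n : ℝ) + 2) ^ (-(1 / z) - 1) := by
  obtain ⟨C, hC, hle⟩ := exists_preHalf_le hz hz1
  refine ⟨2 * C ^ (1 + z), by positivity, fun n => ?_⟩
  have hpos := (preHalf_mem hz.le (n + 1)).1
  have hexp : -(1 / z) * (1 + z) = -(1 / z) - 1 := by
    field_simp
    ring
  have hcast : ((n + 1 : ℕ) : ℝ) + 1 = (n : ℝ) + 2 := by
    push_cast
    ring
  have hpow : preHalf z (n + 1) ^ (1 + z) ≤ C ^ (1 + z) * ((n : ℝ) + 2) ^ (-(1 / z) - 1) := by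
    calc preHalf z (n + 1) ^ (1 + z) ≤ (C * ((n : ℝ) + 2) ^ (-(1 / z))) ^ (1 + z) :=
          Real.rpow_le_rpow hpos.le (hcast ▸ hle (n + 1)) (by linarith)
      _ = C ^ (1 + z) * ((n : ℝ) + 2) ^ (-(1 / z) - 1) := by
          rw [Real.mul_rpow hC.le (by positivity), ← Real.rpow_mul (by positivity), hexp]
  rw [preHalf_sub_succ hz.le, mul_assoc]
  exact mul_le_mul (two_rpow_le_two hz1) hpow (by positivity) (by norm_num)

lemma exists_leftInvIterDeriv_succ_le (hz : 0 ≤ z) (n : ℕ) :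
    ∃ ξ ∈ base, leftInvIterDeriv z (n + 1) ξ ≤ 4 * (preHalf z n - preHalf z (n + 1)) := by
  have hmem : (3 / 4 : ℝ) ∈ Ioo (0 : ℝ) 1 := by constructor <;> norm_num
  have hderiv : ∀ x ∈ Icc (1 / 2 : ℝ) (3 / 4),
      HasDerivAt (leftInv z)^[n + 1] (leftInvIterDeriv z (n + 1) x) x := fun x hx =>
    leftInv_iterate_hasDerivAt hz ⟨by linarith [hx.1], by linarith [hx.2]⟩ (n + 1)
  obtain ⟨ξ, hξ, hslope⟩ := exists_hasDerivAt_eq_slope (leftInv z)^[n + 1]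
    (leftInvIterDeriv z (n + 1)) (show (1 / 2 : ℝ) < 3 / 4 by norm_num)
    (fun x hx => (hderiv x hx).continuousAt.continuousWithinAt)
    (fun x hx => hderiv x (Ioo_subset_Icc_self hx))
  have hle : (leftInv z)^[n + 1] (3 / 4) ≤ preHalf z n := by
    rw [Function.iterate_succ_apply]
    exact (leftInv_iterate_strictMonoOn hz n).monotoneOn (leftInv_mapsTo hz hmem) half_mem_Ioo
      (leftInv_lt_half hz hmem).le
  refine ⟨ξ, ⟨hξ.1.le, by linarith [hξ.2]⟩, ?_⟩
  rw [hslope, div_le_iff₀ (by norm_num), ← preHalf]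
  linarith

lemma leftInvIterDeriv_succ_le {y : ℝ} (hz : 0 ≤ z) (hz1 : z ≤ 1) (hy : y ∈ base) (n : ℕ) :
    leftInvIterDeriv z (n + 1) y ≤
      4 * Real.exp 4 * (preHalf z n - preHalf z (n + 1)) := by
  obtain ⟨ξ, hξ, hle⟩ := exists_leftInvIterDeriv_succ_le hz n
  have hexp : Real.exp (4 * |y - ξ|) ≤ Real.exp 4 :=
    Real.exp_le_exp.2 (by linarith [abs_sub_le_half hy hξ])
  calc leftInvIterDeriv z (n + 1) y
      ≤ Real.exp (4 * |y - ξ|) * leftInvIterDeriv z (n + 1) ξ :=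
        leftInvIterDeriv_le_exp_mul hz hz1 hy hξ (n + 1)
    _ ≤ Real.exp 4 * (4 * (preHalf z n - preHalf z (n + 1))) :=
        mul_le_mul hexp hle (leftInvIterDeriv_pos hz (base_subset_Ioo hξ) _).le (by positivity)
    _ = 4 * Real.exp 4 * (preHalf z n - preHalf z (n + 1)) := by ring

lemma exists_leftInvIterDeriv_le (hz : 0 < z) (hz1 : z ≤ 1) : ∃ C : ℝ, 0 < C ∧
    ∀ n : ℕ, ∀ y ∈ base, leftInvIterDeriv z n y ≤ C * ((n : ℝ) + 1) ^ (-(1 / z) - 1) := by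
  obtain ⟨C, hC, hgap⟩ := exists_preHalf_sub_succ_le hz hz1
  refine ⟨1 + 4 * Real.exp 4 * C, by positivity, fun n y hy => ?_⟩
  cases n with
  | zero =>
    simp only [leftInvIterDeriv, Finset.range_zero, Finset.prod_empty, Nat.cast_zero, zero_add,
      Real.one_rpow, mul_one, le_add_iff_nonneg_right]
    positivity
  | succ n =>
    have hcast : ((n + 1 : ℕ) : ℝ) + 1 = (n : ℝ) + 2 := by
      push_cast
      ring
    rw [hcast]
    have hpow : (0 : ℝ) ≤ ((n : ℝ) + 2) ^ (-(1 / z) - 1) := by positivity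
    calc leftInvIterDeriv z (n + 1) y
        ≤ 4 * Real.exp 4 * (preHalf z n - preHalf z (n + 1)) :=
          leftInvIterDeriv_succ_le hz.le hz1 hy n
      _ ≤ 4 * Real.exp 4 * (C * ((n : ℝ) + 2) ^ (-(1 / z) - 1)) := by gcongr; exact hgap n
      _ ≤ (1 + 4 * Real.exp 4 * C) * ((n : ℝ) + 2) ^ (-(1 / z) - 1) := by linarith

end PreimagesOfHalf

/-! ### First returns to the base -/

section Map

variable {z x : ℝ}

lemma lsv_of_lt_half (hx : x < 1 / 2) : lsv z x = leftBranch z x := if_pos hx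

lemma lsv_of_half_le (hx : 1 / 2 ≤ x) : lsv z x = 2 * x - 1 := if_neg hx.not_gt

lemma lsv_mem (hz : 0 ≤ z) (hx : x ∈ Ico (0 : ℝ) 1) : lsv z x ∈ Ico (0 : ℝ) 1 := by
  rcases lt_or_ge x (1 / 2) with hlt | hge
  · have hmono := leftBranch_strictMonoOn hz
    rw [lsv_of_lt_half hlt]
    refine ⟨?_, ?_⟩
    · rw [← leftBranch_zero z]
      exact hmono.monotoneOn (mem_Ici.2 le_rfl) (mem_Ici.2 hx.1) hx.1
    · rw [← leftBranch_half z]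
      exact hmono (mem_Ici.2 hx.1) (mem_Ici.2 (by norm_num)) hlt
  · rw [lsv_of_half_le hge]
    exact ⟨by linarith, by linarith [hx.2]⟩

lemma lsv_iterate_mem (hz : 0 ≤ z) (hx : x ∈ Ico (0 : ℝ) 1) (n : ℕ) :
    (lsv z)^[n] x ∈ Ico (0 : ℝ) 1 :=
  MapsTo.iterate (fun _ hy => lsv_mem hz hy) n hx

lemma lsv_measurable (z : ℝ) : Measurable (lsv z) := by
  unfold lsv
  refine Measurable.ite measurableSet_Iio ?_ ?_ <;> fun_prop

lemma lsv_leftInv_iterate_succ {y : ℝ} (hz : 0 ≤ z) (hy : y ∈ Ioo (0 : ℝ) 1) (n : ℕ) :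
    lsv z ((leftInv z)^[n + 1] y) = (leftInv z)^[n] y := by
  rw [lsv_of_lt_half (leftInv_iterate_succ_lt_half hz hy n), leftBranch_leftInv_iterate_succ hz hy]

lemma lsv_iterate_leftInv_iterate {y : ℝ} (hz : 0 ≤ z) (hy : y ∈ Ioo (0 : ℝ) 1) (n k : ℕ) :
    (lsv z)^[k] ((leftInv z)^[n + k] y) = (leftInv z)^[n] y := by
  induction k with
  | zero => rfl
  | succ k ih => rw [Function.iterate_succ_apply, ← add_assoc, lsv_leftInv_iterate_succ hz hy, ih]

lemma leftInv_iterate_lsv_iterate (hz : 0 ≤ z) (n : ℕ) (hx : x ∈ Ioo (0 : ℝ) 1)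
    (hlt : ∀ i < n, (lsv z)^[i] x < 1 / 2) : (leftInv z)^[n] ((lsv z)^[n] x) = x := by
  induction n generalizing x with
  | zero => rfl
  | succ n ih =>
    have hx2 : x < 1 / 2 := hlt 0 n.succ_pos
    have hmem : lsv z x ∈ Ioo (0 : ℝ) 1 := by
      rw [lsv_of_lt_half hx2]
      exact (leftBranch_bijOn hz).mapsTo ⟨hx.1, hx2⟩
    have hback := ih hmem fun i hi => hlt (i + 1) (Nat.succ_lt_succ hi)
    rw [Function.iterate_succ_apply' (leftInv z), Function.iterate_succ_apply (lsv z), hback,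
      lsv_of_lt_half hx2, leftInv_leftBranch hz ⟨hx.1, hx2⟩]

lemma lsv_lt_preHalf_iff (hz : 0 ≤ z) (hx : x ∈ Ico (0 : ℝ) 1) (n : ℕ) :
    (x < 1 / 2 ∧ lsv z x < preHalf z n) ↔ x < preHalf z (n + 1) := by
  have hiff : x < 1 / 2 → (lsv z x < preHalf z n ↔ x < preHalf z (n + 1)) := fun hlt => by
    rw [lsv_of_lt_half hlt, ← leftBranch_preHalf_succ hz n]
    exact (leftBranch_strictMonoOn hz).lt_iff_lt (mem_Ici.2 hx.1)
      (mem_Ici.2 (preHalf_mem hz (n + 1)).1.le)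
  exact ⟨fun ⟨hlt, hlsv⟩ => (hiff hlt).1 hlsv, fun hlt =>
    have hlt_half := hlt.trans (preHalf_succ_lt_half hz n)
    ⟨hlt_half, (hiff hlt_half).2 hlt⟩⟩

lemma forall_lsv_iterate_lt_half_iff (hz : 0 ≤ z) (hx : x ∈ Ico (0 : ℝ) 1) (n : ℕ) :
    (∀ i ≤ n, (lsv z)^[i] x < 1 / 2) ↔ x < preHalf z n := by
  induction n generalizing x with
  | zero =>
    exact ⟨fun hlt => hlt 0 le_rfl, fun hlt i hi => by rw [Nat.le_zero.1 hi]; exact hlt⟩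
  | succ n ih =>
    rw [← lsv_lt_preHalf_iff hz hx, ← ih (lsv_mem hz hx)]
    refine ⟨fun hlt => ⟨hlt 0 n.succ.zero_le, fun i hi => hlt (i + 1) (Nat.succ_le_succ hi)⟩, ?_⟩
    rintro ⟨hx2, hlt⟩ i hi
    cases i with
    | zero => exact hx2
    | succ i => exact hlt i (Nat.succ_le_succ_iff.1 hi)

end Map

section ReturnCells

variable {z x : ℝ}

/-- The points of the base whose first return to it takes more than `n` steps form the interval
`[1/2, baseEndpoint z n)`. -/
noncomputable def baseEndpoint (z : ℝ) : ℕ → ℝ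
  | 0 => 1
  | n + 1 => (1 + preHalf z n) / 2

/-- The points of the base whose first return to it takes more than `n` steps. -/
noncomputable def longReturn (z : ℝ) (n : ℕ) : Set ℝ := Ico (1 / 2) (baseEndpoint z n)

/-- The points of the base which first return to it after exactly `n + 1` steps. -/
noncomputable def returnCell (z : ℝ) (n : ℕ) : Set ℝ :=
  Ico (baseEndpoint z (n + 1)) (baseEndpoint z n)

lemma longReturn_zero (z : ℝ) : longReturn z 0 = base := rfl

lemma measurableSet_longReturn (z : ℝ) (n : ℕ) : MeasurableSet (longReturn z n) :=
  measurableSet_Ico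

lemma measurableSet_returnCell (z : ℝ) (n : ℕ) : MeasurableSet (returnCell z n) :=
  measurableSet_Ico

lemma baseEndpoint_antitone (hz : 0 ≤ z) : Antitone (baseEndpoint z) := by
  refine antitone_nat_of_succ_le fun n => ?_
  cases n with
  | zero => simp only [baseEndpoint]; linarith [(preHalf_mem hz 0).2]
  | succ n => simp only [baseEndpoint]; linarith [preHalf_succ_lt hz n]

lemma half_lt_baseEndpoint (hz : 0 ≤ z) (n : ℕ) : 1 / 2 < baseEndpoint z n := by
  cases n with
  | zero => simp only [baseEndpoint]; norm_num
  | succ n => simp only [baseEndpoint]; linarith [(preHalf_mem hz n).1]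

lemma baseEndpoint_le_one (hz : 0 ≤ z) (n : ℕ) : baseEndpoint z n ≤ 1 :=
  baseEndpoint_antitone hz n.zero_le

lemma longReturn_antitone (hz : 0 ≤ z) : Antitone (longReturn z) := fun _ _ hmn =>
  Ico_subset_Ico_right (baseEndpoint_antitone hz hmn)

lemma longReturn_subset_base (hz : 0 ≤ z) (n : ℕ) : longReturn z n ⊆ base :=
  Ico_subset_Ico_right (baseEndpoint_le_one hz n)

lemma returnCell_subset_longReturn (hz : 0 ≤ z) (n : ℕ) : returnCell z n ⊆ longReturn z n :=
  Ico_subset_Ico_left (half_lt_baseEndpoint hz (n + 1)).le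

lemma returnCell_subset_base (hz : 0 ≤ z) (n : ℕ) : returnCell z n ⊆ base :=
  (returnCell_subset_longReturn hz n).trans (longReturn_subset_base hz n)

lemma returnCell_eq_sdiff (hz : 0 ≤ z) (n : ℕ) :
    returnCell z n = longReturn z n \ longReturn z (n + 1) := by
  refine subset_antisymm (fun x hx => ⟨returnCell_subset_longReturn hz n hx, fun hx' =>
    hx.1.not_gt hx'.2⟩) fun x hx => ⟨?_, hx.1.2⟩
  by_contra! hlt
  exact hx.2 ⟨hx.1.1, hlt⟩

lemma pairwise_disjoint_returnCell (hz : 0 ≤ z) :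
    Pairwise (Function.onFun Disjoint (returnCell z)) :=
  (baseEndpoint_antitone hz).pairwise_disjoint_on_Ico_succ

lemma exists_baseEndpoint_succ_le (hz : 0 < z) (hz1 : z ≤ 1) (hx : 1 / 2 < x) :
    ∃ n, baseEndpoint z (n + 1) ≤ x := by
  obtain ⟨n, hn⟩ := ((preHalf_tendsto_zero hz hz1).eventually
    (gt_mem_nhds (show (0 : ℝ) < 2 * x - 1 by linarith))).exists
  refine ⟨n, ?_⟩
  simp only [baseEndpoint]
  linarith

lemma iUnion_returnCell (hz : 0 < z) (hz1 : z ≤ 1) : (⋃ n, returnCell z n) = Ioo (1 / 2) 1 := by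
  refine subset_antisymm (iUnion_subset fun n x hx => ⟨(half_lt_baseEndpoint hz.le _).trans_le hx.1,
    hx.2.trans_le (baseEndpoint_le_one hz.le n)⟩) fun x hx => mem_iUnion.2 ?_
  classical
  have hex := exists_baseEndpoint_succ_le hz hz1 hx.1
  refine ⟨Nat.find hex, Nat.find_spec hex, ?_⟩
  rcases hfind : Nat.find hex with _ | m
  · exact hx.2
  · exact not_le.1 (Nat.find_min hex (m := m) (by omega))

lemma mem_longReturn_iff (hz : 0 ≤ z) (n : ℕ) :
    x ∈ longReturn z n ↔ x ∈ base ∧ ∀ i < n, (lsv z)^[i + 1] x < 1 / 2 := by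
  cases n with
  | zero => simp [longReturn_zero]
  | succ n =>
    have hiff : x ∈ base → (x < baseEndpoint z (n + 1) ↔
        ∀ i ≤ n, (lsv z)^[i] (lsv z x) < 1 / 2) := fun hx => by
      rw [forall_lsv_iterate_lt_half_iff hz (lsv_mem hz (base_subset_Ico hx)),
        lsv_of_half_le hx.1, baseEndpoint, lt_div_iff₀ zero_lt_two, sub_lt_iff_lt_add', mul_comm]
    simp only [Nat.lt_succ_iff, Function.iterate_succ_apply]
    exact ⟨fun hx => have hb := longReturn_subset_base hz _ hx
      ⟨hb, (hiff hb).1 hx.2⟩, fun ⟨hb, hlt⟩ => ⟨hb.1, (hiff hb).2 hlt⟩⟩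

lemma mem_returnCell_iff (hz : 0 ≤ z) (n : ℕ) :
    x ∈ returnCell z n ↔ x ∈ longReturn z n ∧ 1 / 2 ≤ (lsv z)^[n + 1] x := by
  rw [returnCell_eq_sdiff hz, Set.mem_sdiff, mem_longReturn_iff hz (n + 1), mem_longReturn_iff hz n]
  simp only [Nat.forall_lt_succ_right]
  refine and_congr_right fun ⟨hx, hlt⟩ => ?_
  rw [← not_lt, not_iff_not]
  exact ⟨fun h => h.2.2, fun h => ⟨hx, hlt, h⟩⟩

/-- The `n`-th inverse branch of the induced map, which maps the base onto `returnCell z n`. -/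
noncomputable def inducedInv (z : ℝ) (n : ℕ) (y : ℝ) : ℝ := (1 + (leftInv z)^[n] y) / 2

lemma inducedInv_mem_base {y : ℝ} (hz : 0 ≤ z) (hy : y ∈ base) (n : ℕ) :
    inducedInv z n y ∈ base := by
  have hmem := leftInv_iterate_mem hz (base_subset_Ioo hy) n
  unfold inducedInv
  exact ⟨by linarith [hmem.1], by linarith [hmem.2]⟩

lemma lsv_iterate_succ_inducedInv {y : ℝ} (hz : 0 ≤ z) (hy : y ∈ base) (n k : ℕ) :
    (lsv z)^[k + 1] (inducedInv z (n + k) y) = (leftInv z)^[n] y := by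
  have hfirst : lsv z (inducedInv z (n + k) y) = (leftInv z)^[n + k] y := by
    rw [lsv_of_half_le (inducedInv_mem_base hz hy _).1, inducedInv]
    ring
  rw [Function.iterate_succ_apply, hfirst, lsv_iterate_leftInv_iterate hz (base_subset_Ioo hy)]

lemma lsv_return_inducedInv {y : ℝ} (hz : 0 ≤ z) (hy : y ∈ base) (n : ℕ) :
    (lsv z)^[n + 1] (inducedInv z n y) = y := by
  simpa only [zero_add, Function.iterate_zero, id] using lsv_iterate_succ_inducedInv hz hy 0 n

lemma inducedInv_mem_returnCell {y : ℝ} (hz : 0 ≤ z) (hy : y ∈ base) (n : ℕ) :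
    inducedInv z n y ∈ returnCell z n := by
  rw [mem_returnCell_iff hz, mem_longReturn_iff hz, lsv_return_inducedInv hz hy]
  refine ⟨⟨inducedInv_mem_base hz hy n, fun i hi => ?_⟩, hy.1⟩
  obtain ⟨k, rfl⟩ : ∃ k, n = (k + 1) + i := ⟨n - i - 1, by omega⟩
  rw [lsv_iterate_succ_inducedInv hz hy]
  exact leftInv_iterate_succ_lt_half hz (base_subset_Ioo hy) k

lemma inducedInv_lsv_return (hz : 0 ≤ z) {n : ℕ} (hx : x ∈ returnCell z n) :
    inducedInv z n ((lsv z)^[n + 1] x) = x := by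
  obtain ⟨hb, hlt⟩ := (mem_longReturn_iff hz n).1 (returnCell_subset_longReturn hz n hx)
  have hhalf : 1 / 2 < x := (half_lt_baseEndpoint hz (n + 1)).trans_le hx.1
  have hmem : lsv z x ∈ Ioo (0 : ℝ) 1 := by
    rw [lsv_of_half_le hb.1]
    exact ⟨by linarith, by linarith [hb.2]⟩
  rw [inducedInv, Function.iterate_succ_apply, leftInv_iterate_lsv_iterate hz n hmem hlt,
    lsv_of_half_le hb.1]
  ring

lemma inducedInv_image_base (hz : 0 ≤ z) (n : ℕ) : inducedInv z n '' base = returnCell z n := by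
  refine subset_antisymm (image_subset_iff.2 fun y hy => inducedInv_mem_returnCell hz hy n)
    fun x hx => ⟨(lsv z)^[n + 1] x, ⟨((mem_returnCell_iff hz n).1 hx).2, ?_⟩,
      inducedInv_lsv_return hz hx⟩
  exact (lsv_iterate_mem hz (base_subset_Ico (returnCell_subset_base hz n hx)) _).2

lemma inducedInv_injOn (hz : 0 ≤ z) (n : ℕ) : InjOn (inducedInv z n) base := fun a ha c hc hac => by
  rw [← lsv_return_inducedInv hz ha n, ← lsv_return_inducedInv hz hc n, hac]

lemma inducedInv_hasDerivAt {y : ℝ} (hz : 0 ≤ z) (hy : y ∈ base) (n : ℕ) :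
    HasDerivAt (inducedInv z n) (leftInvIterDeriv z n y / 2) y :=
  ((leftInv_iterate_hasDerivAt hz (base_subset_Ioo hy) n).const_add 1).div_const 2

lemma abs_inducedInv_sub_le {a c : ℝ} (hz : 0 ≤ z) (ha : a ∈ base) (hc : c ∈ base) (n : ℕ) :
    |inducedInv z n a - inducedInv z n c| ≤ |a - c| / 2 := by
  have hsub : inducedInv z n a - inducedInv z n c =
      ((leftInv z)^[n] a - (leftInv z)^[n] c) / 2 := by
    unfold inducedInv
    ring
  rw [hsub, abs_div, abs_two]
  linarith [abs_leftInv_iterate_sub_le hz (base_subset_Ioo ha) (base_subset_Ioo hc) n]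

/-- The first return time to the base minus one, read off from the return cells. The infimum is
over the empty set (and equals `0`) at points `x ≤ 1/2`, in particular at the point `1/2` of the
base, which never returns. -/
noncomputable def returnIndex (z x : ℝ) : ℕ := sInf {n : ℕ | baseEndpoint z (n + 1) ≤ x}

/-- The first return map to the base. -/
noncomputable def inducedMap (z x : ℝ) : ℝ := (lsv z)^[returnIndex z x + 1] x

lemma returnIndex_eq (hz : 0 ≤ z) {n : ℕ} (hx : x ∈ returnCell z n) : returnIndex z x = n := by
  refine le_antisymm (Nat.sInf_le hx.1) (le_csInf ⟨n, hx.1⟩ fun m (hm : _ ≤ x) => ?_)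
  by_contra! hlt
  linarith [baseEndpoint_antitone hz (Nat.succ_le_of_lt hlt), hx.2]

lemma inducedMap_eq (hz : 0 ≤ z) {n : ℕ} (hx : x ∈ returnCell z n) :
    inducedMap z x = (lsv z)^[n + 1] x := by
  rw [inducedMap, returnIndex_eq hz hx]

lemma inducedMap_inducedInv {y : ℝ} (hz : 0 ≤ z) (hy : y ∈ base) (n : ℕ) :
    inducedMap z (inducedInv z n y) = y := by
  rw [inducedMap_eq hz (inducedInv_mem_returnCell hz hy n), lsv_return_inducedInv hz hy]

lemma returnIndex_le_iff (hz : 0 ≤ z) (n : ℕ) : returnIndex z x ≤ n ↔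
    baseEndpoint z (n + 1) ≤ x ∨ ∀ m, x < baseEndpoint z (m + 1) := by
  constructor
  · intro hle
    by_cases hne : {m : ℕ | baseEndpoint z (m + 1) ≤ x}.Nonempty
    · exact Or.inl ((baseEndpoint_antitone hz (Nat.succ_le_succ hle)).trans (Nat.sInf_mem hne))
    · exact Or.inr fun m => not_le.1 fun hm => hne ⟨m, hm⟩
  · rintro (hle | hlt)
    · exact Nat.sInf_le hle
    · have hempty : {m : ℕ | baseEndpoint z (m + 1) ≤ x} = ∅ :=
        eq_empty_of_forall_notMem fun m => (hlt m).not_ge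
      simp only [returnIndex, hempty, Nat.sInf_empty, n.zero_le]

lemma returnIndex_measurable (hz : 0 ≤ z) : Measurable (returnIndex z) := by
  refine measurable_of_Iic fun n => ?_
  have hpre : returnIndex z ⁻¹' Iic n =
      Ici (baseEndpoint z (n + 1)) ∪ ⋂ m, Iio (baseEndpoint z (m + 1)) := by
    ext x
    simp only [mem_preimage, mem_Iic, returnIndex_le_iff hz, mem_union, mem_Ici, mem_iInter,
      mem_Iio]
  rw [hpre]
  exact measurableSet_Ici.union (MeasurableSet.iInter fun _ => measurableSet_Iio)

lemma inducedMap_measurable (hz : 0 ≤ z) : Measurable (inducedMap z) := by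
  have hiter : Measurable fun p : ℝ × ℕ => (lsv z)^[p.2 + 1] p.1 :=
    measurable_from_prod_countable_left fun n => (lsv_measurable z).iterate (n + 1)
  exact hiter.comp (measurable_id.prodMk (returnIndex_measurable hz))

end ReturnCells

/-! ### The invariant measure on the base -/

/-- `μ` is an absolutely continuous invariant probability measure of the map on `[0, 1]`. -/
structure IsAcip (z : ℝ) (μ : Measure ℝ) : Prop where
  prob : IsProbabilityMeasure μ
  supp : μ (Icc (0 : ℝ) 1)ᶜ = 0
  ac : μ ≪ volume
  inv : MeasurePreserving (lsv z) μ μ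

section InvariantMeasure

variable {z : ℝ} {μ : Measure ℝ}

namespace IsAcip

lemma ae_ne (hμ : IsAcip z μ) (x : ℝ) : ∀ᵐ y ∂μ, y ≠ x :=
  measure_eq_zero_iff_ae_notMem.1 (hμ.ac Real.volume_singleton)

lemma ae_mem (hμ : IsAcip z μ) : ∀ᵐ x ∂μ, x ∈ Ico (0 : ℝ) 1 := by
  have hsupp : ∀ᵐ x ∂μ, x ∈ Icc (0 : ℝ) 1 := hμ.supp
  filter_upwards [hsupp, hμ.ae_ne 1] with x hx hx1
  exact ⟨hx.1, lt_of_le_of_ne hx.2 hx1⟩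

lemma ae_mem_iUnion_returnCell_iff (hμ : IsAcip z μ) (hz : 0 < z) (hz1 : z ≤ 1) :
    ∀ᵐ x ∂μ, x ∈ base ↔ x ∈ ⋃ n, returnCell z n := by
  filter_upwards [hμ.ae_ne (1 / 2)] with x hx
  rw [iUnion_returnCell hz hz1]
  exact and_congr_left' ⟨fun hle => lt_of_le_of_ne hle hx.symm, le_of_lt⟩

lemma tendsto_measure_Ico_preHalf (hμ : IsAcip z μ) (hz : 0 < z) (hz1 : z ≤ 1) :
    Tendsto (fun n => μ (Ico 0 (preHalf z n))) atTop (nhds 0) := by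
  have := hμ.prob
  have hanti : Antitone fun n => Ico 0 (preHalf z n) := fun m n hmn =>
    Ico_subset_Ico_right (antitone_nat_of_succ_le (fun k => (preHalf_succ_lt hz.le k).le) hmn)
  have hinter : (⋂ n, Ico 0 (preHalf z n)) ⊆ {0} := fun x hx => by
    rw [mem_iInter] at hx
    exact le_antisymm (ge_of_tendsto' (preHalf_tendsto_zero hz hz1) fun n => (hx n).2.le) (hx 0).1
  have hlim := tendsto_measure_iInter_atTop (μ := μ)
    (fun n => (measurableSet_Ico (a := 0) (b := preHalf z n)).nullMeasurableSet) hanti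
    ⟨0, measure_ne_top _ _⟩
  rwa [measure_mono_null hinter (hμ.ac Real.volume_singleton)] at hlim

end IsAcip

lemma lsv_mem_Ico_preHalf_iff {x : ℝ} (hz : 0 ≤ z) (hx : x ∈ Ico (0 : ℝ) 1) (n : ℕ) :
    lsv z x ∈ Ico 0 (preHalf z n) ↔ x ∈ longReturn z (n + 1) ∨ x ∈ Ico 0 (preHalf z (n + 1)) := by
  simp only [mem_Ico, (lsv_mem hz hx).1, hx.1, true_and, ← lsv_lt_preHalf_iff hz hx, longReturn]
  rcases lt_or_ge x (1 / 2) with hlt | hge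
  · simp only [hlt, hlt.not_ge, true_and, false_and, false_or]
  · rw [lsv_of_half_le hge, baseEndpoint, lt_div_iff₀ zero_lt_two, sub_lt_iff_lt_add', mul_comm]
    simp only [hge, hge.not_gt, true_and, false_and, or_false]

lemma disjoint_longReturn_Ico_preHalf (hz : 0 ≤ z) (m n : ℕ) :
    Disjoint (longReturn z m) (Ico 0 (preHalf z n)) := by
  have hle : preHalf z n ≤ 1 / 2 := by
    cases n with
    | zero => exact le_rfl
    | succ n => exact (preHalf_succ_lt_half hz n).le
  exact Set.disjoint_left.2 fun x hx hx' => (hx'.2.trans_le hle).not_ge hx.1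

namespace IsAcip

lemma measure_preimage_inter_Ico_preHalf (hμ : IsAcip z μ) (hz : 0 ≤ z) {B : Set ℝ}
    (hB : MeasurableSet B) (n : ℕ) :
    μ ((lsv z)^[n] ⁻¹' B ∩ Ico 0 (preHalf z n)) =
      μ ((lsv z)^[n + 1] ⁻¹' B ∩ longReturn z (n + 1)) +
        μ ((lsv z)^[n + 1] ⁻¹' B ∩ Ico 0 (preHalf z (n + 1))) := by
  have hiter : ∀ k, MeasurableSet ((lsv z)^[k] ⁻¹' B) := fun k => (lsv_measurable z).iterate k hB
  rw [← hμ.inv.measure_preimage ((hiter n).inter measurableSet_Ico).nullMeasurableSet,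
    ← measure_union ((disjoint_longReturn_Ico_preHalf hz _ _).mono inter_subset_right
      inter_subset_right) ((hiter (n + 1)).inter measurableSet_Ico), ← inter_union_distrib_left]
  refine measure_congr ?_
  filter_upwards [hμ.ae_mem] with x hx
  exact propext (and_congr_right' (lsv_mem_Ico_preHalf_iff hz hx n))

lemma sum_measure_preimage_inter_longReturn_add (hμ : IsAcip z μ) (hz : 0 ≤ z) {B : Set ℝ}
    (hB : MeasurableSet B) (n : ℕ) :
    ∑ l ∈ Finset.range (n + 1), μ ((lsv z)^[l] ⁻¹' B ∩ longReturn z l) +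
      μ ((lsv z)^[n] ⁻¹' B ∩ Ico 0 (preHalf z n)) = μ B := by
  induction n with
  | zero =>
    rw [zero_add, Finset.sum_range_one, Function.iterate_zero, preimage_id,
      ← measure_union ((disjoint_longReturn_Ico_preHalf hz _ _).mono inter_subset_right
        inter_subset_right) (hB.inter measurableSet_Ico), ← inter_union_distrib_left]
    refine measure_congr ?_
    filter_upwards [hμ.ae_mem] with x hx
    refine propext (and_iff_left ?_)
    rcases lt_or_ge x (1 / 2) with hlt | hge
    · exact Or.inr ⟨hx.1, hlt⟩
    · exact Or.inl ⟨hge, hx.2⟩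
  | succ n ih =>
    rw [Finset.sum_range_succ, ← ih, hμ.measure_preimage_inter_Ico_preHalf hz hB n, add_assoc]

lemma tsum_measure_preimage_inter_longReturn (hμ : IsAcip z μ) (hz : 0 < z) (hz1 : z ≤ 1)
    {B : Set ℝ} (hB : MeasurableSet B) :
    ∑' l, μ ((lsv z)^[l] ⁻¹' B ∩ longReturn z l) = μ B := by
  have hsum := (tendsto_add_atTop_iff_nat 1).2
    (ENNReal.tendsto_nat_tsum fun l => μ ((lsv z)^[l] ⁻¹' B ∩ longReturn z l))
  have hrest : Tendsto (fun n => μ ((lsv z)^[n] ⁻¹' B ∩ Ico 0 (preHalf z n))) atTop (nhds 0) :=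
    tendsto_of_tendsto_of_tendsto_of_le_of_le tendsto_const_nhds
      (hμ.tendsto_measure_Ico_preHalf hz hz1) (fun _ => zero_le)
      (fun _ => measure_mono inter_subset_right)
  have htotal := hsum.add hrest
  simp only [hμ.sum_measure_preimage_inter_longReturn_add hz.le hB, add_zero] at htotal
  exact tendsto_nhds_unique htotal tendsto_const_nhds

lemma measure_base_ne_zero (hμ : IsAcip z μ) (hz : 0 < z) (hz1 : z ≤ 1) : μ base ≠ 0 := by
  intro hzero
  have := hμ.prob
  have hnull : ∀ l, μ ((lsv z)^[l] ⁻¹' univ ∩ longReturn z l) = 0 := fun l =>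
    measure_mono_null (inter_subset_right.trans (longReturn_subset_base hz.le l)) hzero
  have hkac := hμ.tsum_measure_preimage_inter_longReturn hz hz1 MeasurableSet.univ
  rw [measure_univ, tsum_congr hnull, tsum_zero] at hkac
  exact zero_ne_one hkac

end IsAcip

lemma inducedMap_preimage_inter_returnCell (hz : 0 ≤ z) (B : Set ℝ) (n : ℕ) :
    inducedMap z ⁻¹' B ∩ returnCell z n =
      (lsv z)^[n] ⁻¹' (lsv z ⁻¹' (B ∩ base)) ∩ longReturn z n := by
  ext x
  simp only [mem_inter_iff, mem_preimage, ← Function.iterate_succ_apply']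
  constructor
  · rintro ⟨hB, hcell⟩
    obtain ⟨hlong, hhalf⟩ := (mem_returnCell_iff hz n).1 hcell
    rw [inducedMap_eq hz hcell] at hB
    exact ⟨⟨hB, hhalf, (lsv_iterate_mem hz
      (base_subset_Ico (longReturn_subset_base hz n hlong)) _).2⟩, hlong⟩
  · rintro ⟨⟨hB, hhalf, -⟩, hlong⟩
    have hcell := (mem_returnCell_iff hz n).2 ⟨hlong, hhalf⟩
    exact ⟨by rwa [inducedMap_eq hz hcell], hcell⟩

lemma IsAcip.map_inducedMap (hμ : IsAcip z μ) (hz : 0 < z) (hz1 : z ≤ 1) :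
    (μ.restrict base).map (inducedMap z) = μ.restrict base := by
  ext B hB
  have hF := inducedMap_measurable hz.le
  have hBbase := hB.inter measurableSet_base
  have hcover : (inducedMap z ⁻¹' B ∩ base : Set ℝ) =ᵐ[μ]
      ⋃ n, inducedMap z ⁻¹' B ∩ returnCell z n := by
    filter_upwards [hμ.ae_mem_iUnion_returnCell_iff hz hz1] with x hx
    rw [← inter_iUnion]
    exact propext (and_congr_right' hx)
  rw [Measure.map_apply hF hB, Measure.restrict_apply (hF hB), Measure.restrict_apply hB,
    ← hμ.inv.measure_preimage hBbase.nullMeasurableSet,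
    ← hμ.tsum_measure_preimage_inter_longReturn hz hz1 (lsv_measurable z hBbase),
    measure_congr hcover, measure_iUnion]
  · exact tsum_congr fun n => by rw [inducedMap_preimage_inter_returnCell hz.le]
  · exact fun i j hij => (pairwise_disjoint_returnCell hz.le hij).mono inter_subset_right
      inter_subset_right
  · exact fun n => (hF hB).inter (measurableSet_returnCell z n)

end InvariantMeasure

/-! ### The transfer operator of the induced map -/

section TransferOperator

variable {z : ℝ}

/-- The weight of the `n`-th inverse branch in the transfer operator of the induced map. -/
noncomputable def transferWeight (z : ℝ) (n : ℕ) (y : ℝ) : ℝ := leftInvIterDeriv z n y / 2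

/-- The transfer operator of the induced map with respect to Lebesgue measure. -/
noncomputable def transfer (z : ℝ) (g : ℝ → ℝ) (y : ℝ) : ℝ :=
  ∑' n, g (inducedInv z n y) * transferWeight z n y

/-- The transfer operator applied to the product of `g` with a possibly unbounded function, whose
value on the `n`-th return cell is written as `v n` in the coordinate of the image point. -/
noncomputable def weightedTransfer (z : ℝ) (v : ℕ → ℝ → ℝ) (g : ℝ → ℝ) (y : ℝ) : ℝ :=
  ∑' n, v n y * g (inducedInv z n y) * transferWeight z n y

/-- `g` is bounded on the base. -/
def BoundedOnBase (g : ℝ → ℝ) : Prop := ∃ D, ∀ y ∈ base, |g y| ≤ D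

lemma transfer_eq_weightedTransfer (z : ℝ) (g : ℝ → ℝ) :
    transfer z g = weightedTransfer z (fun _ _ => 1) g := by
  ext y
  simp only [transfer, weightedTransfer, one_mul]

lemma transferWeight_pos {y : ℝ} (hz : 0 ≤ z) (hy : y ∈ base) (n : ℕ) : 0 < transferWeight z n y :=
  div_pos (leftInvIterDeriv_pos hz (base_subset_Ioo hy) n) two_pos

lemma exists_transferWeight_le (hz : 0 < z) (hz1 : z ≤ 1) : ∃ C : ℝ, 0 < C ∧
    ∀ n : ℕ, ∀ y ∈ base, transferWeight z n y ≤ C * ((n : ℝ) + 1) ^ (-(1 / z) - 1) := by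
  obtain ⟨C, hC, hle⟩ := exists_leftInvIterDeriv_le hz hz1
  refine ⟨C, hC, fun n y hy => (div_le_self ?_ one_le_two).trans (hle n y hy)⟩
  exact (leftInvIterDeriv_pos hz.le (base_subset_Ioo hy) n).le

lemma one_lt_one_div (hz : 0 < z) (hz1 : z < 1) : 1 < 1 / z := by
  rwa [lt_div_iff₀ hz, one_mul]

lemma summable_add_one_rpow_neg {p : ℝ} (hp : 1 < p) :
    Summable fun n : ℕ => ((n : ℝ) + 1) ^ (-p) := by
  simpa only [Nat.cast_add, Nat.cast_one] using
    (_root_.summable_nat_add_iff 1).2 (Real.summable_nat_rpow.2 (neg_lt_neg hp))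

lemma exists_abs_weightedTransfer_term_le (hz : 0 < z) (hz1 : z ≤ 1) : ∃ C : ℝ, 0 < C ∧
    ∀ (v : ℕ → ℝ → ℝ) (g : ℝ → ℝ) (c D : ℝ), 0 ≤ c → 0 ≤ D →
    (∀ n, ∀ y ∈ base, |v n y| ≤ c * ((n : ℝ) + 1)) → (∀ y ∈ base, |g y| ≤ D) → ∀ y ∈ base, ∀ n,
    |v n y * g (inducedInv z n y) * transferWeight z n y| ≤
      C * c * D * ((n : ℝ) + 1) ^ (-(1 / z)) := by
  obtain ⟨C, hC, hw⟩ := exists_transferWeight_le hz hz1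
  refine ⟨C, hC, fun v g c D hc hD hv hg y hy n => ?_⟩
  have hn : (0 : ℝ) < (n : ℝ) + 1 := by positivity
  have hpos := transferWeight_pos hz.le hy n
  rw [abs_mul, abs_mul, abs_of_pos hpos]
  calc |v n y| * |g (inducedInv z n y)| * transferWeight z n y
      ≤ (c * ((n : ℝ) + 1)) * D * (C * ((n : ℝ) + 1) ^ (-(1 / z) - 1)) := by
        gcongr
        · exact hv n y hy
        · exact hg _ (inducedInv_mem_base hz.le hy n)
        · exact hw n y hy
    _ = C * c * D * ((n : ℝ) + 1) ^ (-(1 / z)) := by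
        rw [Real.rpow_sub_one hn.ne']
        field_simp

lemma summable_weightedTransfer (hz : 0 < z) (hz1 : z < 1) {v : ℕ → ℝ → ℝ} {g : ℝ → ℝ} {c y : ℝ}
    (hv : ∀ n, ∀ y ∈ base, |v n y| ≤ c * ((n : ℝ) + 1)) (hg : BoundedOnBase g) (hy : y ∈ base) :
    Summable fun n => v n y * g (inducedInv z n y) * transferWeight z n y := by
  obtain ⟨C, -, hterm⟩ := exists_abs_weightedTransfer_term_le hz hz1.le
  obtain ⟨D, hD⟩ := hg
  have hc : 0 ≤ c := by
    simpa only [Nat.cast_zero, zero_add, mul_one] using (abs_nonneg _).trans (hv 0 y hy)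
  exact Summable.of_norm_bounded ((summable_add_one_rpow_neg (one_lt_one_div hz hz1)).mul_left _)
    (hterm v g c D hc ((abs_nonneg _).trans (hD y hy)) hv hD y hy)

lemma summable_transfer (hz : 0 < z) (hz1 : z < 1) {g : ℝ → ℝ} {y : ℝ} (hg : BoundedOnBase g)
    (hy : y ∈ base) : Summable fun n => g (inducedInv z n y) * transferWeight z n y := by
  simpa only [one_mul] using summable_weightedTransfer hz hz1 (v := fun _ _ => 1) (c := 1)
    (fun n y _ => by simp) hg hy

lemma exists_abs_weightedTransfer_le (hz : 0 < z) (hz1 : z < 1) : ∃ C : ℝ, 0 < C ∧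
    ∀ (v : ℕ → ℝ → ℝ) (g : ℝ → ℝ) (c D : ℝ), 0 ≤ c → 0 ≤ D →
    (∀ n, ∀ y ∈ base, |v n y| ≤ c * ((n : ℝ) + 1)) → (∀ y ∈ base, |g y| ≤ D) → ∀ y ∈ base,
    |weightedTransfer z v g y| ≤ C * c * D := by
  obtain ⟨C, hC, hterm⟩ := exists_abs_weightedTransfer_term_le hz hz1.le
  have hsum := summable_add_one_rpow_neg (one_lt_one_div hz hz1)
  have hpos : 0 < ∑' n : ℕ, ((n : ℝ) + 1) ^ (-(1 / z)) :=
    hsum.tsum_pos (fun n => by positivity) 0 (by simp)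
  refine ⟨C * ∑' n : ℕ, ((n : ℝ) + 1) ^ (-(1 / z)), by positivity,
    fun v g c D hc hD hv hg y hy => ?_⟩
  calc |weightedTransfer z v g y| = ‖weightedTransfer z v g y‖ := (Real.norm_eq_abs _).symm
    _ ≤ ∑' n : ℕ, C * c * D * ((n : ℝ) + 1) ^ (-(1 / z)) :=
        tsum_of_norm_bounded (hsum.mul_left _).hasSum (hterm v g c D hc hD hv hg y hy)
    _ = C * (∑' n : ℕ, ((n : ℝ) + 1) ^ (-(1 / z))) * c * D := by
        rw [_root_.tsum_mul_left]
        ring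

lemma exists_abs_transfer_le (hz : 0 < z) (hz1 : z < 1) : ∃ C : ℝ, 0 < C ∧
    ∀ (g : ℝ → ℝ) (D : ℝ), 0 ≤ D → (∀ y ∈ base, |g y| ≤ D) →
      ∀ y ∈ base, |transfer z g y| ≤ C * D := by
  obtain ⟨C, hC, hle⟩ := exists_abs_weightedTransfer_le hz hz1
  refine ⟨C, hC, fun g D hD hg y hy => ?_⟩
  rw [transfer_eq_weightedTransfer]
  simpa only [mul_one] using hle (fun _ _ => 1) g 1 D zero_le_one hD (fun n y _ => by simp) hg y hy

lemma BoundedOnBase.transfer (hz : 0 < z) (hz1 : z < 1) {g : ℝ → ℝ} (hg : BoundedOnBase g) :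
    BoundedOnBase (transfer z g) := by
  obtain ⟨D, hD⟩ := hg
  obtain ⟨C, -, hle⟩ := exists_abs_transfer_le hz hz1
  exact ⟨C * D, hle g D ((abs_nonneg _).trans (hD _ half_mem_base)) hD⟩

lemma BoundedOnBase.transfer_iterate (hz : 0 < z) (hz1 : z < 1) {g : ℝ → ℝ} (hg : BoundedOnBase g)
    (k : ℕ) : BoundedOnBase ((LSV.transfer z)^[k] g) := by
  induction k with
  | zero => exact hg
  | succ k ih =>
    rw [Function.iterate_succ_apply']
    exact ih.transfer hz hz1

lemma transfer_congr (hz : 0 ≤ z) {f g : ℝ → ℝ} (hfg : EqOn f g base) :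
    EqOn (transfer z f) (transfer z g) base := fun y hy =>
  tsum_congr fun n => by rw [hfg (inducedInv_mem_base hz hy n)]

lemma transfer_iterate_congr (hz : 0 ≤ z) {f g : ℝ → ℝ} (hfg : EqOn f g base) (k : ℕ) :
    EqOn ((transfer z)^[k] f) ((transfer z)^[k] g) base := by
  induction k with
  | zero => exact hfg
  | succ k ih =>
    rw [Function.iterate_succ_apply', Function.iterate_succ_apply']
    exact transfer_congr hz ih

lemma transfer_sub (hz : 0 < z) (hz1 : z < 1) {f g : ℝ → ℝ} (hf : BoundedOnBase f)
    (hg : BoundedOnBase g) :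
    EqOn (transfer z fun y => f y - g y) (fun y => transfer z f y - transfer z g y) base := by
  intro y hy
  simp only [transfer]
  rw [← (summable_transfer hz hz1 hf hy).tsum_sub (summable_transfer hz hz1 hg hy)]
  exact tsum_congr fun n => sub_mul _ _ _

lemma transfer_iterate_sub (hz : 0 < z) (hz1 : z < 1) {f g : ℝ → ℝ} (hf : BoundedOnBase f)
    (hg : BoundedOnBase g) (k : ℕ) : EqOn ((transfer z)^[k] fun y => f y - g y)
      (fun y => (transfer z)^[k] f y - (transfer z)^[k] g y) base := by
  induction k with
  | zero => exact fun y _ => rfl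
  | succ k ih =>
    simp only [Function.iterate_succ_apply']
    exact (transfer_congr hz.le ih).trans
      (transfer_sub hz hz1 (hf.transfer_iterate hz hz1 k) (hg.transfer_iterate hz hz1 k))

lemma transfer_const_mul (c : ℝ) (f : ℝ → ℝ) :
    (transfer z fun y => c * f y) = fun y => c * transfer z f y := by
  ext y
  simp only [transfer]
  rw [← _root_.tsum_mul_left]
  exact tsum_congr fun n => mul_assoc _ _ _

lemma transfer_iterate_const_mul (c : ℝ) (f : ℝ → ℝ) (k : ℕ) :
    ((transfer z)^[k] fun y => c * f y) = fun y => c * (transfer z)^[k] f y := by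
  induction k with
  | zero => rfl
  | succ k ih =>
    rw [Function.iterate_succ_apply', ih, transfer_const_mul, Function.iterate_succ_apply']

end TransferOperator

section LogHolder

/-- Non-negative functions on the base which vanish identically or are positive with `r`-Hölder
logarithm of constant `K`: the invariant cones of the transfer operator. -/
def LogHolder (r K : ℝ) (g : ℝ → ℝ) : Prop :=
  (∀ x ∈ base, 0 ≤ g x) ∧ ∀ x ∈ base, ∀ y ∈ base, g x ≤ Real.exp (K * |x - y| ^ r) * g y

variable {z r K : ℝ} {f g : ℝ → ℝ}

lemma abs_sub_rpow_le_one {x y : ℝ} (hr : 0 ≤ r) (hx : x ∈ base) (hy : y ∈ base) :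
    |x - y| ^ r ≤ 1 :=
  Real.rpow_le_one (abs_nonneg _) (by linarith [abs_sub_le_half hx hy]) hr

lemma abs_sub_le_abs_sub_rpow {x y : ℝ} (hr1 : r ≤ 1) (hx : x ∈ base)
    (hy : y ∈ base) : |x - y| ≤ |x - y| ^ r :=
  Real.self_le_rpow_of_le_one (abs_nonneg _) (by linarith [abs_sub_le_half hx hy]) hr1

namespace LogHolder

lemma le_exp_mul (hg : LogHolder r K g) (hr : 0 ≤ r) (hK : 0 ≤ K) {x y : ℝ} (hx : x ∈ base)
    (hy : y ∈ base) : g x ≤ Real.exp K * g y :=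
  (hg.2 x hx y hy).trans (mul_le_mul_of_nonneg_right (Real.exp_le_exp.2
    (mul_le_of_le_one_right hK (abs_sub_rpow_le_one hr hx hy))) (hg.1 y hy))

lemma mono {K' : ℝ} (hg : LogHolder r K g) (hK : K ≤ K') : LogHolder r K' g := by
  refine ⟨hg.1, fun x hx y hy => (hg.2 x hx y hy).trans ?_⟩
  have hy0 := hg.1 y hy
  gcongr

lemma boundedOnBase (hg : LogHolder r K g) (hr : 0 ≤ r) (hK : 0 ≤ K) : BoundedOnBase g :=
  ⟨Real.exp K * g (1 / 2), fun y hy => by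
    rw [abs_of_nonneg (hg.1 y hy)]
    exact hg.le_exp_mul hr hK hy half_mem_base⟩

lemma congr (hf : LogHolder r K f) (hfg : EqOn f g base) : LogHolder r K g :=
  ⟨fun x hx => hfg hx ▸ hf.1 x hx, fun x hx y hy => by
    rw [← hfg hx, ← hfg hy]
    exact hf.2 x hx y hy⟩

lemma const_mul (hg : LogHolder r K g) {c : ℝ} (hc : 0 ≤ c) : LogHolder r K fun y => c * g y :=
  ⟨fun x hx => mul_nonneg hc (hg.1 x hx), fun x hx y hy => by
    linarith [mul_le_mul_of_nonneg_left (hg.2 x hx y hy) hc]⟩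

lemma continuousOn (hg : LogHolder r K g) (hr : 0 < r) : ContinuousOn g base := by
  intro x hx
  have hlim : ∀ s : ℝ, Tendsto (fun y => Real.exp (s * |y - x| ^ r) * g x) (nhdsWithin x base)
      (nhds (g x)) := by
    intro s
    have hcont : Continuous fun y => Real.exp (s * |y - x| ^ r) * g x :=
      (Real.continuous_exp.comp (continuous_const.mul ((Real.continuous_rpow_const hr.le).comp
        (continuous_id.sub continuous_const).abs))).mul continuous_const
    have htendsto := hcont.tendsto x
    simp only [sub_self, abs_zero, Real.zero_rpow hr.ne', mul_zero, Real.exp_zero, one_mul]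
      at htendsto
    exact htendsto.mono_left nhdsWithin_le_nhds
  refine tendsto_of_tendsto_of_tendsto_of_le_of_le' (hlim (-K)) (hlim K) ?_ ?_
  · filter_upwards [self_mem_nhdsWithin] with y hy
    have hxy := hg.2 x hx y hy
    rw [abs_sub_comm] at hxy
    rwa [neg_mul, Real.exp_neg, inv_mul_le_iff₀ (Real.exp_pos _)]
  · filter_upwards [self_mem_nhdsWithin] with y hy
    exact hg.2 y hy x hx

end LogHolder

lemma volume_real_base : volume.real base = 1 / 2 := by
  rw [base, Real.volume_real_Ico_of_le (by norm_num)]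
  norm_num

instance : IsFiniteMeasure (volume.restrict base) :=
  ⟨by rw [Measure.restrict_apply_univ]; exact measure_Ico_lt_top⟩

lemma BoundedOnBase.integrableOn (hg : BoundedOnBase g)
    (hmeas : AEStronglyMeasurable g (volume.restrict base)) : IntegrableOn g base := by
  obtain ⟨D, hD⟩ := hg
  exact Integrable.of_bound hmeas D ((ae_restrict_iff' measurableSet_base).2 (ae_of_all _ hD))

namespace LogHolder

lemma aestronglyMeasurable (hg : LogHolder r K g) (hr : 0 < r) :
    AEStronglyMeasurable g (volume.restrict base) :=
  (hg.continuousOn hr).aestronglyMeasurable measurableSet_base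

lemma integrableOn (hg : LogHolder r K g) (hr : 0 < r) (hK : 0 ≤ K) : IntegrableOn g base :=
  (hg.boundedOnBase hr.le hK).integrableOn (hg.aestronglyMeasurable hr)

lemma le_integral (hg : LogHolder r K g) (hr : 0 < r) (hK : 0 ≤ K) {x : ℝ} (hx : x ∈ base) :
    g x ≤ 2 * Real.exp K * ∫ y in base, g y := by
  have hmono : ∫ _ in base, g x ≤ ∫ y in base, Real.exp K * g y :=
    setIntegral_mono_on (integrable_const _) ((hg.integrableOn hr hK).const_mul _)
      measurableSet_base fun y hy => hg.le_exp_mul hr.le hK hx hy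
  rw [setIntegral_const, volume_real_base, integral_const_mul, smul_eq_mul] at hmono
  linarith

lemma integral_le (hg : LogHolder r K g) (hr : 0 < r) (hK : 0 ≤ K) {x : ℝ} (hx : x ∈ base) :
    2 * Real.exp (-K) * (∫ y in base, g y) ≤ g x := by
  have hmono : ∫ y in base, Real.exp (-K) * g y ≤ ∫ _ in base, g x := by
    refine setIntegral_mono_on ((hg.integrableOn hr hK).const_mul _) (integrable_const _)
      measurableSet_base fun y hy => ?_
    rw [Real.exp_neg, inv_mul_le_iff₀ (Real.exp_pos _)]
    exact hg.le_exp_mul hr.le hK hy hx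
  rw [setIntegral_const, volume_real_base, integral_const_mul, smul_eq_mul] at hmono
  linarith

lemma integral_nonneg (hg : LogHolder r K g) : 0 ≤ ∫ y in base, g y :=
  setIntegral_nonneg measurableSet_base hg.1

lemma comp_inducedInv (hg : LogHolder r K g) (hz : 0 ≤ z) (hr : 0 ≤ r) (hK : 0 ≤ K) (n : ℕ) :
    LogHolder r (K * (1 / 2) ^ r) fun x => g (inducedInv z n x) := by
  refine ⟨fun x hx => hg.1 _ (inducedInv_mem_base hz hx n), fun x hx y hy => ?_⟩
  have hcontract : |inducedInv z n x - inducedInv z n y| ^ r ≤ (1 / 2) ^ r * |x - y| ^ r := by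
    rw [← Real.mul_rpow (by norm_num) (abs_nonneg _)]
    refine Real.rpow_le_rpow (abs_nonneg _) ?_ hr
    linarith [abs_inducedInv_sub_le hz hx hy n]
  refine (hg.2 _ (inducedInv_mem_base hz hx n) _ (inducedInv_mem_base hz hy n)).trans
    (mul_le_mul_of_nonneg_right (Real.exp_le_exp.2 ?_) (hg.1 _ (inducedInv_mem_base hz hy n)))
  rw [mul_assoc]
  exact mul_le_mul_of_nonneg_left hcontract hK

lemma mul {K' : ℝ} (hf : LogHolder r K f) (hg : LogHolder r K' g) :
    LogHolder r (K + K') fun x => f x * g x := by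
  refine ⟨fun x hx => mul_nonneg (hf.1 x hx) (hg.1 x hx), fun x hx y hy => ?_⟩
  calc f x * g x ≤ (Real.exp (K * |x - y| ^ r) * f y) * (Real.exp (K' * |x - y| ^ r) * g y) :=
        mul_le_mul (hf.2 x hx y hy) (hg.2 x hx y hy) (hg.1 x hx)
          (mul_nonneg (Real.exp_pos _).le (hf.1 y hy))
    _ = Real.exp ((K + K') * |x - y| ^ r) * (f y * g y) := by
        rw [add_mul, Real.exp_add]
        ring

end LogHolder

lemma logHolder_transferWeight (hz : 0 ≤ z) (hz1 : z ≤ 1) (hr1 : r ≤ 1) (n : ℕ) :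
    LogHolder r 4 (transferWeight z n) := by
  refine ⟨fun x hx => (transferWeight_pos hz hx n).le, fun x hx y hy => ?_⟩
  have hpos := (leftInvIterDeriv_pos hz (base_subset_Ioo hy) n).le
  unfold transferWeight
  rw [← mul_div_assoc]
  refine div_le_div_of_nonneg_right ((leftInvIterDeriv_le_exp_mul hz hz1 hx hy n).trans ?_)
    zero_le_two
  gcongr
  exact abs_sub_le_abs_sub_rpow hr1 hx hy

lemma LogHolder.weightedTransfer (hz : 0 < z) (hz1 : z < 1) (hr : 0 ≤ r) (hr1 : r ≤ 1)
    {v : ℕ → ℝ → ℝ} {c κ : ℝ} (hK : 0 ≤ K) (hg : LogHolder r K g)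
    (hv : ∀ n, LogHolder r κ (v n)) (hvc : ∀ n, ∀ y ∈ base, v n y ≤ c * ((n : ℝ) + 1)) :
    LogHolder r (κ + K * (1 / 2) ^ r + 4) (weightedTransfer z v g) := by
  have hterm : ∀ n, LogHolder r (κ + K * (1 / 2) ^ r + 4)
      fun x => v n x * g (inducedInv z n x) * transferWeight z n x := fun n =>
    ((hv n).mul (hg.comp_inducedInv hz.le hr hK n)).mul
      (logHolder_transferWeight hz.le hz1.le hr1 n)
  have hsum : ∀ x ∈ base,
      Summable fun n => v n x * g (inducedInv z n x) * transferWeight z n x := fun x hx =>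
    summable_weightedTransfer hz hz1
      (fun n y hy => (abs_of_nonneg ((hv n).1 y hy)).trans_le (hvc n y hy))
      (hg.boundedOnBase hr hK) hx
  refine ⟨fun x hx => tsum_nonneg fun n => (hterm n).1 x hx, fun x hx y hy => ?_⟩
  rw [LSV.weightedTransfer, LSV.weightedTransfer, ← _root_.tsum_mul_left]
  exact (hsum x hx).tsum_le_tsum (fun n => (hterm n).2 x hx y hy) ((hsum y hy).mul_left _)

lemma LogHolder.transfer (hz : 0 < z) (hz1 : z < 1) (hr : 0 ≤ r) (hr1 : r ≤ 1) (hK : 0 ≤ K)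
    (hg : LogHolder r K g) : LogHolder r (K * (1 / 2) ^ r + 4) (transfer z g) := by
  rw [transfer_eq_weightedTransfer]
  have hone : LogHolder r 0 fun _ => 1 :=
    ⟨fun _ _ => zero_le_one, fun x _ y _ => by simp only [zero_mul, Real.exp_zero, mul_one, le_rfl]⟩
  simpa only [zero_add] using hg.weightedTransfer hz hz1 hr hr1 (c := 1) hK (fun _ => hone)
    (fun n y _ => by simp)

end LogHolder

section ChangeOfVariables

variable {z : ℝ} {f g k : ℝ → ℝ}

lemma base_ae_eq_iUnion_returnCell (hz : 0 < z) (hz1 : z ≤ 1) :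
    base =ᵐ[volume] ⋃ n, returnCell z n := by
  rw [iUnion_returnCell hz hz1]
  exact Ioo_ae_eq_Ico.symm

lemma setIntegral_returnCell (hz : 0 ≤ z) (n : ℕ) (f : ℝ → ℝ) :
    ∫ x in returnCell z n, f x = ∫ y in base, f (inducedInv z n y) * transferWeight z n y := by
  rw [← inducedInv_image_base hz n, integral_image_eq_integral_abs_deriv_smul measurableSet_base
    (fun y hy => (inducedInv_hasDerivAt hz hy n).hasDerivWithinAt) (inducedInv_injOn hz n)]
  refine setIntegral_congr_fun measurableSet_base fun y hy => ?_
  change |transferWeight z n y| • f (inducedInv z n y) = _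
  rw [abs_of_pos (transferWeight_pos hz hy n), smul_eq_mul, mul_comm]

lemma integrableOn_comp_inducedInv_mul (hz : 0 ≤ z) (hf : IntegrableOn f base) (n : ℕ) :
    IntegrableOn (fun y => f (inducedInv z n y) * transferWeight z n y) base := by
  have himage : IntegrableOn f (inducedInv z n '' base) := by
    rw [inducedInv_image_base hz n]
    exact hf.mono_set (returnCell_subset_base hz n)
  rw [integrableOn_image_iff_integrableOn_abs_deriv_smul measurableSet_base
    (fun y hy => (inducedInv_hasDerivAt hz hy n).hasDerivWithinAt) (inducedInv_injOn hz n)]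
    at himage
  refine himage.congr_fun (fun y hy => ?_) measurableSet_base
  change |transferWeight z n y| • f (inducedInv z n y) = _
  rw [abs_of_pos (transferWeight_pos hz hy n), smul_eq_mul, mul_comm]

lemma hasSum_setIntegral_comp_inducedInv (hz : 0 < z) (hz1 : z ≤ 1) (hf : IntegrableOn f base) :
    HasSum (fun n => ∫ y in base, f (inducedInv z n y) * transferWeight z n y)
      (∫ x in base, f x) := by
  simp only [← setIntegral_returnCell hz.le]
  rw [setIntegral_congr_set (base_ae_eq_iUnion_returnCell hz hz1)]
  exact hasSum_integral_iUnion (fun n => measurableSet_returnCell z n)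
    (pairwise_disjoint_returnCell hz.le)
    (hf.mono_set (iUnion_subset fun n => returnCell_subset_base hz.le n))

lemma integral_transfer (hz : 0 < z) (hz1 : z ≤ 1) (hf : IntegrableOn f base) :
    ∫ y in base, transfer z f y = ∫ x in base, f x := by
  have hnorm : Summable fun n =>
      ∫ y in base, ‖f (inducedInv z n y) * transferWeight z n y‖ := by
    refine (hasSum_setIntegral_comp_inducedInv hz hz1 hf.norm).summable.congr fun n => ?_
    refine setIntegral_congr_fun measurableSet_base fun y hy => ?_
    simp only [norm_mul, Real.norm_of_nonneg (transferWeight_pos hz.le hy n).le]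
  rw [← (hasSum_setIntegral_comp_inducedInv hz hz1 hf).tsum_eq,
    integral_tsum_of_summable_integral_norm (integrableOn_comp_inducedInv_mul hz.le hf) hnorm]
  rfl

lemma transfer_mul_comp_inducedMap (hz : 0 ≤ z) (f k : ℝ → ℝ) {y : ℝ} (hy : y ∈ base) :
    transfer z (fun x => f x * k (inducedMap z x)) y = transfer z f y * k y := by
  simp only [transfer, inducedMap_inducedInv hz hy]
  rw [← _root_.tsum_mul_right]
  exact tsum_congr fun n => by ring

lemma setIntegral_mul_comp_inducedMap (hz : 0 < z) (hz1 : z ≤ 1)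
    (hf : IntegrableOn (fun x => f x * k (inducedMap z x)) base) :
    ∫ x in base, f x * k (inducedMap z x) = ∫ y in base, transfer z f y * k y := by
  rw [← integral_transfer hz hz1 hf]
  exact setIntegral_congr_fun measurableSet_base fun y hy =>
    transfer_mul_comp_inducedMap hz.le f k hy

end ChangeOfVariables

/-! ### Spectral gap by cone contraction -/

section SpectralGap

variable {z r K K' : ℝ} {f g : ℝ → ℝ}

lemma exp_sub_one_le_mul_exp {t K : ℝ} (ht : 0 ≤ t) (htK : t ≤ K) :
    Real.exp t - 1 ≤ t * Real.exp K := by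
  have hneg : (1 - t) * Real.exp t ≤ 1 := by
    have hle := mul_le_mul_of_nonneg_right (Real.add_one_le_exp (-t)) (Real.exp_pos t).le
    rw [← Real.exp_add, neg_add_cancel, Real.exp_zero] at hle
    linarith
  nlinarith [Real.exp_le_exp.2 htK]

lemma sub_le_exp_sub_exp {s t : ℝ} (hs : 0 ≤ s) (hst : s ≤ t) :
    t - s ≤ Real.exp t - Real.exp s := by
  have hsplit : Real.exp t = Real.exp s * Real.exp (t - s) := by
    rw [← Real.exp_add, add_sub_cancel]
  nlinarith [Real.add_one_le_exp (t - s), Real.one_le_exp hs]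

/-- The largest fraction of a function in the cone with constant `K'` that may be subtracted
without leaving the cone with constant `K`. -/
noncomputable def coneGap (K' K : ℝ) : ℝ := (K - K') / (K * Real.exp K)

lemma coneGap_pos (hK' : 0 ≤ K') (hK : K' < K) : 0 < coneGap K' K :=
  div_pos (sub_pos.2 hK) (mul_pos (hK'.trans_lt hK) (Real.exp_pos K))

lemma coneGap_le_one (hK' : 0 ≤ K') (hK : K' < K) : coneGap K' K ≤ 1 := by
  have hK0 : 0 < K := hK'.trans_lt hK
  rw [coneGap, div_le_one (mul_pos hK0 (Real.exp_pos K))]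
  nlinarith [Real.one_le_exp hK0.le]

lemma exp_sub_one_mul_le_of_le_coneGap_mul {c d w : ℝ} (hK' : 0 ≤ K') (hK : K' < K) (hd : 0 ≤ d)
    (hd1 : d ≤ 1) (hc : 0 ≤ c) (hw : 0 ≤ w) (hcw : c ≤ coneGap K' K * w) :
    (Real.exp (K * d) - 1) * c ≤ (Real.exp (K * d) - Real.exp (K' * d)) * w := by
  have hK0 : 0 < K := hK'.trans_lt hK
  rw [coneGap, div_mul_eq_mul_div, le_div_iff₀ (mul_pos hK0 (Real.exp_pos K))] at hcw
  calc (Real.exp (K * d) - 1) * c ≤ K * d * Real.exp K * c := by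
        gcongr
        exact exp_sub_one_le_mul_exp (by positivity) (mul_le_of_le_one_right hK0.le hd1)
    _ = d * (c * (K * Real.exp K)) := by ring
    _ ≤ d * ((K - K') * w) := by gcongr
    _ = (K * d - K' * d) * w := by ring
    _ ≤ (Real.exp (K * d) - Real.exp (K' * d)) * w :=
        mul_le_mul_of_nonneg_right (sub_le_exp_sub_exp (by positivity) (by gcongr)) hw

lemma LogHolder.sub_const {c : ℝ} (hr : 0 ≤ r) (hK' : 0 ≤ K') (hK : K' < K)
    (hg : LogHolder r K' g) (hc : 0 ≤ c) (hcg : ∀ y ∈ base, c ≤ coneGap K' K * g y) :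
    LogHolder r K fun y => g y - c := by
  refine ⟨fun x hx => sub_nonneg.2 ((hcg x hx).trans
    (mul_le_of_le_one_left (hg.1 x hx) (coneGap_le_one hK' hK))), fun x hx y hy => ?_⟩
  have hsub := exp_sub_one_mul_le_of_le_coneGap_mul hK' hK (d := |x - y| ^ r) (by positivity)
    (abs_sub_rpow_le_one hr hx hy) hc (hg.1 y hy) (hcg y hy)
  linarith [hg.2 x hx y hy]

lemma half_rpow_lt_one (hr : 0 < r) : (1 / 2 : ℝ) ^ r < 1 :=
  Real.rpow_lt_one (by norm_num) (by norm_num) hr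

/-- The transfer operator maps the cone of log-Hölder functions with constant `K` strictly into
itself. -/
def IsConeConstant (r K : ℝ) : Prop := K * (1 / 2) ^ r + 4 < K

namespace IsConeConstant

lemma pos (hK : IsConeConstant r K) (hr : 0 < r) : 0 < K := by
  unfold IsConeConstant at hK
  by_contra! hneg
  nlinarith [half_rpow_lt_one hr]

lemma mono (hK : IsConeConstant r K) (hr : 0 < r) (hKK : K ≤ K') : IsConeConstant r K' := by
  unfold IsConeConstant at *
  nlinarith [half_rpow_lt_one hr]

end IsConeConstant

lemma exists_isConeConstant (hr : 0 < r) : ∃ K, IsConeConstant r K := by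
  have hpos : 0 < 1 - (1 / 2 : ℝ) ^ r := sub_pos.2 (half_rpow_lt_one hr)
  refine ⟨5 / (1 - (1 / 2) ^ r), ?_⟩
  unfold IsConeConstant
  have hcancel : 5 / (1 - (1 / 2 : ℝ) ^ r) * (1 - (1 / 2) ^ r) = 5 := div_mul_cancel₀ _ hpos.ne'
  linarith

lemma LogHolder.transfer_iterate (hz : 0 < z) (hz1 : z < 1) (hr : 0 < r) (hr1 : r ≤ 1)
    (hK : IsConeConstant r K) (hg : LogHolder r K g) (k : ℕ) :
    LogHolder r K ((LSV.transfer z)^[k] g) := by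
  induction k with
  | zero => exact hg
  | succ k ih =>
    rw [Function.iterate_succ_apply']
    exact (ih.transfer hz hz1 hr.le hr1 (hK.pos hr).le).mono (le_of_lt hK)

lemma LogHolder.integral_transfer_iterate (hz : 0 < z) (hz1 : z < 1) (hr : 0 < r) (hr1 : r ≤ 1)
    (hK : IsConeConstant r K) (hg : LogHolder r K g) (k : ℕ) :
    ∫ y in base, (LSV.transfer z)^[k] g y = ∫ y in base, g y := by
  induction k with
  | zero => rfl
  | succ k ih =>
    have hk := hg.transfer_iterate hz hz1 hr hr1 hK k
    rw [Function.iterate_succ_apply', ← ih]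
    exact integral_transfer hz hz1.le (hk.integrableOn hr (hK.pos hr).le)

lemma LogHolder.integral_mul_comp_inducedMap_iterate (hz : 0 < z) (hz1 : z < 1) (hr : 0 < r)
    (hr1 : r ≤ 1) (hK : IsConeConstant r K) (hg : LogHolder r K g) {k : ℝ → ℝ} (hk : Measurable k)
    {D : ℝ} (hkD : ∀ x, |k x| ≤ D) (j : ℕ) :
    ∫ x in base, g x * k ((inducedMap z)^[j] x) =
      ∫ y in base, (LSV.transfer z)^[j] g y * k y := by
  induction j generalizing k with
  | zero => rfl
  | succ j ih =>
    have hmeas : Measurable fun x => k (inducedMap z x) := hk.comp (inducedMap_measurable hz.le)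
    have hint := ((hg.transfer_iterate hz hz1 hr hr1 hK j).integrableOn hr (hK.pos hr).le).mul_bdd
      (c := D) hmeas.aestronglyMeasurable (ae_of_all _ fun x => hkD _)
    simp only [Function.iterate_succ_apply']
    rw [← setIntegral_mul_comp_inducedMap hz hz1.le hint]
    exact ih hmeas fun x => hkD _

/-- The mass that one application of the transfer operator allows to subtract, relative to the
total mass, from every function of the cone with constant `K`. -/
noncomputable def contractionGap (r K : ℝ) : ℝ :=
  coneGap (K * (1 / 2) ^ r + 4) K * Real.exp (-(K * (1 / 2) ^ r + 4))

lemma contractionGap_pos (hr : 0 < r) (hK : IsConeConstant r K) : 0 < contractionGap r K := by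
  have hK0 := hK.pos hr
  exact mul_pos (coneGap_pos (by positivity) hK) (Real.exp_pos _)

lemma contractionGap_lt_one (hr : 0 < r) (hK : IsConeConstant r K) : contractionGap r K < 1 := by
  have hK0 := hK.pos hr
  have hK' : 0 < K * (1 / 2) ^ r + 4 := by positivity
  exact mul_lt_one_of_nonneg_of_lt_one_right (coneGap_le_one hK'.le hK) (Real.exp_pos _).le
    (Real.exp_lt_one_iff.2 (neg_lt_zero.2 hK'))

lemma LogHolder.transfer_sub_const (hz : 0 < z) (hz1 : z < 1) (hr : 0 < r) (hr1 : r ≤ 1)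
    (hK : IsConeConstant r K) (hg : LogHolder r K g) :
    LogHolder r K fun y =>
      LSV.transfer z g y - 2 * contractionGap r K * ∫ y in base, g y := by
  have hK0 := hK.pos hr
  have hK' : 0 ≤ K * (1 / 2) ^ r + 4 := by positivity
  have hAg := hg.transfer hz hz1 hr.le hr1 hK0.le
  have hgap := coneGap_pos hK' hK
  refine hAg.sub_const hr.le hK' hK
    (mul_nonneg (mul_nonneg two_pos.le (contractionGap_pos hr hK).le) hg.integral_nonneg)
    fun y hy => ?_
  have hle := hAg.integral_le hr hK' hy
  rw [integral_transfer hz hz1.le (hg.integrableOn hr hK0.le)] at hle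
  calc 2 * contractionGap r K * ∫ y in base, g y
      = coneGap (K * (1 / 2) ^ r + 4) K *
          (2 * Real.exp (-(K * (1 / 2) ^ r + 4)) * ∫ y in base, g y) := by
        rw [contractionGap]
        ring
    _ ≤ coneGap (K * (1 / 2) ^ r + 4) K * LSV.transfer z g y := by gcongr

lemma LogHolder.integral_transfer_sub_const (hz : 0 < z) (hz1 : z < 1) (hr : 0 < r) (hr1 : r ≤ 1)
    (hK : IsConeConstant r K) (hg : LogHolder r K g) :
    ∫ y in base, (LSV.transfer z g y - 2 * contractionGap r K * ∫ y in base, g y) =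
      (1 - contractionGap r K) * ∫ y in base, g y := by
  have hAg := hg.transfer_iterate hz hz1 hr hr1 hK 1
  rw [Function.iterate_one] at hAg
  rw [integral_sub (hAg.integrableOn hr (hK.pos hr).le) (integrable_const _),
    integral_transfer hz hz1.le (hg.integrableOn hr (hK.pos hr).le), setIntegral_const,
    volume_real_base, smul_eq_mul]
  ring

-- Both functions dominate a common constant after one step, so only the remaining mass, a fixed
-- fraction of the total one, contributes to the difference.
lemma LogHolder.abs_transfer_iterate_sub_le (hz : 0 < z) (hz1 : z < 1) (hr : 0 < r) (hr1 : r ≤ 1)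
    (hK : IsConeConstant r K) (hf : LogHolder r K f) (hg : LogHolder r K g)
    (hfg : ∫ y in base, f y = ∫ y in base, g y) (k : ℕ) {y : ℝ} (hy : y ∈ base) :
    |(LSV.transfer z)^[k] f y - (LSV.transfer z)^[k] g y| ≤
      2 * Real.exp K * (1 - contractionGap r K) ^ k * ∫ y in base, f y := by
  have hK0 := (hK.pos hr).le
  induction k generalizing f g with
  | zero =>
    have hfle := hf.le_integral hr hK0 hy
    have hgle := hg.le_integral hr hK0 hy
    rw [← hfg] at hgle
    simp only [Function.iterate_zero, id, pow_zero, mul_one]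
    rw [abs_le]
    constructor <;> linarith [hf.1 y hy, hg.1 y hy]
  | succ k ih =>
    set c := 2 * contractionGap r K * ∫ y in base, f y with hc
    have hsplit : ∀ h : ℝ → ℝ, LogHolder r K h → (LSV.transfer z)^[k]
        (fun y => LSV.transfer z h y - c) y =
          (LSV.transfer z)^[k + 1] h y - (LSV.transfer z)^[k] (fun _ => c) y := fun h hh =>
      transfer_iterate_sub hz hz1 ((hh.boundedOnBase hr.le hK0).transfer hz hz1)
        ⟨|c|, fun y _ => le_rfl⟩ k hy
    have hrest := ih (hf.transfer_sub_const hz hz1 hr hr1 hK)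
      (hg.transfer_sub_const hz hz1 hr hr1 hK) (by
        rw [hf.integral_transfer_sub_const hz hz1 hr hr1 hK,
          hg.integral_transfer_sub_const hz hz1 hr hr1 hK, hfg])
    rw [hf.integral_transfer_sub_const hz hz1 hr hr1 hK, ← hfg, ← hc, hsplit f hf, hsplit g hg,
      sub_sub_sub_cancel_right] at hrest
    exact hrest.trans_eq (by ring)

end SpectralGap

/-! ### The density on the base -/

section InvariantDensity

variable {z r K : ℝ} {f g h k : ℝ → ℝ}

lemma exists_polynomial_setIntegral_base_abs_sub_le (hf : IntegrableOn f base) {ε : ℝ}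
    (hε : 0 < ε) : ∃ p : Polynomial ℝ, ∫ x in base, |f x - p.eval x| ≤ ε := by
  obtain ⟨φ, -, hφ, hφc, hφi⟩ := hf.exists_hasCompactSupport_integral_sub_le (half_pos hε)
  obtain ⟨p, hp⟩ := exists_polynomial_near_of_continuousOn (1 / 2) 1 φ hφc.continuousOn ε hε
  have hpi : IntegrableOn (fun x => p.eval x) base :=
    (p.continuous.continuousOn.integrableOn_compact isCompact_Icc).mono_set Ico_subset_Icc_self
  refine ⟨p, ?_⟩
  calc ∫ x in base, |f x - p.eval x| ≤ ∫ x in base, (|f x - φ x| + ε) := by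
        refine setIntegral_mono_on (hf.sub hpi).abs ((hf.sub hφi).abs.add (integrable_const _))
          measurableSet_base fun x hx => ?_
        have hle := (hp x (Ico_subset_Icc_self hx)).le
        rw [abs_sub_comm] at hle
        exact (abs_sub_le _ (φ x) _).trans (by gcongr)
    _ = (∫ x in base, |f x - φ x|) + ε / 2 := by
        have hadd := integral_add (hf.sub hφi).abs
          (integrable_const (μ := volume.restrict base) ε)
        rw [setIntegral_const, volume_real_base, smul_eq_mul, one_div_mul_eq_div] at hadd
        exact hadd
    _ ≤ ε := by
        have hle : ∫ x in base, |f x - φ x| ≤ ε / 2 := hφ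
        linarith

lemma logHolder_max_zero_add {M e : ℝ} (hr1 : r ≤ 1) (he : 0 < e) (hM : 0 ≤ M)
    (hf : ∀ x ∈ base, ∀ y ∈ base, f x ≤ f y + M * |x - y|) :
    LogHolder r (M / e) fun x => max (f x) 0 + e := by
  refine ⟨fun x _ => by positivity, fun x hx y hy => ?_⟩
  have hmax : max (f x) 0 ≤ max (f y) 0 + M * |x - y| :=
    max_le ((hf x hx y hy).trans (by gcongr; exact le_max_left _ _)) (by positivity)
  have hdist : M * |x - y| ≤ M / e * |x - y| ^ r * (max (f y) 0 + e) :=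
    calc M * |x - y| ≤ M * |x - y| ^ r := by
          gcongr
          exact abs_sub_le_abs_sub_rpow hr1 hx hy
      _ = M / e * |x - y| ^ r * e := by field_simp
      _ ≤ M / e * |x - y| ^ r * (max (f y) 0 + e) := by
          gcongr
          exact le_add_of_nonneg_left (le_max_right _ _)
  calc max (f x) 0 + e ≤ (M / e * |x - y| ^ r + 1) * (max (f y) 0 + e) := by linarith
    _ ≤ Real.exp (M / e * |x - y| ^ r) * (max (f y) 0 + e) := by
        gcongr
        exact Real.add_one_le_exp _

lemma exists_logHolder_setIntegral_abs_sub_le (hr : 0 < r) (hr1 : r ≤ 1)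
    (hf : IntegrableOn f base) (hf0 : ∀ x, 0 ≤ f x) {ε : ℝ} (hε : 0 < ε) :
    ∃ K g, 0 ≤ K ∧ LogHolder r K g ∧ ∫ x in base, |f x - g x| ≤ ε := by
  obtain ⟨p, hp⟩ := exists_polynomial_setIntegral_base_abs_sub_le hf (half_pos hε)
  obtain ⟨M, hM⟩ := (p.contDiff_aeval (𝕜 := ℝ) 1).contDiffOn.exists_lipschitzOnWith one_ne_zero
    (convex_Icc (1 / 2) 1) isCompact_Icc
  have hlip : ∀ x ∈ base, ∀ y ∈ base, p.eval x ≤ p.eval y + M * |x - y| := fun x hx y hy => by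
    have hdist := hM.dist_le_mul x (Ico_subset_Icc_self hx) y (Ico_subset_Icc_self hy)
    rw [Real.dist_eq, Real.dist_eq, Polynomial.coe_aeval_eq_eval, Polynomial.coe_aeval_eq_eval]
      at hdist
    linarith [le_abs_self (p.eval x - p.eval y)]
  have hg := logHolder_max_zero_add hr1 hε M.coe_nonneg hlip
  have hpi : IntegrableOn (fun x => p.eval x) base :=
    (p.continuous.continuousOn.integrableOn_compact isCompact_Icc).mono_set Ico_subset_Icc_self
  refine ⟨M / ε, _, by positivity, hg, ?_⟩
  calc ∫ x in base, |f x - (max (p.eval x) 0 + ε)| ≤ ∫ x in base, (|f x - p.eval x| + ε) := by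
        refine setIntegral_mono_on (hf.sub (hg.integrableOn hr (by positivity))).abs
          ((hf.sub hpi).abs.add (integrable_const _)) measurableSet_base fun x _ => ?_
        have hmax := abs_max_sub_max_le_abs (f x) (p.eval x) 0
        rw [max_eq_left (hf0 x)] at hmax
        calc |f x - (max (p.eval x) 0 + ε)| = |f x - max (p.eval x) 0 - ε| := by
              rw [sub_add_eq_sub_sub]
          _ ≤ |f x - max (p.eval x) 0| + |ε| := abs_sub _ _
          _ ≤ |f x - p.eval x| + ε := by rw [abs_of_pos hε]; gcongr
    _ = (∫ x in base, |f x - p.eval x|) + ε / 2 := by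
        have hadd := integral_add (hf.sub hpi).abs
          (integrable_const (μ := volume.restrict base) ε)
        rw [setIntegral_const, volume_real_base, smul_eq_mul, one_div_mul_eq_div] at hadd
        exact hadd
    _ ≤ ε := by linarith

lemma logHolder_one (hK : 0 ≤ K) : LogHolder r K fun _ => 1 :=
  ⟨fun _ _ => zero_le_one, fun x _ y _ => by
    rw [mul_one]
    exact Real.one_le_exp (by positivity)⟩

lemma setIntegral_base_one : ∫ _ in base, (1 : ℝ) = 1 / 2 := by
  rw [setIntegral_const, volume_real_base, smul_eq_mul, mul_one]

lemma exists_tendsto_transfer_iterate_one (hz : 0 < z) (hz1 : z < 1) (hr : 0 < r) (hr1 : r ≤ 1)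
    (hK : IsConeConstant r K) {y : ℝ} (hy : y ∈ base) :
    ∃ a, Tendsto (fun j => (transfer z)^[j] (fun _ => 1) y) atTop (nhds a) := by
  have hone : LogHolder r K fun _ => 1 := logHolder_one (hK.pos hr).le
  refine cauchySeq_tendsto_of_complete (cauchySeq_of_le_geometric (1 - contractionGap r K)
    (2 * Real.exp K * (1 / 2)) (sub_lt_self _ (contractionGap_pos hr hK)) fun n => ?_)
  have hle := hone.abs_transfer_iterate_sub_le hz hz1 hr hr1 hK
    (hone.transfer_iterate hz hz1 hr hr1 hK 1)
    (hone.integral_transfer_iterate hz hz1 hr hr1 hK 1).symm n hy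
  rw [setIntegral_base_one] at hle
  rw [Real.dist_eq, Function.iterate_succ_apply]
  exact hle.trans_eq (by ring)

lemma exists_logHolder_tendsto_transfer_iterate_one (hz : 0 < z) (hz1 : z < 1) (hr : 0 < r)
    (hr1 : r ≤ 1) (hK : IsConeConstant r K) : ∃ h : ℝ → ℝ, LogHolder r K h ∧ (∀ y ∈ base, 0 < h y) ∧
      ∀ y ∈ base, Tendsto (fun j => (transfer z)^[j] (fun _ => 1) y) atTop (nhds (h y)) := by
  have hone : ∀ j, LogHolder r K ((transfer z)^[j] fun _ => 1) := fun j =>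
    (logHolder_one (hK.pos hr).le).transfer_iterate hz hz1 hr hr1 hK j
  choose! h hh using fun (y : ℝ) (hy : y ∈ base) =>
    exists_tendsto_transfer_iterate_one hz hz1 hr hr1 hK hy
  refine ⟨h, ⟨fun x hx => ge_of_tendsto' (hh x hx) fun j => (hone j).1 x hx, fun x hx y hy =>
    le_of_tendsto_of_tendsto' (hh x hx) ((hh y hy).const_mul _) fun j => (hone j).2 x hx y hy⟩,
    fun y hy => (Real.exp_pos (-K)).trans_le (ge_of_tendsto' (hh y hy) fun j => ?_), hh⟩
  have hle := (hone j).integral_le hr (hK.pos hr).le hy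
  rw [(logHolder_one (hK.pos hr).le).integral_transfer_iterate hz hz1 hr hr1 hK,
    setIntegral_base_one] at hle
  linarith

lemma LogHolder.tendsto_transfer_iterate (hz : 0 < z) (hz1 : z < 1) (hr : 0 < r) (hr1 : r ≤ 1)
    (hK : IsConeConstant r K) (hg : LogHolder r K g) {y a : ℝ} (hy : y ∈ base)
    (ha : Tendsto (fun j => (LSV.transfer z)^[j] (fun _ => 1) y) atTop (nhds a)) :
    Tendsto (fun j => (LSV.transfer z)^[j] g y) atTop (nhds (2 * (∫ y in base, g y) * a)) := by
  set c := 2 * ∫ y in base, g y with hc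
  have hconst : LogHolder r K fun _ : ℝ => c * 1 :=
    (logHolder_one (hK.pos hr).le).const_mul (mul_nonneg zero_le_two hg.integral_nonneg)
  have hint : ∫ y in base, g y = ∫ _ in base, c * (1 : ℝ) := by
    rw [integral_const_mul, setIntegral_base_one, hc]
    ring
  have hdiff : Tendsto (fun j => (LSV.transfer z)^[j] g y -
      c * (LSV.transfer z)^[j] (fun _ => 1) y) atTop (nhds 0) := by
    refine squeeze_zero_norm (a := fun j =>
      2 * Real.exp K * (1 - contractionGap r K) ^ j * ∫ y in base, g y) (fun j => ?_) ?_
    · have hle := hg.abs_transfer_iterate_sub_le hz hz1 hr hr1 hK hconst hint j hy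
      rwa [transfer_iterate_const_mul] at hle
    · have hgeom := tendsto_pow_atTop_nhds_zero_of_lt_one
        (sub_nonneg.2 (contractionGap_lt_one hr hK).le) (sub_lt_self _ (contractionGap_pos hr hK))
      simpa only [mul_zero, zero_mul] using
        (hgeom.const_mul (2 * Real.exp K)).mul_const (∫ y in base, g y)
  simpa only [sub_add_cancel, zero_add] using hdiff.add (ha.const_mul c)

lemma LogHolder.tendsto_setIntegral_transfer_iterate_mul (hz : 0 < z) (hz1 : z < 1) (hr : 0 < r)
    (hr1 : r ≤ 1) (hK : IsConeConstant r K) (hg : LogHolder r K g)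
    (hh : ∀ y ∈ base, Tendsto (fun j => (LSV.transfer z)^[j] (fun _ => 1) y) atTop (nhds (h y)))
    (hk : Measurable k) (hk1 : ∀ x, |k x| ≤ 1) :
    Tendsto (fun j => ∫ y in base, (LSV.transfer z)^[j] g y * k y) atTop
      (nhds (2 * (∫ y in base, g y) * ∫ y in base, h y * k y)) := by
  have hiter := hg.transfer_iterate hz hz1 hr hr1 hK
  rw [← integral_const_mul]
  refine tendsto_integral_of_dominated_convergence
    (fun _ => 2 * Real.exp K * ∫ y in base, g y)
    (fun j => ((hiter j).aestronglyMeasurable hr).mul hk.aestronglyMeasurable)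
    (integrable_const _) (fun j => ?_) ?_
  · refine (ae_restrict_iff' measurableSet_base).2 (ae_of_all _ fun y hy => ?_)
    have hle := (hiter j).le_integral hr (hK.pos hr).le hy
    rw [hg.integral_transfer_iterate hz hz1 hr hr1 hK] at hle
    rw [Real.norm_eq_abs, abs_mul, abs_of_nonneg ((hiter j).1 y hy)]
    exact (mul_le_of_le_one_right ((hiter j).1 y hy) (hk1 y)).trans hle
  · refine (ae_restrict_iff' measurableSet_base).2 (ae_of_all _ fun y hy => ?_)
    simp only [← mul_assoc]
    exact (hg.tendsto_transfer_iterate hz hz1 hr hr1 hK hy (hh y hy)).mul_const _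

lemma exists_logHolder_abs_integral_sub_le {ν : Measure ℝ} [IsFiniteMeasure ν]
    (hν : ν ≪ volume.restrict base) (hr : 0 < r) (hr1 : r ≤ 1) {ε : ℝ} (hε : 0 < ε) :
    ∃ K g, 0 ≤ K ∧ LogHolder r K g ∧ ∀ f : ℝ → ℝ, Measurable f → (∀ x, |f x| ≤ 1) →
      |∫ x, f x ∂ν - ∫ x in base, g x * f x| ≤ ε := by
  have hdi : IntegrableOn (fun x => (ν.rnDeriv (volume.restrict base) x).toReal) base :=
    Measure.integrable_toReal_rnDeriv
  obtain ⟨K, g, hK, hg, hgε⟩ :=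
    exists_logHolder_setIntegral_abs_sub_le hr hr1 hdi (fun _ => ENNReal.toReal_nonneg) hε
  refine ⟨K, g, hK, hg, fun f hf hf1 => ?_⟩
  have hgi := hg.integrableOn hr hK
  have hdf := hdi.mul_bdd (c := 1) hf.aestronglyMeasurable (ae_of_all _ hf1)
  have hgf := hgi.mul_bdd (c := 1) hf.aestronglyMeasurable (ae_of_all _ hf1)
  have hν_eq : ∫ x in base, (ν.rnDeriv (volume.restrict base) x).toReal * f x = ∫ x, f x ∂ν :=
    integral_rnDeriv_smul hν
  rw [← hν_eq, ← integral_sub hdf hgf]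
  refine abs_integral_le_integral_abs.trans (le_trans ?_ hgε)
  refine integral_mono (hdf.sub hgf).abs (hdi.sub hgi).abs fun x => ?_
  simp only [← sub_mul, abs_mul]
  exact mul_le_of_le_one_right (abs_nonneg _) (hf1 x)

lemma integral_comp_of_measurePreserving {α β : Type*} [MeasurableSpace α] [MeasurableSpace β]
    {ν : Measure α} {ρ : Measure β} {T : α → β} (hT : MeasurePreserving T ν ρ) {f : β → ℝ}
    (hf : AEStronglyMeasurable f ρ) : ∫ x, f (T x) ∂ν = ∫ y, f y ∂ρ := by
  rw [← hT.map_eq] at hf ⊢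
  exact (integral_map hT.measurable.aemeasurable hf).symm

lemma abs_integral_sub_le_of_measurePreserving_inducedMap (hz : 0 < z) (hz1 : z < 1) (hr : 0 < r)
    (hr1 : r ≤ 1) (hK : IsConeConstant r K)
    (hh : ∀ y ∈ base, Tendsto (fun j => (transfer z)^[j] (fun _ => 1) y) atTop (nhds (h y)))
    {ν : Measure ℝ} [IsFiniteMeasure ν] (hν : ν ≪ volume.restrict base)
    (hinv : MeasurePreserving (inducedMap z) ν ν) (hk : Measurable k) (hk1 : ∀ x, |k x| ≤ 1)
    {ε : ℝ} (hε : 0 < ε) :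
    |∫ x, k x ∂ν - 2 * ν.real univ * ∫ y in base, h y * k y| ≤
      ε * (1 + 2 * |∫ y in base, h y * k y|) := by
  obtain ⟨K', g, -, hg, hclose⟩ := exists_logHolder_abs_integral_sub_le hν hr hr1 hε
  have hK' : IsConeConstant r (max K K') := hK.mono hr (le_max_left _ _)
  replace hg := hg.mono (le_max_right K K')
  set I := ∫ y in base, g y
  set T := ∫ y in base, h y * k y
  have hmass : |ν.real univ - I| ≤ ε := by
    simpa only [integral_const, smul_eq_mul, mul_one] using
      hclose (fun _ => 1) measurable_const (fun _ => by rw [abs_one])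
  have hiter : ∀ j, |∫ x, k x ∂ν - ∫ y in base, (transfer z)^[j] g y * k y| ≤ ε := fun j => by
    rw [← hg.integral_mul_comp_inducedMap_iterate hz hz1 hr hr1 hK' hk hk1 j]
    rw [← integral_comp_of_measurePreserving (hinv.iterate j) hk.aestronglyMeasurable]
    exact hclose _ (hk.comp (hinv.iterate j).measurable) fun x => hk1 _
  have hlim : |∫ x, k x ∂ν - 2 * I * T| ≤ ε := le_of_tendsto'
    ((hg.tendsto_setIntegral_transfer_iterate_mul hz hz1 hr hr1 hK' hh hk hk1).const_sub _).abs
    hiter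
  calc |∫ x, k x ∂ν - 2 * ν.real univ * T|
      = |(∫ x, k x ∂ν - 2 * I * T) - 2 * (ν.real univ - I) * T| := by
        congr 1
        ring
    _ ≤ |∫ x, k x ∂ν - 2 * I * T| + |2 * (ν.real univ - I) * T| := abs_sub _ _
    _ ≤ ε + 2 * ε * |T| := by
        rw [abs_mul, abs_mul, abs_two]
        gcongr
    _ = ε * (1 + 2 * |T|) := by ring

lemma integral_eq_of_measurePreserving_inducedMap (hz : 0 < z) (hz1 : z < 1) (hr : 0 < r)
    (hr1 : r ≤ 1) (hK : IsConeConstant r K)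
    (hh : ∀ y ∈ base, Tendsto (fun j => (transfer z)^[j] (fun _ => 1) y) atTop (nhds (h y)))
    {ν : Measure ℝ} [IsFiniteMeasure ν] (hν : ν ≪ volume.restrict base)
    (hinv : MeasurePreserving (inducedMap z) ν ν) (hk : Measurable k) (hk1 : ∀ x, |k x| ≤ 1) :
    ∫ x, k x ∂ν = 2 * ν.real univ * ∫ y in base, h y * k y := by
  set T := ∫ y in base, h y * k y with hT
  have hpos : 0 < 1 + 2 * |T| := by positivity
  refine sub_eq_zero.1 (abs_nonpos_iff.1 (le_of_forall_pos_le_add fun ε hε => ?_))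
  have hle := abs_integral_sub_le_of_measurePreserving_inducedMap hz hz1 hr hr1 hK hh hν hinv hk
    hk1 (div_pos hε hpos)
  rwa [← hT, div_mul_cancel₀ _ hpos.ne', ← zero_add ε] at hle

/-- `g` is a density of `μ` on the base whose logarithm is `r`-Hölder with constant `K`. -/
structure IsBaseDensity (μ : Measure ℝ) (r K : ℝ) (g : ℝ → ℝ) : Prop where
  measurable : Measurable g
  nonneg : ∀ x, 0 ≤ g x
  pos : ∀ x ∈ base, 0 < g x
  logHolder : LogHolder r K g
  restrict_eq : μ.restrict base =
    (volume.restrict base).withDensity fun x => ENNReal.ofReal (g x)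

lemma exists_isBaseDensity_of_setIntegral_eq {μ : Measure ℝ} [IsFiniteMeasure μ] (hr : 0 < r)
    (hK : 0 ≤ K) (hg : LogHolder r K g) (hpos : ∀ x ∈ base, 0 < g x)
    (hint : ∀ B, MeasurableSet B → μ.real (B ∩ base) = ∫ x in base, g x * B.indicator 1 x) :
    ∃ g, IsBaseDensity μ r K g := by
  have heq : EqOn g (base.indicator g) base := fun x hx => (indicator_of_mem hx g).symm
  have hg' := hg.congr heq
  refine ⟨base.indicator g, ?_, indicator_nonneg fun x hx => hg.1 x hx,
    fun x hx => (hpos x hx).trans_eq (heq hx), hg', ?_⟩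
  · classical
    rw [← piecewise_eq_indicator]
    exact (hg.continuousOn hr).measurable_piecewise continuousOn_const measurableSet_base
  · ext B hB
    rw [withDensity_apply _ hB, Measure.restrict_apply hB,
      ← ofReal_integral_eq_lintegral_ofReal (hg'.integrableOn hr hK).integrable.restrict
        (ae_of_all _ (indicator_nonneg fun x hx => hg.1 x hx)),
      ← ofReal_measureReal, hint B hB, ← integral_indicator hB]
    congr 1
    refine setIntegral_congr_fun measurableSet_base fun x hx => ?_
    by_cases hxB : x ∈ B <;> simp [hxB, hx]

lemma IsAcip.exists_isBaseDensity {μ : Measure ℝ} (hμ : IsAcip z μ) (hz : 0 < z) (hz1 : z < 1)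
    (hr : 0 < r) (hr1 : r ≤ 1) (hK : IsConeConstant r K) : ∃ g, IsBaseDensity μ r K g := by
  have := hμ.prob
  obtain ⟨h, hreg, hpos, hlim⟩ := exists_logHolder_tendsto_transfer_iterate_one hz hz1 hr hr1 hK
  have hbase : 0 < μ.real base :=
    ENNReal.toReal_pos (hμ.measure_base_ne_zero hz hz1.le) (measure_ne_top _ _)
  refine exists_isBaseDensity_of_setIntegral_eq hr (hK.pos hr).le
    (hreg.const_mul (c := 2 * μ.real base) (by positivity))
    (fun x hx => mul_pos (mul_pos two_pos hbase) (hpos x hx)) fun B hB => ?_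
  have hint := integral_eq_of_measurePreserving_inducedMap hz hz1 hr hr1 hK hlim
    (hμ.ac.restrict base) ⟨inducedMap_measurable hz.le, hμ.map_inducedMap hz hz1.le⟩
    (k := B.indicator 1) (measurable_one.indicator hB)
    (fun x => by by_cases hx : x ∈ B <;> simp [hx])
  rw [integral_indicator_one hB, measureReal_restrict_apply hB,
    measureReal_restrict_apply MeasurableSet.univ, univ_inter, ← integral_const_mul] at hint
  simpa only [mul_assoc] using hint

end InvariantDensity

/-! ### Polynomial return tails -/

lemma sum_add_one_rpow_sub_one_le {p : ℝ} (hp : 0 < p) (hp1 : p ≤ 1) (n : ℕ) :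
    ∑ k ∈ Finset.range n, ((k : ℝ) + 1) ^ (p - 1) ≤ p⁻¹ * (n : ℝ) ^ p := by
  induction n with
  | zero => simp [Real.zero_rpow hp.ne']
  | succ n ih =>
    have htangent : p * ((n : ℝ) + 1) ^ (p - 1) ≤ ((n : ℝ) + 1) ^ p - (n : ℝ) ^ p := by
      simpa [slope_def_field] using
        (Real.concaveOn_rpow hp.le hp1).le_slope_of_hasDerivAt (x := (n : ℝ)) (y := n + 1)
        (mem_Ici.2 n.cast_nonneg) (mem_Ici.2 (by positivity)) (lt_add_one _)
        (Real.hasDerivAt_rpow_const (Or.inl (by positivity)))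
    rw [Finset.sum_range_succ, Nat.cast_add_one]
    linarith [(le_inv_mul_iff₀ hp).2 htangent]

lemma sum_add_rpow_neg_le {q s : ℝ} (hq : 1 < q) (hs : 0 < s) (N : ℕ) :
    ∑ l ∈ Finset.range N, (s + (l + 1 : ℕ)) ^ (-q) ≤ (q - 1)⁻¹ * s ^ (1 - q) := by
  have hanti : AntitoneOn (fun x : ℝ => x ^ (-q)) (Icc s (s + N)) := fun x hx y _ hxy =>
    Real.rpow_le_rpow_of_nonpos (hs.trans_le hx.1) hxy (by linarith)
  refine hanti.sum_le_integral.trans ?_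
  rw [integral_rpow (Or.inr ⟨by linarith, fun h0 => ?_⟩),
    show -q + 1 = -(q - 1) by ring, div_neg, ← neg_div, neg_sub, neg_sub, div_eq_inv_mul]
  · have hend : 0 ≤ (s + N) ^ (1 - q) := by positivity
    exact mul_le_mul_of_nonneg_left (by linarith) (inv_nonneg.2 (by linarith))
  · rw [uIcc_of_le (by simp)] at h0
    linarith [h0.1]

section ReturnTail

variable {z : ℝ} {μ : Measure ℝ}

lemma IsBaseDensity.measureReal_eq_setIntegral {r K : ℝ} {g : ℝ → ℝ} (hg : IsBaseDensity μ r K g)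
    {B : Set ℝ} (hB : MeasurableSet B) (hBbase : B ⊆ base) : μ.real B = ∫ x in B, g x := by
  have hrestrict : μ B = μ.restrict base B := by
    rw [Measure.restrict_apply hB, inter_eq_left.2 hBbase]
  rw [Measure.real, hrestrict, hg.restrict_eq, withDensity_apply _ hB,
    Measure.restrict_restrict hB, inter_eq_left.2 hBbase,
    integral_eq_lintegral_of_nonneg_ae (ae_of_all _ hg.nonneg) hg.measurable.aestronglyMeasurable]

lemma IsBaseDensity.exists_bounds {K : ℝ} {g : ℝ → ℝ} {r : ℝ} (hr : 0 ≤ r) (hK : 0 ≤ K)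
    (hg : IsBaseDensity μ r K g) : ∃ c D, 0 < c ∧ 0 < D ∧ ∀ x ∈ base, c ≤ g x ∧ g x ≤ D := by
  have hhalf := hg.pos _ half_mem_base
  refine ⟨Real.exp (-K) * g (1 / 2), Real.exp K * g (1 / 2), by positivity, by positivity,
    fun x hx => ⟨?_, hg.logHolder.le_exp_mul hr hK hx half_mem_base⟩⟩
  rw [Real.exp_neg, inv_mul_le_iff₀ (Real.exp_pos K)]
  exact hg.logHolder.le_exp_mul hr hK half_mem_base hx

lemma IsAcip.exists_measureReal_bounds (hμ : IsAcip z μ) (hz : 0 < z) (hz1 : z < 1) :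
    ∃ c D, 0 < c ∧ 0 < D ∧ ∀ B, MeasurableSet B → B ⊆ base →
      c * volume.real B ≤ μ.real B ∧ μ.real B ≤ D * volume.real B := by
  obtain ⟨K, hK⟩ := exists_isConeConstant one_pos
  obtain ⟨g, hg⟩ := hμ.exists_isBaseDensity hz hz1 one_pos le_rfl hK
  have hK0 := (hK.pos one_pos).le
  obtain ⟨c, D, hc, hD, hbounds⟩ := hg.exists_bounds zero_le_one hK0
  refine ⟨c, D, hc, hD, fun B hB hBbase => ?_⟩
  have hgint : IntegrableOn g B := (hg.logHolder.integrableOn one_pos hK0).mono_set hBbase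
  have hconst (a : ℝ) : IntegrableOn (fun _ => a) B :=
    (integrable_const (μ := volume.restrict base) a).mono_measure
      (Measure.restrict_mono hBbase le_rfl)
  have hsetIntegral (a : ℝ) : a * volume.real B = ∫ _ in B, a := by
    rw [setIntegral_const, smul_eq_mul, mul_comm]
  rw [hg.measureReal_eq_setIntegral hB hBbase, hsetIntegral, hsetIntegral]
  exact ⟨setIntegral_mono_on (hconst c) hgint hB fun y hy => (hbounds y (hBbase hy)).1,
    setIntegral_mono_on hgint (hconst D) hB fun y hy => (hbounds y (hBbase hy)).2⟩

lemma volume_real_longReturn (hz : 0 ≤ z) (n : ℕ) :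
    volume.real (longReturn z n) = baseEndpoint z n - 1 / 2 :=
  Real.volume_real_Ico_of_le (half_lt_baseEndpoint hz n).le

lemma volume_real_longReturn_le (hz : 0 ≤ z) (n : ℕ) :
    volume.real (longReturn z n) ≤ preHalf z n := by
  rw [volume_real_longReturn hz]
  cases n with
  | zero => exact (show (1 : ℝ) - 1 / 2 = 1 / 2 by norm_num).le
  | succ n =>
    have hpos := (preHalf_mem hz (n + 1)).1
    have hgap : preHalf z n - preHalf z (n + 1) ≤ preHalf z (n + 1) := by
      rw [preHalf_sub_succ hz, Real.rpow_add hpos, Real.rpow_one, mul_left_comm]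
      exact mul_le_of_le_one_right hpos.le (two_rpow_mul_preHalf_rpow_le_one hz n)
    rw [baseEndpoint]
    linarith

lemma preHalf_div_two_le_volume_real_longReturn (hz : 0 ≤ z) (n : ℕ) :
    preHalf z n / 2 ≤ volume.real (longReturn z n) := by
  rw [volume_real_longReturn hz]
  cases n with
  | zero => rw [baseEndpoint]; linarith [(preHalf_mem hz 0).2]
  | succ n => rw [baseEndpoint]; linarith [preHalf_succ_lt hz n]

namespace IsAcip

lemma exists_measureReal_longReturn_le (hμ : IsAcip z μ) (hz : 0 < z) (hz1 : z < 1) :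
    ∃ C, 0 < C ∧ ∀ n : ℕ, μ.real (longReturn z n) ≤ C * ((n : ℝ) + 1) ^ (-(1 / z)) := by
  obtain ⟨c, D, -, hD, hbounds⟩ := hμ.exists_measureReal_bounds hz hz1
  obtain ⟨C, hC, hpre⟩ := exists_preHalf_le hz hz1.le
  refine ⟨D * C, by positivity, fun n => ?_⟩
  calc μ.real (longReturn z n)
      ≤ D * volume.real (longReturn z n) :=
        (hbounds _ (measurableSet_longReturn z n) (longReturn_subset_base hz.le n)).2
    _ ≤ D * (C * ((n : ℝ) + 1) ^ (-(1 / z))) := by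
        gcongr
        exact (volume_real_longReturn_le hz.le n).trans (hpre n)
    _ = _ := (mul_assoc _ _ _).symm

lemma exists_le_measureReal_longReturn (hμ : IsAcip z μ) (hz : 0 < z) (hz1 : z < 1) :
    ∃ C, 0 < C ∧ ∀ n : ℕ, C * ((n : ℝ) + 1) ^ (-(1 / z)) ≤ μ.real (longReturn z n) := by
  obtain ⟨c, D, hc, -, hbounds⟩ := hμ.exists_measureReal_bounds hz hz1
  obtain ⟨C, hC, hpre⟩ := exists_le_preHalf hz hz1.le
  refine ⟨c * (C / 2), by positivity, fun n => ?_⟩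
  calc c * (C / 2) * ((n : ℝ) + 1) ^ (-(1 / z))
      = c * (C * ((n : ℝ) + 1) ^ (-(1 / z)) / 2) := by ring
    _ ≤ c * volume.real (longReturn z n) := by
        gcongr
        linarith [hpre n, preHalf_div_two_le_volume_real_longReturn hz.le n]
    _ ≤ μ.real (longReturn z n) :=
        (hbounds _ (measurableSet_longReturn z n) (longReturn_subset_base hz.le n)).1

lemma exists_sum_measureReal_longReturn_le (hμ : IsAcip z μ) (hz : 0 < z) (hz1 : z < 1) :
    ∃ C, 0 < C ∧ ∀ s N : ℕ, 1 ≤ s →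
      ∑ l ∈ Finset.range N, μ.real (longReturn z (l + s)) ≤ C * (s : ℝ) ^ (1 - 1 / z) := by
  obtain ⟨C, hC, htail⟩ := hμ.exists_measureReal_longReturn_le hz hz1
  have hexp := one_lt_one_div hz hz1
  refine ⟨C * (1 / z - 1)⁻¹, mul_pos hC (inv_pos.2 (sub_pos.2 hexp)), fun s N hs => ?_⟩
  calc ∑ l ∈ Finset.range N, μ.real (longReturn z (l + s))
      ≤ ∑ l ∈ Finset.range N, C * ((s : ℝ) + (l + 1 : ℕ)) ^ (-(1 / z)) := by
        refine Finset.sum_le_sum fun l _ => (htail (l + s)).trans_eq ?_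
        push_cast
        ring_nf
    _ = C * ∑ l ∈ Finset.range N, ((s : ℝ) + (l + 1 : ℕ)) ^ (-(1 / z)) :=
        (Finset.mul_sum _ _ _).symm
    _ ≤ C * ((1 / z - 1)⁻¹ * (s : ℝ) ^ (1 - 1 / z)) := by
        gcongr
        exact sum_add_rpow_neg_le hexp (by exact_mod_cast hs) N
    _ = _ := (mul_assoc _ _ _).symm

lemma sum_measureReal_longReturn_add (hμ : IsAcip z μ) (hz : 0 ≤ z) (n : ℕ) :
    ∑ l ∈ Finset.range (n + 1), μ.real (longReturn z l) + μ.real (Ico 0 (preHalf z n)) = 1 := by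
  have := hμ.prob
  have htotal := hμ.sum_measure_preimage_inter_longReturn_add hz MeasurableSet.univ n
  simp only [preimage_univ, univ_inter, measure_univ] at htotal
  have hreal := congrArg ENNReal.toReal htotal
  rwa [ENNReal.toReal_add (ENNReal.sum_lt_top.2 fun _ _ => measure_lt_top _ _).ne
    (measure_ne_top _ _), ENNReal.toReal_sum fun _ _ => measure_ne_top _ _,
    ENNReal.toReal_one] at hreal

lemma sum_measureReal_longReturn_le_measureReal_Ico (hμ : IsAcip z μ) (hz : 0 ≤ z) (n m : ℕ) :
    ∑ l ∈ Finset.range m, μ.real (longReturn z (n + 1 + l)) ≤ μ.real (Ico 0 (preHalf z n)) := by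
  have hn := hμ.sum_measureReal_longReturn_add hz n
  have hnm := hμ.sum_measureReal_longReturn_add hz (n + m)
  rw [show n + m + 1 = n + 1 + m by ring, Finset.sum_range_add] at hnm
  linarith [measureReal_nonneg (μ := μ) (s := Ico 0 (preHalf z (n + m)))]

lemma exists_le_measureReal_Ico_preHalf (hμ : IsAcip z μ) (hz : 0 < z) (hz1 : z < 1) :
    ∃ C, 0 < C ∧ ∀ n : ℕ, C * ((n : ℝ) + 1) ^ (1 - 1 / z) ≤ μ.real (Ico 0 (preHalf z n)) := by
  obtain ⟨C, hC, hlow⟩ := hμ.exists_le_measureReal_longReturn hz hz1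
  refine ⟨C * 2 ^ (-(1 / z)), by positivity, fun n => ?_⟩
  have hn : (0 : ℝ) < n + 1 := by positivity
  have hterm : ∀ l ∈ Finset.range (n + 1),
      C * (2 * ((n : ℝ) + 1)) ^ (-(1 / z)) ≤ μ.real (longReturn z (n + 1 + l)) := fun l hl => by
    have hln : (l : ℝ) ≤ n := by exact_mod_cast Finset.mem_range_succ_iff.1 hl
    refine le_trans ?_ (hlow _)
    gcongr C * ?_
    refine Real.rpow_le_rpow_of_nonpos (by positivity) (by push_cast; linarith) ?_
    exact neg_nonpos.2 (by positivity)
  calc C * 2 ^ (-(1 / z)) * ((n : ℝ) + 1) ^ (1 - 1 / z)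
      = ((n + 1 : ℕ) : ℝ) * (C * (2 * ((n : ℝ) + 1)) ^ (-(1 / z))) := by
        rw [sub_eq_add_neg, Real.rpow_add hn, Real.rpow_one, Real.mul_rpow zero_le_two hn.le]
        push_cast
        ring
    _ ≤ ∑ l ∈ Finset.range (n + 1), μ.real (longReturn z (n + 1 + l)) := by
        simpa using Finset.card_nsmul_le_sum _ _ _ hterm
    _ ≤ μ.real (Ico 0 (preHalf z n)) :=
        hμ.sum_measureReal_longReturn_le_measureReal_Ico hz.le n (n + 1)

end IsAcip

end ReturnTail

/-! ### The Rokhlin tower over the induced map -/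

section Tower

variable {z : ℝ} {μ : Measure ℝ}

/-- The tower map: a point `(x, l)` stands for `f^l x` with `x` in the base, and climbs until its
orbit returns to the base. -/
noncomputable def towerMap (z : ℝ) (p : ℝ × ℕ) : ℝ × ℕ :=
  if (lsv z)^[p.2 + 1] p.1 < 1 / 2 then (p.1, p.2 + 1) else ((lsv z)^[p.2 + 1] p.1, 0)

/-- The tower measure: level `l` carries the restriction of `μ` to the points of the base whose
return takes more than `l` steps. -/
noncomputable def towerMeasure (z : ℝ) (μ : Measure ℝ) : Measure (ℝ × ℕ) :=
  Measure.sum fun l => (μ.restrict (longReturn z l)).map fun x => (x, l)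

/-- The factor map from the tower to the interval. -/
noncomputable def towerProj (z : ℝ) (p : ℝ × ℕ) : ℝ := (lsv z)^[p.2] p.1

/-- The points of the tower that return to the base at the next step. -/
def towerTop (z : ℝ) : Set (ℝ × ℕ) := {p | 1 / 2 ≤ (lsv z)^[p.2 + 1] p.1}

lemma measurable_towerProj (z : ℝ) : Measurable (towerProj z) :=
  measurable_from_prod_countable_left fun l => (lsv_measurable z).iterate l

lemma measurable_lsv_iterate_level_succ (z : ℝ) :
    Measurable fun p : ℝ × ℕ => (lsv z)^[p.2 + 1] p.1 :=
  measurable_from_prod_countable_left fun l => (lsv_measurable z).iterate (l + 1)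

lemma measurableSet_towerTop (z : ℝ) : MeasurableSet (towerTop z) :=
  measurableSet_le measurable_const (measurable_lsv_iterate_level_succ z)

lemma measurable_towerMap (z : ℝ) : Measurable (towerMap z) := by
  refine Measurable.ite (measurableSet_lt (measurable_lsv_iterate_level_succ z) measurable_const)
    (measurable_fst.prodMk ?_) ((measurable_lsv_iterate_level_succ z).prodMk measurable_const)
  exact (measurable_of_countable Nat.succ).comp measurable_snd

lemma towerProj_towerMap (p : ℝ × ℕ) : towerProj z (towerMap z p) = lsv z (towerProj z p) := by
  unfold towerMap towerProj
  split_ifs <;> exact Function.iterate_succ_apply' _ _ _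

lemma towerMap_of_notMem_towerTop {p : ℝ × ℕ} (hp : p ∉ towerTop z) :
    towerMap z p = (p.1, p.2 + 1) :=
  if_pos (not_le.1 hp)

lemma mem_returnCell_of_mem_towerTop (hz : 0 ≤ z) {p : ℝ × ℕ} (hp : p.1 ∈ longReturn z p.2)
    (htop : p ∈ towerTop z) : p.1 ∈ returnCell z p.2 :=
  (mem_returnCell_iff hz _).2 ⟨hp, htop⟩

lemma towerMap_of_mem_towerTop (hz : 0 ≤ z) {p : ℝ × ℕ} (hp : p.1 ∈ longReturn z p.2)
    (htop : p ∈ towerTop z) : towerMap z p = (inducedMap z p.1, 0) := by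
  rw [towerMap, if_neg (not_lt.2 htop),
    inducedMap_eq hz (mem_returnCell_of_mem_towerTop hz hp htop)]

lemma towerMeasure_apply {B : Set (ℝ × ℕ)} (hB : MeasurableSet B) :
    towerMeasure z μ B = ∑' l, μ ((fun x => (x, l)) ⁻¹' B ∩ longReturn z l) := by
  rw [towerMeasure, Measure.sum_apply _ hB]
  refine tsum_congr fun l => ?_
  rw [Measure.map_apply measurable_prodMk_right hB,
    Measure.restrict_apply (measurable_prodMk_right hB)]

lemma ae_towerMeasure_mem_longReturn : ∀ᵐ p ∂towerMeasure z μ, p.1 ∈ longReturn z p.2 := by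
  have hmeas : MeasurableSet {p : ℝ × ℕ | p.1 ∈ longReturn z p.2} :=
    measurableSet_setOfPred.2 <| measurable_from_prod_countable_left fun l =>
      measurableSet_setOfPred.1 (measurableSet_longReturn z l)
  refine (towerMeasure_apply hmeas.compl).trans (ENNReal.tsum_eq_zero.2 fun l => ?_)
  exact (congrArg μ (compl_inter_self _)).trans measure_empty

lemma towerMeasure_setOf_le_level (s : ℕ) :
    towerMeasure z μ {p | s ≤ p.2} = ∑' l, μ (longReturn z (l + s)) := by
  rw [towerMeasure_apply (measurableSet_le measurable_const measurable_snd),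
    ← Summable.sum_add_tsum_nat_add' (k := s) ENNReal.summable, Finset.sum_eq_zero, zero_add]
  · refine tsum_congr fun l => congrArg μ ?_
    exact (congrArg (· ∩ _) (eq_univ_of_forall fun _ => Nat.le_add_left s l)).trans (univ_inter _)
  · intro l hl
    have hempty : (fun x : ℝ => (x, l)) ⁻¹' {p | s ≤ p.2} = ∅ :=
      eq_empty_of_forall_notMem fun _ => (Finset.mem_range.1 hl).not_ge
    rw [hempty, empty_inter, measure_empty]

lemma measure_preimage_towerMap_inter_longReturn (hz : 0 < z) {B : Set (ℝ × ℕ)}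
    (hB : MeasurableSet ((fun x : ℝ => (x, 0)) ⁻¹' B)) (l : ℕ) :
    μ ((fun x => (x, l)) ⁻¹' (towerMap z ⁻¹' B) ∩ longReturn z l) =
      μ ((fun x => (x, l + 1)) ⁻¹' B ∩ longReturn z (l + 1)) +
        μ (inducedMap z ⁻¹' ((fun x : ℝ => (x, 0)) ⁻¹' B) ∩ returnCell z l) := by
  have hcell (x : ℝ) : x ∈ returnCell z l ↔ x ∈ longReturn z l ∧ x ∉ longReturn z (l + 1) := by
    rw [returnCell_eq_sdiff hz.le, Set.mem_sdiff]
  rw [← measure_union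
    (Set.disjoint_left.2 fun x hx hx' => ((hcell x).1 hx'.2).2 hx.2)
    ((inducedMap_measurable hz.le hB).inter (measurableSet_returnCell z l))]
  congr 1
  ext x
  simp only [mem_inter_iff, mem_preimage, mem_union]
  by_cases hx : x ∈ longReturn z l
  · by_cases htop : (x, l) ∈ towerTop z
    · have hxcell := mem_returnCell_of_mem_towerTop hz.le (p := (x, l)) hx htop
      rw [towerMap_of_mem_towerTop hz.le (p := (x, l)) hx htop]
      simp only [hx, hxcell, ((hcell x).1 hxcell).2, and_true, and_false, false_or]
    · have hxcell : x ∉ returnCell z l := fun hmem => htop ((mem_returnCell_iff hz.le l).1 hmem).2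
      have hsucc : x ∈ longReturn z (l + 1) := by_contra fun hmem => hxcell ((hcell x).2 ⟨hx, hmem⟩)
      rw [towerMap_of_notMem_towerTop htop]
      simp only [hx, hxcell, hsucc, and_true, and_false, or_false]
  · have hsucc : x ∉ longReturn z (l + 1) := fun hmem =>
      hx (longReturn_antitone hz.le (Nat.le_succ l) hmem)
    have hxcell : x ∉ returnCell z l := fun hmem => hx ((hcell x).1 hmem).1
    simp only [hx, hxcell, hsucc, and_false, or_false]

namespace IsAcip

lemma tsum_measure_inter_returnCell (hμ : IsAcip z μ) (hz : 0 < z) (hz1 : z ≤ 1) {S : Set ℝ}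
    (hS : MeasurableSet S) : ∑' n, μ (S ∩ returnCell z n) = μ (S ∩ base) := by
  rw [← measure_iUnion (fun m n hmn => (pairwise_disjoint_returnCell hz.le hmn).mono
    inter_subset_right inter_subset_right) fun n => hS.inter (measurableSet_returnCell z n),
    ← inter_iUnion]
  refine measure_congr ?_
  filter_upwards [hμ.ae_mem_iUnion_returnCell_iff hz hz1] with x hx
  exact propext (and_congr_right' hx.symm)

lemma map_fst_restrict_towerTop (hμ : IsAcip z μ) (hz : 0 < z) (hz1 : z ≤ 1) :
    ((towerMeasure z μ).restrict (towerTop z)).map Prod.fst = μ.restrict base := by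
  ext B hB
  rw [Measure.map_apply measurable_fst hB, Measure.restrict_apply (measurable_fst hB),
    Measure.restrict_apply hB,
    towerMeasure_apply ((measurable_fst hB).inter (measurableSet_towerTop z)),
    ← hμ.tsum_measure_inter_returnCell hz hz1 hB]
  refine tsum_congr fun l => congrArg μ (Set.ext fun x => ?_)
  simp only [mem_inter_iff, mem_preimage, mem_returnCell_iff hz.le l, towerTop, mem_ofPred_eq]
  tauto

lemma integral_indicator_towerTop (hμ : IsAcip z μ) (hz : 0 < z) (hz1 : z ≤ 1) {k : ℝ → ℝ}
    (hk : Measurable k) :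
    ∫ p, (towerTop z).indicator (fun p => k p.1) p ∂towerMeasure z μ = ∫ x in base, k x ∂μ := by
  rw [integral_indicator (measurableSet_towerTop z), ← hμ.map_fst_restrict_towerTop hz hz1,
    integral_map measurable_fst.aemeasurable hk.aestronglyMeasurable]

lemma measurePreserving_towerProj (hμ : IsAcip z μ) (hz : 0 < z) (hz1 : z ≤ 1) :
    MeasurePreserving (towerProj z) (towerMeasure z μ) μ := by
  refine ⟨measurable_towerProj z, Measure.ext fun B hB => ?_⟩
  rw [Measure.map_apply (measurable_towerProj z) hB,
    towerMeasure_apply (measurable_towerProj z hB),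
    ← hμ.tsum_measure_preimage_inter_longReturn hz hz1 hB]
  rfl

lemma isProbabilityMeasure_towerMeasure (hμ : IsAcip z μ) (hz : 0 < z) (hz1 : z ≤ 1) :
    IsProbabilityMeasure (towerMeasure z μ) := by
  have := hμ.prob
  exact ⟨by rw [← measure_univ (μ := μ),
    ← (hμ.measurePreserving_towerProj hz hz1).measure_preimage nullMeasurableSet_univ,
    preimage_univ]⟩

lemma measurePreserving_towerMap (hμ : IsAcip z μ) (hz : 0 < z) (hz1 : z ≤ 1) :
    MeasurePreserving (towerMap z) (towerMeasure z μ) (towerMeasure z μ) := by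
  refine ⟨measurable_towerMap z, Measure.ext fun B hB => ?_⟩
  have hB0 : MeasurableSet ((fun x : ℝ => (x, 0)) ⁻¹' B) := measurable_prodMk_right hB
  have hground := congrArg (fun ν => ν ((fun x : ℝ => (x, 0)) ⁻¹' B)) (hμ.map_inducedMap hz hz1)
  simp only [Measure.map_apply (inducedMap_measurable hz.le) hB0, Measure.restrict_apply hB0,
    Measure.restrict_apply (inducedMap_measurable hz.le hB0)] at hground
  rw [Measure.map_apply (measurable_towerMap z) hB,
    towerMeasure_apply (measurable_towerMap z hB), towerMeasure_apply hB,
    tsum_congr (measure_preimage_towerMap_inter_longReturn hz hB0), ENNReal.tsum_add,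
    hμ.tsum_measure_inter_returnCell hz hz1 (inducedMap_measurable hz.le hB0), hground,
    tsum_eq_zero_add' (f := fun l => μ ((fun x => (x, l)) ⁻¹' B ∩ longReturn z l))
      ENNReal.summable, add_comm, longReturn_zero]

lemma exists_towerMeasure_real_setOf_le_level_le (hμ : IsAcip z μ) (hz : 0 < z) (hz1 : z < 1) :
    ∃ C, 0 < C ∧ ∀ s : ℕ, 1 ≤ s →
      (towerMeasure z μ).real {p | s ≤ p.2} ≤ C * (s : ℝ) ^ (1 - 1 / z) := by
  have := hμ.prob
  obtain ⟨C, hC, htail⟩ := hμ.exists_sum_measureReal_longReturn_le hz hz1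
  refine ⟨C, hC, fun s hs => ?_⟩
  rw [Measure.real, towerMeasure_setOf_le_level]
  refine ENNReal.toReal_le_of_le_ofReal (by positivity)
    (ENNReal.tsum_le_of_sum_range_le fun N => ?_)
  rw [← ENNReal.ofReal_toReal (ENNReal.sum_lt_top.2 fun _ _ => measure_lt_top _ _).ne,
    ENNReal.toReal_sum fun _ _ => measure_ne_top _ _]
  exact ENNReal.ofReal_le_ofReal (htail s N hs)

end IsAcip

end Tower

/-! ### Truncated excursion sums -/

/-- A bounded observable on the line which is Hölder with exponent `r` and constant `H`. -/
structure IsHolderObservable (φ : ℝ → ℝ) (B H r : ℝ) : Prop where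
  exponent_pos : 0 < r
  exponent_le_one : r ≤ 1
  bound_pos : 0 < B
  const_nonneg : 0 ≤ H
  continuous : Continuous φ
  abs_le : ∀ x, |φ x| ≤ B
  abs_sub_le : ∀ x y, |φ x - φ y| ≤ H * |x - y| ^ r

/-- The sum of `φ` along the first `s` steps of the excursion of `x` from the base, or along the
whole excursion when it is shorter. -/
noncomputable def excursionSum (z : ℝ) (φ : ℝ → ℝ) (s : ℕ) (x : ℝ) : ℝ :=
  lsvBirkhoff z φ (min (returnIndex z x + 1) s) x

/-- The part of the truncated excursion sum accumulated before the current level of the tower. -/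
noncomputable def partialExcursion (z : ℝ) (φ : ℝ → ℝ) (s : ℕ) (p : ℝ × ℕ) : ℝ :=
  lsvBirkhoff z φ (min p.2 s) p.1

/-- The lift of `φ` to the tower, set to zero from level `s` on. -/
noncomputable def truncatedLift (z : ℝ) (φ : ℝ → ℝ) (s : ℕ) : ℝ × ℕ → ℝ :=
  {p | p.2 < s}.indicator fun p => φ (towerProj z p)

section Excursion

variable {z B H r : ℝ} {μ : Measure ℝ} {φ : ℝ → ℝ}

lemma measurable_lsvBirkhoff (z : ℝ) (hφ : Measurable φ) (n : ℕ) :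
    Measurable (lsvBirkhoff z φ n) :=
  Finset.measurable_sum _ fun j _ => hφ.comp ((lsv_measurable z).iterate j)

lemma measurable_partialExcursion (z : ℝ) (hφ : Measurable φ) (s : ℕ) :
    Measurable (partialExcursion z φ s) :=
  measurable_from_prod_countable_left fun l => measurable_lsvBirkhoff z hφ (min l s)

lemma measurable_excursionSum (hz : 0 ≤ z) (hφ : Measurable φ) (s : ℕ) :
    Measurable (excursionSum z φ s) := by
  have hlevel : Measurable fun p : ℝ × ℕ => lsvBirkhoff z φ (min (p.2 + 1) s) p.1 :=
    measurable_from_prod_countable_left fun l => measurable_lsvBirkhoff z hφ (min (l + 1) s)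
  exact hlevel.comp (measurable_id.prodMk (returnIndex_measurable hz))

lemma measurableSet_level_lt (s : ℕ) : MeasurableSet {p : ℝ × ℕ | p.2 < s} :=
  measurableSet_lt measurable_snd measurable_const

lemma truncatedLift_eq_coboundary_add (hz : 0 ≤ z) (φ : ℝ → ℝ) (s : ℕ) {p : ℝ × ℕ}
    (hp : p.1 ∈ longReturn z p.2) :
    truncatedLift z φ s p = partialExcursion z φ s (towerMap z p) - partialExcursion z φ s p +
      (towerTop z).indicator (fun p => excursionSum z φ s p.1) p := by
  have hstep : lsvBirkhoff z φ (min (p.2 + 1) s) p.1 =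
      partialExcursion z φ s p + truncatedLift z φ s p := by
    rw [partialExcursion]
    rcases lt_or_ge p.2 s with hlt | hge
    · rw [truncatedLift, indicator_of_mem (by exact hlt), min_eq_left hlt, min_eq_left hlt.le]
      exact Finset.sum_range_succ _ _
    · rw [truncatedLift, indicator_of_notMem (by exact hge.not_gt), min_eq_right hge,
        min_eq_right (hge.trans (Nat.le_succ _)), add_zero]
  by_cases htop : p ∈ towerTop z
  · have hreset : partialExcursion z φ s (inducedMap z p.1, 0) = 0 := by
      simp [partialExcursion, lsvBirkhoff]
    rw [indicator_of_mem htop, towerMap_of_mem_towerTop hz hp htop, hreset, excursionSum,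
      returnIndex_eq hz (mem_returnCell_of_mem_towerTop hz hp htop), hstep]
    ring
  · have hclimb : partialExcursion z φ s (p.1, p.2 + 1) =
        lsvBirkhoff z φ (min (p.2 + 1) s) p.1 := rfl
    rw [indicator_of_notMem htop, towerMap_of_notMem_towerTop htop, hclimb, hstep]
    ring

namespace IsHolderObservable

variable (hφ : IsHolderObservable φ B H r)
include hφ

lemma measurable : Measurable φ := hφ.continuous.measurable

lemma abs_lsvBirkhoff_le (n : ℕ) (x : ℝ) : |lsvBirkhoff z φ n x| ≤ B * n :=
  (Finset.abs_sum_le_sum_abs _ _).trans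
    ((Finset.sum_le_card_nsmul _ _ B fun _ _ => hφ.abs_le _).trans_eq (by simp [mul_comm]))

lemma abs_lsvBirkhoff_min_le (m n : ℕ) (x : ℝ) : |lsvBirkhoff z φ (min m n) x| ≤ B * n :=
  (hφ.abs_lsvBirkhoff_le _ x).trans
    (mul_le_mul_of_nonneg_left (by exact_mod_cast min_le_right m n) hφ.bound_pos.le)

lemma abs_excursionSum_le (s : ℕ) (x : ℝ) : |excursionSum z φ s x| ≤ B * s :=
  hφ.abs_lsvBirkhoff_min_le _ s x

lemma abs_partialExcursion_le (s : ℕ) (p : ℝ × ℕ) : |partialExcursion z φ s p| ≤ B * s :=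
  hφ.abs_lsvBirkhoff_min_le _ s p.1

lemma abs_excursionSum_le_returnIndex (s : ℕ) (x : ℝ) :
    |excursionSum z φ s x| ≤ B * (returnIndex z x + 1) := by
  rw [excursionSum, min_comm, ← Nat.cast_add_one]
  exact hφ.abs_lsvBirkhoff_min_le s _ x

lemma abs_apply_lsv_iterate_inducedInv_sub_le (hz : 0 ≤ z) {x y : ℝ} (hx : x ∈ base)
    (hy : y ∈ base) {j n : ℕ} (hj : j < n + 1) :
    |φ ((lsv z)^[j] (inducedInv z n x)) - φ ((lsv z)^[j] (inducedInv z n y))| ≤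
      H * |x - y| ^ r := by
  refine (hφ.abs_sub_le _ _).trans (mul_le_mul_of_nonneg_left
    (Real.rpow_le_rpow (abs_nonneg _) ?_ hφ.exponent_pos.le) hφ.const_nonneg)
  cases j with
  | zero =>
    exact (abs_inducedInv_sub_le hz hx hy n).trans (half_le_self (abs_nonneg _))
  | succ j =>
    obtain ⟨m, rfl⟩ := Nat.exists_eq_add_of_le' (Nat.lt_succ_iff.1 hj |> Nat.le_of_succ_le)
    rw [lsv_iterate_succ_inducedInv hz hx, lsv_iterate_succ_inducedInv hz hy]
    exact abs_leftInv_iterate_sub_le hz (base_subset_Ioo hx) (base_subset_Ioo hy) m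

lemma abs_excursionSum_inducedInv_sub_le (hz : 0 ≤ z) (s n : ℕ) {x y : ℝ} (hx : x ∈ base)
    (hy : y ∈ base) :
    |excursionSum z φ s (inducedInv z n x) - excursionSum z φ s (inducedInv z n y)| ≤
      H * ((n : ℝ) + 1) * |x - y| ^ r := by
  rw [excursionSum, excursionSum, returnIndex_eq hz (inducedInv_mem_returnCell hz hx n),
    returnIndex_eq hz (inducedInv_mem_returnCell hz hy n), lsvBirkhoff, lsvBirkhoff,
    ← Finset.sum_sub_distrib]
  have hH := hφ.const_nonneg
  calc |∑ j ∈ Finset.range (min (n + 1) s),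
        (φ ((lsv z)^[j] (inducedInv z n x)) - φ ((lsv z)^[j] (inducedInv z n y)))|
      ≤ ∑ _ ∈ Finset.range (min (n + 1) s), H * |x - y| ^ r :=
        (Finset.abs_sum_le_sum_abs _ _).trans <| Finset.sum_le_sum fun j hj =>
          hφ.abs_apply_lsv_iterate_inducedInv_sub_le hz hx hy
            ((Finset.mem_range.1 hj).trans_le (min_le_left _ _))
    _ = (min (n + 1) s : ℕ) * (H * |x - y| ^ r) := by simp
    _ ≤ ((n : ℝ) + 1) * (H * |x - y| ^ r) := by
        gcongr
        exact_mod_cast min_le_left _ _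
    _ = H * ((n : ℝ) + 1) * |x - y| ^ r := by ring

lemma integral_truncatedLift (hμ : IsAcip z μ) (hz : 0 < z) (hz1 : z ≤ 1) (s : ℕ) :
    ∫ p, truncatedLift z φ s p ∂towerMeasure z μ = ∫ x in base, excursionSum z φ s x ∂μ := by
  have := hμ.isProbabilityMeasure_towerMeasure hz hz1
  have hT := hμ.measurePreserving_towerMap hz hz1
  have hpartial := measurable_partialExcursion z hφ.measurable s
  have hexc := measurable_excursionSum hz.le hφ.measurable s
  have hpartial_int : Integrable (partialExcursion z φ s) (towerMeasure z μ) :=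
    .of_bound hpartial.aestronglyMeasurable _ (ae_of_all _ (hφ.abs_partialExcursion_le s))
  have hshift_int :
      Integrable (fun p => partialExcursion z φ s (towerMap z p)) (towerMeasure z μ) :=
    (hT.integrable_comp hpartial.aestronglyMeasurable).2 hpartial_int
  have hexc_int : Integrable (fun p : ℝ × ℕ => excursionSum z φ s p.1) (towerMeasure z μ) :=
    .of_bound (hexc.comp measurable_fst).aestronglyMeasurable (B * s)
      (ae_of_all _ fun p => hφ.abs_excursionSum_le s p.1)
  calc ∫ p, truncatedLift z φ s p ∂towerMeasure z μ
      = ∫ p, (partialExcursion z φ s (towerMap z p) - partialExcursion z φ s p +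
          (towerTop z).indicator (fun p => excursionSum z φ s p.1) p) ∂towerMeasure z μ :=
        integral_congr_ae <| ae_towerMeasure_mem_longReturn.mono fun p hp =>
          truncatedLift_eq_coboundary_add hz.le φ s hp
    _ = ∫ p, (towerTop z).indicator (fun p => excursionSum z φ s p.1) p ∂towerMeasure z μ := by
        have hadd := integral_add (hshift_int.sub hpartial_int)
          (hexc_int.indicator (measurableSet_towerTop z))
        simp only [Pi.sub_apply] at hadd
        rw [hadd, integral_sub hshift_int hpartial_int,
          integral_comp_of_measurePreserving hT hpartial.aestronglyMeasurable, sub_self, zero_add]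
    _ = ∫ x in base, excursionSum z φ s x ∂μ := hμ.integral_indicator_towerTop hz hz1 hexc

lemma exists_abs_setIntegral_excursionSum_le (hμ : IsAcip z μ) (hz : 0 < z) (hz1 : z < 1)
    (hmean : ∫ x, φ x ∂μ = 0) : ∃ C, 0 < C ∧ ∀ s : ℕ, 1 ≤ s →
      |∫ x in base, excursionSum z φ s x ∂μ| ≤ C * (s : ℝ) ^ (1 - 1 / z) := by
  have := hμ.isProbabilityMeasure_towerMeasure hz hz1.le
  obtain ⟨C, hC, hlevel⟩ := hμ.exists_towerMeasure_real_setOf_le_level_le hz hz1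
  have hB := hφ.bound_pos
  have hproj := hμ.measurePreserving_towerProj hz hz1.le
  have hlift : Integrable (fun p => φ (towerProj z p)) (towerMeasure z μ) :=
    .of_bound (hφ.measurable.comp (measurable_towerProj z)).aestronglyMeasurable _
      (ae_of_all _ fun _ => hφ.abs_le _)
  refine ⟨B * C, by positivity, fun s hs => ?_⟩
  have hcompl : {p : ℝ × ℕ | p.2 < s}ᶜ = {p | s ≤ p.2} := by ext; simp
  have hsplit := integral_add_compl (measurableSet_level_lt s) hlift
  rw [← integral_indicator (measurableSet_level_lt s), hcompl,
    integral_comp_of_measurePreserving hproj hφ.measurable.aestronglyMeasurable, hmean] at hsplit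
  rw [← hφ.integral_truncatedLift hμ hz hz1.le, truncatedLift, eq_neg_of_add_eq_zero_left hsplit,
    abs_neg, mul_assoc]
  calc |∫ p in {p | s ≤ p.2}, φ (towerProj z p) ∂towerMeasure z μ|
      ≤ B * (towerMeasure z μ).real {p | s ≤ p.2} :=
        norm_setIntegral_le_of_norm_le_const (f := fun p => φ (towerProj z p))
          (measure_lt_top _ _) fun _ _ => hφ.abs_le _
    _ ≤ B * (C * (s : ℝ) ^ (1 - 1 / z)) := by
        gcongr
        exact hlevel s hs

end IsHolderObservable

end Excursion

/-! ### Gordin's martingale approximation -/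

/-- `M` is almost a reverse martingale difference for the induced map: its correlation with a
bounded function of the image point is at most `ε` times the bound of that function. -/
def IsApproxMartingaleDiff (z : ℝ) (μ : Measure ℝ) (M : ℝ → ℝ) (ε : ℝ) : Prop :=
  ∀ (k : ℝ → ℝ) (D : ℝ), Measurable k → (∀ x, |k x| ≤ D) →
    |∫ x in base, M x * k (inducedMap z x) ∂μ| ≤ ε * D

/-- The images of `w` under the iterates of the transfer operator decay geometrically. -/
structure HasTransferDecay (z : ℝ) (w : ℝ → ℝ) (Q θ : ℝ) : Prop where
  continuousOn : ∀ j, ContinuousOn ((transfer z)^[j + 1] w) base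
  abs_le : ∀ j, ∀ y ∈ base, |(transfer z)^[j + 1] w y| ≤ Q * θ ^ j

/-- Gordin's correction term, for an observable whose product with the invariant density `g` is
`w`: the partial sum of the resolvent of the transfer operator normalized by `g`. -/
noncomputable def gordinCorrection (z : ℝ) (g w : ℝ → ℝ) (N : ℕ) : ℝ → ℝ :=
  base.indicator fun y => (∑ j ∈ Finset.range N, (transfer z)^[j + 1] w y) / g y

/-- `V` is a function on the base which is Hölder on each return cell, in the coordinate of the
image point, with size and Hölder constant at most proportional to the return time. -/
structure IsCellHolder (z r B H : ℝ) (V : ℝ → ℝ) : Prop where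
  abs_le : ∀ n, ∀ y ∈ base, |V (inducedInv z n y)| ≤ B * ((n : ℝ) + 1)
  abs_sub_le : ∀ n, ∀ x ∈ base, ∀ y ∈ base,
    |V (inducedInv z n x) - V (inducedInv z n y)| ≤ H * ((n : ℝ) + 1) * |x - y| ^ r

section Correction

variable {z r K Q θ : ℝ} {μ : Measure ℝ} {f g k w : ℝ → ℝ}

lemma IsBaseDensity.integrableOn_mul (hg : IsBaseDensity μ r K g) (hf : IntegrableOn f base μ) :
    IntegrableOn (fun x => f x * g x) base := by
  rw [IntegrableOn, hg.restrict_eq, integrable_withDensity_iff_integrable_smul'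
    hg.measurable.ennreal_ofReal (ae_of_all _ fun _ => ENNReal.ofReal_lt_top)] at hf
  simpa only [IntegrableOn, ENNReal.toReal_ofReal (hg.nonneg _), smul_eq_mul, mul_comm] using hf

lemma IsBaseDensity.setIntegral_eq (hg : IsBaseDensity μ r K g) (f : ℝ → ℝ) :
    ∫ x in base, f x ∂μ = ∫ x in base, f x * g x := by
  rw [hg.restrict_eq, integral_withDensity_eq_integral_toReal_smul hg.measurable.ennreal_ofReal
    (ae_of_all _ fun _ => ENNReal.ofReal_lt_top)]
  exact integral_congr_ae <| ae_of_all _ fun x => by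
    simp only [ENNReal.toReal_ofReal (hg.nonneg x), smul_eq_mul, mul_comm]

lemma IsBaseDensity.setIntegral_mul_comp_inducedMap (hg : IsBaseDensity μ r K g) (hz : 0 < z)
    (hz1 : z ≤ 1) (hfk : IntegrableOn (fun x => f x * k (inducedMap z x)) base μ) :
    ∫ x in base, f x * k (inducedMap z x) ∂μ =
      ∫ y in base, transfer z (fun x => f x * g x) y * k y := by
  have hint := hg.integrableOn_mul hfk
  simp only [mul_right_comm (f _)] at hint
  rw [hg.setIntegral_eq, ← LSV.setIntegral_mul_comp_inducedMap hz hz1 hint]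
  simp only [mul_right_comm (f _)]

namespace HasTransferDecay

variable (hw : HasTransferDecay z w Q θ)
include hw

lemma integrableOn_mul (hk : Measurable k) {D : ℝ} (hkD : ∀ x, |k x| ≤ D) (j : ℕ) :
    IntegrableOn (fun y => (transfer z)^[j + 1] w y * k y) base :=
  (BoundedOnBase.integrableOn ⟨_, hw.abs_le j⟩
    ((hw.continuousOn j).aestronglyMeasurable measurableSet_base)).mul_bdd (c := D)
      hk.aestronglyMeasurable (ae_of_all _ hkD)

lemma setIntegral_mul_comp_inducedMap (hz : 0 < z) (hz1 : z ≤ 1) (hk : Measurable k) {D : ℝ}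
    (hkD : ∀ x, |k x| ≤ D) (j : ℕ) :
    ∫ y in base, (transfer z)^[j + 1] w y * k (inducedMap z y) =
      ∫ y in base, (transfer z)^[j + 1 + 1] w y * k y := by
  rw [LSV.setIntegral_mul_comp_inducedMap hz hz1
    (hw.integrableOn_mul (hk.comp (inducedMap_measurable hz.le)) (fun _ => hkD _) j),
    Function.iterate_succ_apply' _ (j + 1)]

lemma measurable_gordinCorrection (hr : 0 < r) (hg : IsBaseDensity μ r K g) (N : ℕ) :
    Measurable (gordinCorrection z g w N) := by
  classical
  have hcont : ContinuousOn
      (fun y => (∑ j ∈ Finset.range N, (transfer z)^[j + 1] w y) / g y) base :=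
    (continuousOn_finsetSum _ fun j _ => hw.continuousOn j).div (hg.logHolder.continuousOn hr)
      fun y hy => (hg.pos y hy).ne'
  rw [gordinCorrection, ← piecewise_eq_indicator]
  exact hcont.measurable_piecewise continuousOn_const measurableSet_base

lemma abs_gordinCorrection_le {c : ℝ} (hc : 0 < c) (hgc : ∀ y ∈ base, c ≤ g y) (hQ : 0 ≤ Q)
    (hθ : 0 ≤ θ) (hθ1 : θ < 1) (N : ℕ) (x : ℝ) :
    |gordinCorrection z g w N x| ≤ Q * (1 - θ)⁻¹ / c := by
  have := sub_pos.2 hθ1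
  by_cases hx : x ∈ base
  · have hsum : |∑ j ∈ Finset.range N, (transfer z)^[j + 1] w x| ≤ Q * (1 - θ)⁻¹ :=
      calc |∑ j ∈ Finset.range N, (transfer z)^[j + 1] w x|
          ≤ ∑ j ∈ Finset.range N, Q * θ ^ j :=
            (Finset.abs_sum_le_sum_abs _ _).trans (Finset.sum_le_sum fun j _ => hw.abs_le j x hx)
        _ = Q * ∑ j ∈ Finset.range N, θ ^ j := (Finset.mul_sum ..).symm
        _ ≤ Q * (1 - θ)⁻¹ := by
            rw [← tsum_geometric_of_lt_one hθ hθ1]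
            gcongr
            exact (summable_geometric_of_lt_one hθ hθ1).sum_le_tsum _ fun _ _ => by positivity
    rw [gordinCorrection, indicator_of_mem hx, abs_div, abs_of_pos (hc.trans_le (hgc x hx))]
    exact div_le_div₀ (by positivity) hsum hc (hgc x hx)
  · rw [gordinCorrection, indicator_of_notMem hx, abs_zero]
    positivity

lemma setIntegral_gordinCorrection_mul (hg : IsBaseDensity μ r K g) (hk : Measurable k) {D : ℝ}
    (hkD : ∀ x, |k x| ≤ D) (N : ℕ) :
    ∫ x in base, gordinCorrection z g w N x * k x ∂μ =
      ∑ j ∈ Finset.range N, ∫ y in base, (transfer z)^[j + 1] w y * k y := by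
  rw [hg.setIntegral_eq, ← integral_finsetSum _ fun j _ => hw.integrableOn_mul hk hkD j]
  refine setIntegral_congr_fun measurableSet_base fun y hy => ?_
  simp only [gordinCorrection, indicator_of_mem hy, ← Finset.sum_mul]
  field_simp [(hg.pos y hy).ne']

end HasTransferDecay

lemma setIntegral_add_gordinCorrection_sub_comp_mul (hμ : IsAcip z μ) (hz : 0 < z)
    (hz1 : z ≤ 1) (hr : 0 < r) (hg : IsBaseDensity μ r K g) (hfi : IntegrableOn f base μ)
    (hw : HasTransferDecay z w Q θ) (hfw : ∀ x, f x * g x = w x) (hk : Measurable k) {D : ℝ}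
    (hkD : ∀ x, |k x| ≤ D) {N : ℕ} {X : ℝ} (hX : ∀ x, |gordinCorrection z g w N x| ≤ X) :
    ∫ x in base, (f x + gordinCorrection z g w N x - gordinCorrection z g w N (inducedMap z x)) *
        k (inducedMap z x) ∂μ =
      ∫ y in base, (transfer z)^[N + 1] w y * k y := by
  have := hμ.prob
  set χ := gordinCorrection z g w N
  have hF := inducedMap_measurable hz.le
  have hχ : Measurable χ := hw.measurable_gordinCorrection hr hg N
  have hkF : Measurable fun x => k (inducedMap z x) := hk.comp hF
  have hfk : Integrable (fun x => f x * k (inducedMap z x)) (μ.restrict base) :=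
    Integrable.mul_bdd (c := D) hfi hkF.aestronglyMeasurable (ae_of_all _ fun _ => hkD _)
  have hbdd {h : ℝ → ℝ} (hh : Measurable h) (hhX : ∀ x, |h x| ≤ X) :
      Integrable (fun x => h x * k (inducedMap z x)) (μ.restrict base) :=
    (Integrable.of_bound hh.aestronglyMeasurable X (ae_of_all _ hhX)).mul_bdd (c := D)
      hkF.aestronglyMeasurable (ae_of_all _ fun _ => hkD _)
  have hf_eq : ∫ x in base, f x * k (inducedMap z x) ∂μ =
      ∫ y in base, (transfer z)^[0 + 1] w y * k y := by
    rw [hg.setIntegral_mul_comp_inducedMap hz hz1 hfk, funext hfw]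
    rfl
  have hχ_eq : ∫ x in base, χ x * k (inducedMap z x) ∂μ =
      ∑ j ∈ Finset.range N, ∫ y in base, (transfer z)^[j + 1 + 1] w y * k y := by
    rw [hw.setIntegral_gordinCorrection_mul hg hkF (fun _ => hkD _)]
    exact Finset.sum_congr rfl fun j _ => hw.setIntegral_mul_comp_inducedMap hz hz1 hk hkD j
  have hχF_eq : ∫ x in base, χ (inducedMap z x) * k (inducedMap z x) ∂μ =
      ∑ j ∈ Finset.range N, ∫ y in base, (transfer z)^[j + 1] w y * k y := by
    rw [← hw.setIntegral_gordinCorrection_mul hg hk hkD]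
    exact integral_comp_of_measurePreserving (f := fun x => χ x * k x)
      ⟨hF, hμ.map_inducedMap hz hz1⟩ (hχ.mul hk).aestronglyMeasurable
  have htelescope := Finset.sum_range_sub
    (fun j => ∫ y in base, (transfer z)^[j + 1] w y * k y) N
  rw [Finset.sum_sub_distrib, sub_eq_sub_iff_add_eq_add] at htelescope
  have hfχ := integral_add hfk (hbdd hχ hX)
  have hsub := integral_sub (hfk.add (hbdd hχ hX)) (hbdd (hχ.comp hF) fun _ => hX _)
  simp only [Pi.add_apply, Function.comp_apply] at hsub
  simp only [sub_mul, add_mul]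
  rw [hsub, hfχ, hf_eq, hχ_eq, hχF_eq]
  linarith

end Correction

section Gordin

variable {z r B H K : ℝ} {μ : Measure ℝ} {f g V : ℝ → ℝ}

lemma logHolder_one_of_abs_sub_le (hH : 0 ≤ H) (hf : ∀ x ∈ base, H ≤ f x)
    (hholder : ∀ x ∈ base, ∀ y ∈ base, |f x - f y| ≤ H * |x - y| ^ r) : LogHolder r 1 f := by
  refine ⟨fun x hx => hH.trans (hf x hx), fun x hx y hy => ?_⟩
  calc f x ≤ H * |x - y| ^ r + f y := by linarith [(abs_le.1 (hholder x hx y hy)).2]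
    _ ≤ f y * |x - y| ^ r + f y := by gcongr; exact hf y hy
    _ = (1 * |x - y| ^ r + 1) * f y := by ring
    _ ≤ Real.exp (1 * |x - y| ^ r) * f y :=
        mul_le_mul_of_nonneg_right (Real.add_one_le_exp _) (hH.trans (hf y hy))

lemma IsConeConstant.exists_one_add_le (hr : 0 < r) :
    ∃ K, IsConeConstant r K ∧ 1 + K * (1 / 2) ^ r + 4 ≤ K := by
  obtain ⟨K, hK⟩ := exists_isConeConstant hr
  refine ⟨2 * K, hK.mono hr (by linarith [hK.pos hr]), ?_⟩
  unfold IsConeConstant at hK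
  linarith

namespace IsCellHolder

variable (hV : IsCellHolder z r B H V)
include hV

lemma bound_nonneg : 0 ≤ B := by
  simpa using (abs_nonneg _).trans (hV.abs_le 0 _ half_mem_base)

lemma logHolder_add (hH : 0 ≤ H) (n : ℕ) :
    LogHolder r 1 fun y => V (inducedInv z n y) + (B + H) * ((n : ℝ) + 1) := by
  refine logHolder_one_of_abs_sub_le (H := H * ((n : ℝ) + 1)) (by positivity) (fun y hy => ?_)
    fun x hx y hy => ?_
  · linarith [(_root_.abs_le.1 (hV.abs_le n y hy)).1, add_mul B H ((n : ℝ) + 1)]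
  · rw [add_sub_add_right_eq_sub]
    exact hV.abs_sub_le n x hx y hy

lemma transfer_mul_eqOn_sub (hz : 0 < z) (hz1 : z < 1) (hH : 0 ≤ H) (hg : BoundedOnBase g) :
    EqOn (transfer z fun x => V x * g x)
      (fun y =>
        weightedTransfer z (fun n y => V (inducedInv z n y) + (B + H) * ((n : ℝ) + 1)) g y -
          weightedTransfer z (fun n _ => (B + H) * ((n : ℝ) + 1)) g y) base := by
  intro y hy
  have hB := hV.bound_nonneg
  have hshift (n : ℕ) : |(B + H) * ((n : ℝ) + 1)| ≤ (B + H) * (n + 1) :=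
    (abs_of_nonneg (by positivity)).le
  have hsum (n : ℕ) (y : ℝ) (hy : y ∈ base) :
      |V (inducedInv z n y) + (B + H) * ((n : ℝ) + 1)| ≤ (B + (B + H)) * (n + 1) :=
    ((abs_add_le _ _).trans (add_le_add (hV.abs_le n y hy) (hshift n))).trans_eq (add_mul ..).symm
  simp only [transfer, weightedTransfer]
  rw [← (summable_weightedTransfer hz hz1 hsum hg hy).tsum_sub
    (summable_weightedTransfer hz hz1 (fun n _ _ => hshift n) hg hy)]
  exact tsum_congr fun n => by ring

end IsCellHolder

-- `V` changes sign; adding a multiple of the return time to both terms of the difference places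
-- them in the cone on which the transfer operator contracts.
lemma exists_logHolder_sub_eqOn_transfer_mul (hz : 0 < z) (hz1 : z < 1) (hr : 0 ≤ r) (hr1 : r ≤ 1)
    (hB : 0 ≤ B) (hH : 0 ≤ H) (hK : 0 ≤ K) (hK1 : 1 + K * (1 / 2) ^ r + 4 ≤ K)
    (hg : LogHolder r K g) :
    ∃ Q : ℝ, 0 < Q ∧ ∀ V, IsCellHolder z r B H V → ∃ G₁ G₂ : ℝ → ℝ,
      LogHolder r K G₁ ∧ LogHolder r K G₂ ∧ (∀ y ∈ base, |G₁ y| ≤ Q) ∧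
      EqOn (transfer z fun x => V x * g x) (fun y => G₁ y - G₂ y) base := by
  obtain ⟨C, hC, hbound⟩ := exists_abs_weightedTransfer_le hz hz1
  obtain ⟨D, hD⟩ := hg.boundedOnBase hr hK
  have hD0 : 0 ≤ D := (abs_nonneg _).trans (hD _ half_mem_base)
  refine ⟨C * (B + (B + H)) * D + 1, by positivity, fun V hV =>
    ⟨_, _, ?_, ?_, fun y hy => ?_, hV.transfer_mul_eqOn_sub hz hz1 hH ⟨D, hD⟩⟩⟩
  · refine (LogHolder.weightedTransfer hz hz1 hr hr1 (c := B + (B + H)) hK hg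
      (hV.logHolder_add hH) fun n y hy => ?_).mono hK1
    linarith [(abs_le.1 (hV.abs_le n y hy)).2, add_mul B (B + H) ((n : ℝ) + 1)]
  · refine (LogHolder.weightedTransfer hz hz1 hr hr1 (c := B + H) hK hg (fun n => ?_)
      fun n y _ => le_rfl).mono hK1
    exact logHolder_one_of_abs_sub_le le_rfl (fun _ _ => by positivity) fun _ _ _ _ => by simp
  · refine (hbound _ g _ D (by positivity) hD0 (fun n y hy => ?_) hD y hy).trans
      (le_add_of_nonneg_right zero_le_one)
    refine (abs_add_le _ _).trans ?_
    rw [abs_of_nonneg (by positivity : 0 ≤ (B + H) * ((n : ℝ) + 1)), add_mul B (B + H)]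
    exact add_le_add_left (hV.abs_le n y hy) _

lemma exists_hasTransferDecay (hz : 0 < z) (hz1 : z < 1) (hr : 0 < r) (hr1 : r ≤ 1) (hB : 0 ≤ B)
    (hH : 0 ≤ H) (hK : IsConeConstant r K) (hK1 : 1 + K * (1 / 2) ^ r + 4 ≤ K)
    (hg : LogHolder r K g) :
    ∃ Q : ℝ, 0 < Q ∧ ∀ V, IsCellHolder z r B H V → IntegrableOn (fun x => V x * g x) base →
      ∫ x in base, V x * g x = 0 →
      HasTransferDecay z (fun x => V x * g x) Q (1 - contractionGap r K) := by
  have hK0 := (hK.pos hr).le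
  have hθ := contractionGap_lt_one hr hK
  obtain ⟨Q, hQ, hsplit⟩ :=
    exists_logHolder_sub_eqOn_transfer_mul hz hz1 hr.le hr1 hB hH hK0 hK1 hg
  refine ⟨2 * Real.exp K * Q, by positivity, fun V hV hint hmean => ?_⟩
  obtain ⟨G₁, G₂, hG₁, hG₂, hG₁Q, heq⟩ := hsplit V hV
  have hiter (j : ℕ) : EqOn ((transfer z)^[j + 1] fun x => V x * g x)
      (fun y => (transfer z)^[j] G₁ y - (transfer z)^[j] G₂ y) base :=
    (transfer_iterate_congr hz.le heq j).trans (transfer_iterate_sub hz hz1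
      (hG₁.boundedOnBase hr.le hK0) (hG₂.boundedOnBase hr.le hK0) j)
  have hG : ∫ y in base, G₁ y = ∫ y in base, G₂ y := by
    have htransfer := integral_transfer hz hz1.le hint
    rwa [hmean, setIntegral_congr_fun measurableSet_base heq, integral_sub
      (hG₁.integrableOn hr hK0) (hG₂.integrableOn hr hK0), sub_eq_zero] at htransfer
  have hG₁_int : ∫ y in base, G₁ y ≤ Q := by
    have hle := (le_abs_self _).trans (norm_setIntegral_le_of_norm_le_const (μ := volume)
      (s := base) (f := G₁) (measure_lt_top_of_subset base_subset_Ico (by simp)) hG₁Q)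
    rw [volume_real_base] at hle
    linarith
  refine ⟨fun j => ContinuousOn.congr ?_ (hiter j), fun j y hy => ?_⟩
  · exact ((hG₁.transfer_iterate hz hz1 hr hr1 hK j).continuousOn hr).sub
      ((hG₂.transfer_iterate hz hz1 hr hr1 hK j).continuousOn hr)
  · rw [hiter j hy]
    refine (hG₁.abs_transfer_iterate_sub_le hz hz1 hr hr1 hK hG₂ hG j hy).trans ?_
    rw [mul_right_comm]
    have := sub_pos.2 hθ
    gcongr

lemma IsAcip.exists_gordin (hμ : IsAcip z μ) (hz : 0 < z) (hz1 : z < 1) (hr : 0 < r)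
    (hr1 : r ≤ 1) (hB : 0 ≤ B) (hH : 0 ≤ H) :
    ∃ X C θ : ℝ, 0 < X ∧ 0 < C ∧ 0 < θ ∧ θ < 1 ∧ ∀ V, IsCellHolder z r B H V →
      IntegrableOn V base μ → ∫ x in base, V x ∂μ = 0 → ∀ N : ℕ,
        ∃ χ : ℝ → ℝ, Measurable χ ∧ (∀ x, |χ x| ≤ X) ∧
          IsApproxMartingaleDiff z μ (fun x => V x + χ x - χ (inducedMap z x)) (C * θ ^ N) := by
  obtain ⟨K, hK, hK1⟩ := IsConeConstant.exists_one_add_le hr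
  obtain ⟨g, hg⟩ := hμ.exists_isBaseDensity hz hz1 hr hr1 hK
  obtain ⟨c, D, hc, -, hbounds⟩ := hg.exists_bounds hr.le (hK.pos hr).le
  obtain ⟨Q, hQ, hdecay⟩ := exists_hasTransferDecay hz hz1 hr hr1 hB hH hK hK1 hg.logHolder
  have hgap := contractionGap_pos hr hK
  have hθ : 0 < 1 - contractionGap r K := sub_pos.2 (contractionGap_lt_one hr hK)
  refine ⟨Q * (1 - (1 - contractionGap r K))⁻¹ / c, Q, 1 - contractionGap r K, ?_, hQ, hθ,
    sub_lt_self _ hgap, fun V hV hVi hmean N => ?_⟩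
  · rw [sub_sub_cancel]
    positivity
  have hw := hdecay V hV (hg.integrableOn_mul hVi) (by rwa [← hg.setIntegral_eq])
  have hX := hw.abs_gordinCorrection_le hc (fun y hy => (hbounds y hy).1) hQ.le hθ.le
    (sub_lt_self _ hgap) N
  refine ⟨gordinCorrection z g (fun x => V x * g x) N, hw.measurable_gordinCorrection hr hg N, hX,
    fun k D hk hkD => ?_⟩
  have hD : 0 ≤ D := (abs_nonneg _).trans (hkD 0)
  rw [setIntegral_add_gordinCorrection_sub_comp_mul hμ hz hz1.le hr hg hVi hw (fun _ => rfl) hk hkD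
    hX]
  have hle := norm_setIntegral_le_of_norm_le_const (μ := volume) (s := base)
    (f := fun y => (transfer z)^[N + 1] (fun x => V x * g x) y * k y)
    (measure_lt_top_of_subset base_subset_Ico (by simp)) fun y hy =>
      (norm_mul _ _).trans_le (mul_le_mul (hw.abs_le N y hy) (hkD y) (norm_nonneg _)
        (by positivity))
  rw [volume_real_base, Real.norm_eq_abs] at hle
  exact hle.trans (mul_le_of_le_one_right (by positivity) (by norm_num))

/-- The truncated excursion sum, centred by `c` and corrected by the coboundary of `χ` for the
induced map. -/
noncomputable def correctedExcursion (z : ℝ) (φ : ℝ → ℝ) (s : ℕ) (c : ℝ) (χ : ℝ → ℝ) (x : ℝ) : ℝ :=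
  excursionSum z φ s x - c + χ x - χ (inducedMap z x)

namespace IsHolderObservable

variable {φ : ℝ → ℝ} (hφ : IsHolderObservable φ B H r)
include hφ

lemma isCellHolder_excursionSum_sub (hz : 0 ≤ z) (s : ℕ) {c C₀ : ℝ} (hc : |c| ≤ C₀) :
    IsCellHolder z r (B + C₀) H fun x => excursionSum z φ s x - c where
  abs_le n y hy := by
    have hexc := hφ.abs_excursionSum_le_returnIndex (z := z) s (inducedInv z n y)
    rw [returnIndex_eq hz (inducedInv_mem_returnCell hz hy n)] at hexc
    have hC₀ : C₀ ≤ C₀ * ((n : ℝ) + 1) :=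
      le_mul_of_one_le_right ((abs_nonneg c).trans hc) (by simp)
    rw [add_mul]
    exact (abs_sub _ _).trans (add_le_add hexc (hc.trans hC₀))
  abs_sub_le n x hx y hy := by
    rw [sub_sub_sub_cancel_right]
    exact hφ.abs_excursionSum_inducedInv_sub_le hz s n hx hy

lemma integrableOn_excursionSum [IsFiniteMeasure μ] (hz : 0 ≤ z) (s : ℕ) :
    IntegrableOn (excursionSum z φ s) base μ :=
  Integrable.of_bound (measurable_excursionSum hz hφ.measurable s).aestronglyMeasurable _
    (ae_of_all _ (hφ.abs_excursionSum_le s))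

lemma exists_gordin_excursionSum (hμ : IsAcip z μ) (hz : 0 < z) (hz1 : z < 1)
    (hmean : ∫ x, φ x ∂μ = 0) :
    ∃ X C θ C₀ : ℝ, 0 < X ∧ 0 < C ∧ 0 < θ ∧ θ < 1 ∧ 0 < C₀ ∧ ∀ s : ℕ, 1 ≤ s →
      ∃ c : ℝ, |c| ≤ C₀ * (s : ℝ) ^ (1 - 1 / z) ∧ ∀ N : ℕ,
        ∃ χ : ℝ → ℝ, Measurable χ ∧ (∀ x, |χ x| ≤ X) ∧
          IsApproxMartingaleDiff z μ (correctedExcursion z φ s c χ) (C * θ ^ N) := by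
  have := hμ.prob
  have hbase : 0 < μ.real base :=
    ENNReal.toReal_pos (hμ.measure_base_ne_zero hz hz1.le) (measure_ne_top _ _)
  obtain ⟨C₁, hC₁, hexc⟩ := hφ.exists_abs_setIntegral_excursionSum_le hμ hz hz1 hmean
  have hC₀ : 0 < C₁ / μ.real base := by positivity
  obtain ⟨X, C, θ, hX, hC, hθ, hθ1, hgordin⟩ := hμ.exists_gordin hz hz1 hφ.exponent_pos
    hφ.exponent_le_one (add_pos hφ.bound_pos hC₀).le hφ.const_nonneg
  refine ⟨X, C, θ, C₁ / μ.real base, hX, hC, hθ, hθ1, hC₀, fun s hs =>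
    ⟨(∫ x in base, excursionSum z φ s x ∂μ) / μ.real base, ?_, ?_⟩⟩
  · rw [abs_div, abs_of_pos hbase, div_mul_eq_mul_div]
    gcongr
    exact hexc s hs
  · have hrpow : (s : ℝ) ^ (1 - 1 / z) ≤ 1 :=
      Real.rpow_le_one_of_one_le_of_nonpos (by exact_mod_cast hs)
        (sub_nonpos.2 (one_lt_one_div hz hz1).le)
    have hint := hφ.integrableOn_excursionSum (μ := μ) hz.le s
    refine hgordin _ (hφ.isCellHolder_excursionSum_sub hz.le s ?_)
      (hint.sub (integrable_const _)) ?_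
    · rw [abs_div, abs_of_pos hbase]
      gcongr
      exact (hexc s hs).trans (mul_le_of_le_one_right hC₁.le hrpow)
    · rw [integral_sub hint (integrable_const _), setIntegral_const, smul_eq_mul,
        mul_div_cancel₀ _ hbase.ne', sub_self]

end IsHolderObservable

end Gordin

/-! ### Second moments and long excursions -/

section BirkhoffSum

variable {α : Type*} [MeasurableSpace α] {T : α → α} {f : α → ℝ}

lemma measurable_birkhoffSum (hT : Measurable T) (hf : Measurable f) (n : ℕ) :
    Measurable (birkhoffSum T f n) :=
  Finset.measurable_sum _ fun j _ => hf.comp (hT.iterate j)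

omit [MeasurableSpace α] in
lemma abs_birkhoffSum_le {D : ℝ} (hf : ∀ x, |f x| ≤ D) (n : ℕ) (x : α) :
    |birkhoffSum T f n x| ≤ n * D := by
  refine (Finset.abs_sum_le_sum_abs _ _).trans ((Finset.sum_le_card_nsmul _ _ D
    fun j _ => hf _).trans_eq ?_)
  rw [Finset.card_range, nsmul_eq_mul]

lemma integral_birkhoffSum_succ_sq {ν : Measure α} [IsFiniteMeasure ν]
    (hT : MeasurePreserving T ν ν) {D : ℝ} (hfm : Measurable f) (hf : ∀ x, |f x| ≤ D) (n : ℕ) :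
    ∫ x, birkhoffSum T f (n + 1) x ^ 2 ∂ν =
      ∫ x, f x ^ 2 ∂ν + 2 * ∫ x, f x * birkhoffSum T f n (T x) ∂ν +
        ∫ x, birkhoffSum T f n x ^ 2 ∂ν := by
  have hSm := measurable_birkhoffSum hT.measurable hfm n
  have hfL : MemLp f 2 ν := .of_bound hfm.aestronglyMeasurable D (ae_of_all _ hf)
  have hSL : MemLp (birkhoffSum T f n) 2 ν :=
    .of_bound hSm.aestronglyMeasurable (n * D) (ae_of_all _ (abs_birkhoffSum_le hf n))
  have hSTL : MemLp (fun x => birkhoffSum T f n (T x)) 2 ν := hSL.comp_measurePreserving hT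
  have hcross : Integrable (fun x => f x * birkhoffSum T f n (T x)) ν := hfL.integrable_mul hSTL
  have hfcross : Integrable (fun x => f x ^ 2 + 2 * (f x * birkhoffSum T f n (T x))) ν :=
    hfL.integrable_sq.add (hcross.const_mul 2)
  calc ∫ x, birkhoffSum T f (n + 1) x ^ 2 ∂ν
      = ∫ x, (f x ^ 2 + 2 * (f x * birkhoffSum T f n (T x)) + birkhoffSum T f n (T x) ^ 2) ∂ν := by
        simp only [birkhoffSum_succ', add_sq, mul_assoc]
    _ = _ := by
        rw [integral_add hfcross hSTL.integrable_sq,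
          integral_add hfL.integrable_sq (hcross.const_mul 2), integral_const_mul,
          integral_comp_of_measurePreserving hT (hSm.pow_const 2).aestronglyMeasurable]

lemma measureReal_exists_le_level_iterate_le {ν : Measure α} [IsFiniteMeasure ν]
    (hT : MeasurePreserving T ν ν) {L : α → ℕ} (hL : Measurable L)
    (hstep : ∀ x, L (T x) ≤ L x + 1) (n s : ℕ) :
    ν.real {x | ∃ j < n, s ≤ L (T^[j] x)} ≤ ν.real {x | s ≤ L x} + n * ν.real {x | L x = s} := by
  have hcross : {x | ∃ j < n, s ≤ L (T^[j] x)} ⊆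
      {x | s ≤ L x} ∪ ⋃ j ∈ Finset.range n, T^[j] ⁻¹' {x | L x = s} := by
    rintro x ⟨j, hjn, hj⟩
    by_contra! hx
    simp only [mem_union, mem_ofPred_eq, mem_iUnion, Finset.mem_range, mem_preimage, not_or,
      not_exists, not_le] at hx
    have hlow : ∀ i < n, L (T^[i] x) < s := by
      intro i
      induction i with
      | zero => exact fun _ => hx.1
      | succ i ih =>
        intro hi
        have hsucc := hstep (T^[i] x)
        rw [← Function.iterate_succ_apply' T] at hsucc
        exact lt_of_le_of_ne (hsucc.trans (ih (by omega))) (hx.2 (i + 1) hi)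
    exact (hlow j hjn).not_ge hj
  have hlevel : MeasurableSet {x | L x = s} := hL (measurableSet_singleton s)
  calc _ ≤ _ := measureReal_mono hcross
    _ ≤ _ := measureReal_union_le _ _
    _ ≤ ν.real {x | s ≤ L x} + ∑ j ∈ Finset.range n, ν.real (T^[j] ⁻¹' {x | L x = s}) := by
        gcongr
        exact measureReal_biUnion_finset_le _ _
    _ = _ := by
        simp only [(hT.iterate _).measureReal_preimage hlevel.nullMeasurableSet,
          Finset.sum_const, Finset.card_range, nsmul_eq_mul]

end BirkhoffSum

section SecondMoment

variable {z B H r : ℝ} {μ : Measure ℝ} {φ : ℝ → ℝ}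

lemma sq_natCast_le_sum (m : ℕ) : (m : ℝ) ^ 2 ≤ ∑ l ∈ Finset.range m, 2 * ((l : ℝ) + 1) := by
  have hsum : ∑ l ∈ Finset.range m, 2 * ((l : ℝ) + 1) = (m : ℝ) ^ 2 + m := by
    induction m with
    | zero => simp
    | succ m ih => rw [Finset.sum_range_succ, ih]; push_cast; ring
  rw [hsum]
  exact le_add_of_nonneg_right m.cast_nonneg

lemma mem_longReturn_of_le_returnIndex {x : ℝ} (hx : x ∈ base) {l : ℕ}
    (hl : l ≤ returnIndex z x) : x ∈ longReturn z l := by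
  refine ⟨hx.1, ?_⟩
  cases l with
  | zero => exact hx.2
  | succ l => exact not_le.1 (Nat.notMem_of_lt_sInf (Nat.lt_of_succ_le hl))

lemma IsHolderObservable.excursionSum_sq_le (hφ : IsHolderObservable φ B H r) (s : ℕ) {x : ℝ}
    (hx : x ∈ base) : excursionSum z φ s x ^ 2 ≤
      B ^ 2 * ∑ l ∈ Finset.range s, 2 * ((l : ℝ) + 1) * (longReturn z l).indicator 1 x := by
  set m := min (returnIndex z x + 1) s
  have hind : ∀ l, 0 ≤ (longReturn z l).indicator (1 : ℝ → ℝ) x := fun l =>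
    indicator_nonneg (fun _ _ => zero_le_one) x
  calc excursionSum z φ s x ^ 2 = |excursionSum z φ s x| ^ 2 := (sq_abs _).symm
    _ ≤ (B * m) ^ 2 := by gcongr; exact hφ.abs_lsvBirkhoff_le m x
    _ = B ^ 2 * (m : ℝ) ^ 2 := mul_pow _ _ _
    _ ≤ B ^ 2 * ∑ l ∈ Finset.range m, 2 * ((l : ℝ) + 1) := by gcongr; exact sq_natCast_le_sum m
    _ = B ^ 2 * ∑ l ∈ Finset.range m, 2 * ((l : ℝ) + 1) * (longReturn z l).indicator 1 x := by
        congr 1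
        refine Finset.sum_congr rfl fun l hl => ?_
        have hl' := (Finset.mem_range.1 hl).trans_le (min_le_left _ _)
        rw [indicator_of_mem (mem_longReturn_of_le_returnIndex hx (Nat.lt_succ_iff.1 hl')),
          Pi.one_apply, mul_one]
    _ ≤ _ := by
        gcongr ?_ * ?_
        exact Finset.sum_le_sum_of_subset_of_nonneg (Finset.range_mono (min_le_right _ _))
          fun l _ _ => mul_nonneg (by positivity) (hind l)

lemma one_div_lt_two (hz : 1 / 2 < z) : 1 / z < 2 := by
  rw [div_lt_iff₀ (by linarith)]
  linarith

lemma IsHolderObservable.setIntegral_excursionSum_sq_le [IsFiniteMeasure μ] (hz : 0 ≤ z)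
    (hφ : IsHolderObservable φ B H r) (s : ℕ) : ∫ x in base, excursionSum z φ s x ^ 2 ∂μ ≤
      B ^ 2 * ∑ l ∈ Finset.range s, 2 * ((l : ℝ) + 1) * μ.real (longReturn z l) := by
  have hint : ∀ l : ℕ, IntegrableOn
      (fun x => 2 * ((l : ℝ) + 1) * (longReturn z l).indicator 1 x) base μ := fun l =>
    ((integrable_const (1 : ℝ)).indicator (measurableSet_longReturn z l)).const_mul _
  have hexc : IntegrableOn (fun x => excursionSum z φ s x ^ 2) base μ :=
    (MemLp.of_bound (measurable_excursionSum hz hφ.measurable s).aestronglyMeasurable _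
      (ae_of_all _ (hφ.abs_excursionSum_le s))).integrable_sq
  calc _ ≤ ∫ x in base, B ^ 2 *
        ∑ l ∈ Finset.range s, 2 * ((l : ℝ) + 1) * (longReturn z l).indicator 1 x ∂μ :=
        setIntegral_mono_on hexc ((integrable_finsetSum _ fun l _ => hint l).const_mul _)
          measurableSet_base fun x hx => hφ.excursionSum_sq_le s hx
    _ = _ := by
        rw [integral_const_mul, integral_finsetSum _ fun l _ => hint l]
        congr 1
        refine Finset.sum_congr rfl fun l _ => ?_
        rw [integral_const_mul, integral_indicator_one (measurableSet_longReturn z l),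
          measureReal_restrict_apply (measurableSet_longReturn z l),
          inter_eq_left.2 (longReturn_subset_base hz l)]

lemma IsHolderObservable.exists_setIntegral_excursionSum_sq_le (hφ : IsHolderObservable φ B H r)
    (hμ : IsAcip z μ) (hz : 1 / 2 < z) (hz1 : z < 1) : ∃ C, 0 < C ∧ ∀ s : ℕ,
      ∫ x in base, excursionSum z φ s x ^ 2 ∂μ ≤ C * (s : ℝ) ^ (2 - 1 / z) := by
  have hz0 : 0 < z := by linarith
  have := hμ.prob
  have hB := hφ.bound_pos
  obtain ⟨C, hC, htail⟩ := hμ.exists_measureReal_longReturn_le hz0 hz1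
  have hlo := one_lt_one_div hz0 hz1
  have hp : 0 < 2 - 1 / z := sub_pos.2 (one_div_lt_two hz)
  refine ⟨B ^ 2 * (2 * C * (2 - 1 / z)⁻¹), by positivity, fun s => ?_⟩
  calc _ ≤ _ := hφ.setIntegral_excursionSum_sq_le hz0.le s
    _ ≤ B ^ 2 * ∑ l ∈ Finset.range s, 2 * ((l : ℝ) + 1) * (C * ((l : ℝ) + 1) ^ (-(1 / z))) := by
        gcongr with l
        exact htail l
    _ = B ^ 2 * (2 * C * ∑ l ∈ Finset.range s, ((l : ℝ) + 1) ^ (2 - 1 / z - 1)) := by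
        rw [Finset.mul_sum _ _ (2 * C)]
        congr 1
        refine Finset.sum_congr rfl fun l _ => ?_
        rw [show 2 - 1 / z - 1 = 1 + -(1 / z) by ring, Real.rpow_add (by positivity),
          Real.rpow_one]
        ring
    _ ≤ B ^ 2 * (2 * C * ((2 - 1 / z)⁻¹ * (s : ℝ) ^ (2 - 1 / z))) := by
        gcongr
        exact sum_add_one_rpow_sub_one_le hp (by linarith) s
    _ = _ := by ring

lemma abs_indicator_towerTop_le {M : ℝ → ℝ} {D : ℝ} (hMD : ∀ x, |M x| ≤ D) (p : ℝ × ℕ) :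
    |(towerTop z).indicator (fun p => M p.1) p| ≤ D :=
  (norm_indicator_le_norm_self (fun p : ℝ × ℕ => M p.1) p).trans (hMD p.1)

lemma measurable_indicator_towerTop (z : ℝ) {M : ℝ → ℝ} (hM : Measurable M) :
    Measurable ((towerTop z).indicator fun p => M p.1) :=
  (hM.comp measurable_fst).indicator (measurableSet_towerTop z)

lemma towerMeasure_real_setOf_level_eq (s : ℕ) :
    (towerMeasure z μ).real {p | p.2 = s} = μ.real (longReturn z s) := by
  have hlevel : MeasurableSet {p : ℝ × ℕ | p.2 = s} := measurable_snd (measurableSet_singleton s)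
  rw [Measure.real, towerMeasure_apply hlevel, tsum_eq_single s]
  · simp [Measure.real]
  · intro l hl
    simp [hl]

lemma level_towerMap_le (p : ℝ × ℕ) : (towerMap z p).2 ≤ p.2 + 1 := by
  unfold towerMap
  split_ifs
  · exact le_rfl
  · exact Nat.zero_le _

namespace IsAcip

lemma integral_indicator_towerTop_mul_comp_towerMap (hμ : IsAcip z μ) (hz : 0 < z) (hz1 : z ≤ 1)
    {M : ℝ → ℝ} {k : ℝ × ℕ → ℝ} (hM : Measurable M) (hk : Measurable k) :
    ∫ p, (towerTop z).indicator (fun p => M p.1) p * k (towerMap z p) ∂towerMeasure z μ =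
      ∫ x in base, M x * k (inducedMap z x, 0) ∂μ := by
  have hMk : Measurable fun x => M x * k (inducedMap z x, 0) :=
    hM.mul (hk.comp ((inducedMap_measurable hz.le).prodMk measurable_const))
  rw [← hμ.integral_indicator_towerTop hz hz1 hMk]
  refine integral_congr_ae ?_
  filter_upwards [ae_towerMeasure_mem_longReturn] with p hp
  by_cases htop : p ∈ towerTop z
  · simp only [indicator_of_mem htop, towerMap_of_mem_towerTop hz.le hp htop]
  · simp only [indicator_of_notMem htop, zero_mul]

lemma integral_birkhoffSum_indicator_towerTop_sq_le (hμ : IsAcip z μ) (hz : 0 < z) (hz1 : z ≤ 1)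
    {M : ℝ → ℝ} (hM : Measurable M) {D ε : ℝ} (hMD : ∀ x, |M x| ≤ D) (hε : 0 ≤ ε)
    (horth : IsApproxMartingaleDiff z μ M ε) (n : ℕ) :
    ∫ p, birkhoffSum (towerMap z) ((towerTop z).indicator fun p => M p.1) n p ^ 2
        ∂towerMeasure z μ ≤ n * ∫ x in base, M x ^ 2 ∂μ + 2 * n ^ 2 * (ε * D) := by
  have := hμ.isProbabilityMeasure_towerMeasure hz hz1
  have hD : 0 ≤ D := (abs_nonneg _).trans (hMD 0)
  have hfm := measurable_indicator_towerTop z hM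
  have hfD := abs_indicator_towerTop_le (z := z) hMD
  have hsq : ∫ p, (towerTop z).indicator (fun p => M p.1) p ^ 2 ∂towerMeasure z μ =
      ∫ x in base, M x ^ 2 ∂μ := by
    rw [← hμ.integral_indicator_towerTop hz hz1 (hM.pow_const 2)]
    congr 1 with p
    by_cases hp : p ∈ towerTop z <;> simp [hp]
  induction n with
  | zero => simp
  | succ n ih =>
    have hSm := measurable_birkhoffSum (measurable_towerMap z) hfm n
    have hcross := (abs_le.1 (horth _ (n * D) (hSm.comp measurable_prodMk_right)
      fun x => abs_birkhoffSum_le hfD n (x, 0))).2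
    rw [integral_birkhoffSum_succ_sq (hμ.measurePreserving_towerMap hz hz1) hfm hfD, hsq,
      hμ.integral_indicator_towerTop_mul_comp_towerMap hz hz1 hM hSm]
    simp only [Function.comp_apply] at hcross
    push_cast
    nlinarith [mul_nonneg hε hD, n.cast_nonneg (α := ℝ)]

lemma exists_towerMeasure_real_exists_le_level_le (hμ : IsAcip z μ) (hz : 0 < z) (hz1 : z < 1) :
    ∃ C, 0 < C ∧ ∀ n s : ℕ, 1 ≤ s →
      (towerMeasure z μ).real {p | ∃ j < n, s ≤ ((towerMap z)^[j] p).2} ≤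
        C * (s : ℝ) ^ (1 - 1 / z) + n * (C * (s : ℝ) ^ (-(1 / z))) := by
  have := hμ.isProbabilityMeasure_towerMeasure hz hz1.le
  obtain ⟨C₁, hC₁, hlevel⟩ := hμ.exists_towerMeasure_real_setOf_le_level_le hz hz1
  obtain ⟨C₂, hC₂, htail⟩ := hμ.exists_measureReal_longReturn_le hz hz1
  refine ⟨C₁ + C₂, by positivity, fun n s hs => ?_⟩
  have hs0 : (0 : ℝ) < s := by exact_mod_cast hs
  have hrpow : ((s : ℝ) + 1) ^ (-(1 / z)) ≤ (s : ℝ) ^ (-(1 / z)) :=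
    Real.rpow_le_rpow_of_nonpos hs0 (by linarith) (by rw [Left.neg_nonpos_iff]; positivity)
  calc _ ≤ _ := measureReal_exists_le_level_iterate_le
        (hμ.measurePreserving_towerMap hz hz1.le) measurable_snd level_towerMap_le n s
    _ ≤ C₁ * (s : ℝ) ^ (1 - 1 / z) + n * (C₂ * (s : ℝ) ^ (-(1 / z))) := by
        rw [towerMeasure_real_setOf_level_eq]
        gcongr
        · exact hlevel s hs
        · exact (htail s).trans (by gcongr)
    _ ≤ _ := by gcongr <;> linarith

end IsAcip

end SecondMoment

/-! ### Tails of the Birkhoff sums -/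

lemma measureReal_le_abs_le_integral_sq_div {α : Type*} [MeasurableSpace α] {ν : Measure α}
    [IsFiniteMeasure ν] {f : α → ℝ} (hf : MemLp f 2 ν) {t : ℝ} (ht : 0 < t) :
    ν.real {x | t ≤ |f x|} ≤ (∫ x, f x ^ 2 ∂ν) / t ^ 2 := by
  rw [le_div_iff₀ (by positivity), mul_comm]
  refine le_trans ?_ (mul_meas_ge_le_integral_of_nonneg (ae_of_all _ fun x => sq_nonneg (f x))
    hf.integrable_sq (t ^ 2))
  refine mul_le_mul_of_nonneg_left (measureReal_mono fun x hx => ?_) (by positivity)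
  exact ((sq_le_sq₀ ht.le (abs_nonneg (f x))).2 hx).trans_eq (sq_abs _)

lemma ae_forall_iterate_of_measurePreserving {α : Type*} [MeasurableSpace α] {ν : Measure α}
    {T : α → α} (hT : MeasurePreserving T ν ν) {P : α → Prop} (hP : ∀ᵐ x ∂ν, P x) :
    ∀ᵐ x ∂ν, ∀ j, P (T^[j] x) :=
  ae_all_iff.2 fun j => (hT.iterate j).quasiMeasurePreserving.ae hP

section Tail

variable {z B H r : ℝ} {μ : Measure ℝ} {φ : ℝ → ℝ}

lemma semiconj_towerProj (z : ℝ) : Function.Semiconj (towerProj z) (towerMap z) (lsv z) :=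
  towerProj_towerMap

lemma IsAcip.ae_forall_iterate_towerMap_mem_longReturn (hμ : IsAcip z μ) (hz : 0 < z)
    (hz1 : z ≤ 1) : ∀ᵐ p ∂towerMeasure z μ,
      ∀ j, ((towerMap z)^[j] p).1 ∈ longReturn z ((towerMap z)^[j] p).2 :=
  ae_forall_iterate_of_measurePreserving (P := fun q => q.1 ∈ longReturn z q.2)
    (hμ.measurePreserving_towerMap hz hz1) ae_towerMeasure_mem_longReturn

lemma apply_towerProj_eq_coboundary_add (hz : 0 ≤ z) (φ : ℝ → ℝ) {s : ℕ} (χ : ℝ → ℝ) (c : ℝ)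
    {p : ℝ × ℕ} (hp : p.1 ∈ longReturn z p.2) (hs : p.2 < s) :
    φ (towerProj z p) =
      (partialExcursion z φ s (towerMap z p) + χ (towerMap z p).1) -
        (partialExcursion z φ s p + χ p.1) +
      (towerTop z).indicator (fun p => correctedExcursion z φ s c χ p.1) p +
      (towerTop z).indicator (fun _ => c) p := by
  have hcob := truncatedLift_eq_coboundary_add hz φ s hp
  rw [truncatedLift, indicator_of_mem (s := {p : ℝ × ℕ | p.2 < s}) hs] at hcob
  rw [hcob]
  by_cases htop : p ∈ towerTop z
  · simp only [indicator_of_mem htop, towerMap_of_mem_towerTop hz hp htop, correctedExcursion]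
    ring
  · simp only [indicator_of_notMem htop, towerMap_of_notMem_towerTop htop]
    ring

lemma lsvBirkhoff_towerProj_eq (hz : 0 ≤ z) (φ : ℝ → ℝ) {s : ℕ} (χ : ℝ → ℝ) (c : ℝ) {p : ℝ × ℕ}
    (hp : ∀ j, ((towerMap z)^[j] p).1 ∈ longReturn z ((towerMap z)^[j] p).2) {n : ℕ}
    (hs : ∀ j < n, ((towerMap z)^[j] p).2 < s) :
    lsvBirkhoff z φ n (towerProj z p) =
      (partialExcursion z φ s ((towerMap z)^[n] p) + χ ((towerMap z)^[n] p).1) -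
        (partialExcursion z φ s p + χ p.1) +
      birkhoffSum (towerMap z)
        ((towerTop z).indicator fun p => correctedExcursion z φ s c χ p.1) n p +
      birkhoffSum (towerMap z) ((towerTop z).indicator fun _ => c) n p := by
  induction n with
  | zero => simp [lsvBirkhoff]
  | succ n ih =>
    have hstep := apply_towerProj_eq_coboundary_add hz φ χ c (hp n) (hs n n.lt_succ_self)
    rw [lsvBirkhoff, Finset.sum_range_succ, ← lsvBirkhoff, ih fun j hj => hs j (by omega),
      ← (semiconj_towerProj z).iterate_right n, hstep, birkhoffSum_succ, birkhoffSum_succ,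
      Function.iterate_succ_apply']
    ring

namespace IsHolderObservable

variable (hφ : IsHolderObservable φ B H r)
include hφ

lemma abs_lsvBirkhoff_towerProj_le (hz : 0 ≤ z) {s : ℕ} {χ : ℝ → ℝ} {X : ℝ}
    (hχ : ∀ x, |χ x| ≤ X) (c : ℝ) {p : ℝ × ℕ}
    (hp : ∀ j, ((towerMap z)^[j] p).1 ∈ longReturn z ((towerMap z)^[j] p).2) {n : ℕ}
    (hs : ∀ j < n, ((towerMap z)^[j] p).2 < s) :
    |lsvBirkhoff z φ n (towerProj z p)| ≤ 2 * (B * s + X) + n * |c| +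
      |birkhoffSum (towerMap z)
        ((towerTop z).indicator fun p => correctedExcursion z φ s c χ p.1) n p| := by
  have hψ : ∀ q : ℝ × ℕ, |partialExcursion z φ s q + χ q.1| ≤ B * s + X := fun q =>
    (abs_add_le _ _).trans (add_le_add (hφ.abs_partialExcursion_le s q) (hχ q.1))
  have hmean : |birkhoffSum (towerMap z) ((towerTop z).indicator fun _ => c) n p| ≤ n * |c| :=
    abs_birkhoffSum_le (abs_indicator_towerTop_le (M := fun _ => c) fun _ => le_rfl) n p
  rw [lsvBirkhoff_towerProj_eq hz φ χ c hp hs]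
  refine (abs_add_le _ _).trans ?_
  grw [abs_add_le, abs_sub, hψ, hψ, hmean]
  linarith

lemma measurable_correctedExcursion (hz : 0 ≤ z) (s : ℕ) (c : ℝ) {χ : ℝ → ℝ}
    (hχ : Measurable χ) : Measurable (correctedExcursion z φ s c χ) :=
  (((measurable_excursionSum hz hφ.measurable s).sub_const c).add hχ).sub
    (hχ.comp (inducedMap_measurable hz))

omit hφ in
lemma abs_correctedExcursion_sub_excursionSum_le {C₀ X : ℝ} (s : ℕ) {c : ℝ} (hc : |c| ≤ C₀)
    {χ : ℝ → ℝ} (hχ : ∀ x, |χ x| ≤ X) (x : ℝ) :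
    |correctedExcursion z φ s c χ x - excursionSum z φ s x| ≤ C₀ + 2 * X := by
  rw [show correctedExcursion z φ s c χ x - excursionSum z φ s x =
    (χ x - χ (inducedMap z x)) - c by rw [correctedExcursion]; ring]
  grw [abs_sub, abs_sub, hc, hχ, hχ]
  linarith

lemma abs_correctedExcursion_le {C₀ X : ℝ} (s : ℕ) {c : ℝ} (hc : |c| ≤ C₀) {χ : ℝ → ℝ}
    (hχ : ∀ x, |χ x| ≤ X) (x : ℝ) :
    |correctedExcursion z φ s c χ x| ≤ B * s + (C₀ + 2 * X) := by
  rw [← add_sub_cancel (excursionSum z φ s x) (correctedExcursion z φ s c χ x)]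
  exact (abs_add_le _ _).trans (add_le_add (hφ.abs_excursionSum_le s x)
    (abs_correctedExcursion_sub_excursionSum_le s hc hχ x))

lemma setIntegral_correctedExcursion_sq_le [IsProbabilityMeasure μ] (hz : 0 ≤ z) {C₀ X : ℝ}
    (s : ℕ) {c : ℝ} (hc : |c| ≤ C₀) {χ : ℝ → ℝ} (hχm : Measurable χ) (hχ : ∀ x, |χ x| ≤ X) :
    ∫ x in base, correctedExcursion z φ s c χ x ^ 2 ∂μ ≤
      2 * ∫ x in base, excursionSum z φ s x ^ 2 ∂μ + 2 * (C₀ + 2 * X) ^ 2 := by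
  have hcorr : MemLp (correctedExcursion z φ s c χ) 2 (μ.restrict base) :=
    .of_bound (hφ.measurable_correctedExcursion hz s c hχm).aestronglyMeasurable _
      (ae_of_all _ (hφ.abs_correctedExcursion_le s hc hχ))
  have hexc : MemLp (excursionSum z φ s) 2 (μ.restrict base) :=
    .of_bound (measurable_excursionSum hz hφ.measurable s).aestronglyMeasurable _
      (ae_of_all _ (hφ.abs_excursionSum_le s))
  calc _ ≤ ∫ x in base, (2 * excursionSum z φ s x ^ 2 + 2 * (C₀ + 2 * X) ^ 2) ∂μ := by
        refine integral_mono hcorr.integrable_sq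
          ((hexc.integrable_sq.const_mul 2).add (integrable_const _)) fun x => ?_
        have hdiff := sq_le_sq.2 ((abs_correctedExcursion_sub_excursionSum_le (z := z) (φ := φ) s
          hc hχ x).trans (le_abs_self _))
        have hsq := add_sq_le (a := excursionSum z φ s x)
          (b := correctedExcursion z φ s c χ x - excursionSum z φ s x)
        rw [add_sub_cancel] at hsq
        linarith
    _ = 2 * ∫ x in base, excursionSum z φ s x ^ 2 ∂μ + μ.real base * (2 * (C₀ + 2 * X) ^ 2) := by
        rw [integral_add (hexc.integrable_sq.const_mul 2) (integrable_const _),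
          integral_const_mul, setIntegral_const, smul_eq_mul]
    _ ≤ _ := by
        exact add_le_add le_rfl (mul_le_of_le_one_left (by positivity) measureReal_le_one)

lemma measureReal_lt_abs_lsvBirkhoff_le (hμ : IsAcip z μ) (hz : 0 < z) (hz1 : z ≤ 1) {C₀ X : ℝ}
    {n s : ℕ} {c t : ℝ} (hc : |c| ≤ C₀) {χ : ℝ → ℝ} (hχm : Measurable χ) (hχ : ∀ x, |χ x| ≤ X)
    (ht : 0 < t) (hts : 2 * (B * s + X) + n * |c| ≤ t / 2) :
    μ.real {x | t < |lsvBirkhoff z φ n x|} ≤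
      (towerMeasure z μ).real {p | ∃ j < n, s ≤ ((towerMap z)^[j] p).2} +
      (∫ p, birkhoffSum (towerMap z)
        ((towerTop z).indicator fun p => correctedExcursion z φ s c χ p.1) n p ^ 2
          ∂towerMeasure z μ) / (t / 2) ^ 2 := by
  have := hμ.isProbabilityMeasure_towerMeasure hz hz1
  set S := birkhoffSum (towerMap z)
    ((towerTop z).indicator fun p => correctedExcursion z φ s c χ p.1) n
  have hS : MemLp S 2 (towerMeasure z μ) :=
    .of_bound (measurable_birkhoffSum (measurable_towerMap z) (measurable_indicator_towerTop z
      (hφ.measurable_correctedExcursion hz.le s c hχm)) n).aestronglyMeasurable _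
      (ae_of_all _ (abs_birkhoffSum_le (abs_indicator_towerTop_le
        (hφ.abs_correctedExcursion_le s hc hχ)) n))
  have hmeas : MeasurableSet {x | t < |lsvBirkhoff z φ n x|} :=
    measurableSet_lt measurable_const (measurable_lsvBirkhoff z hφ.measurable n).abs
  rw [← (hμ.measurePreserving_towerProj hz hz1).measureReal_preimage hmeas.nullMeasurableSet]
  calc _ ≤ (towerMeasure z μ).real
        ({p | ∃ j < n, s ≤ ((towerMap z)^[j] p).2} ∪ {p | t / 2 ≤ |S p|}) := by
        refine ENNReal.toReal_mono (measure_ne_top _ _) (measure_mono_ae ?_)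
        filter_upwards [hμ.ae_forall_iterate_towerMap_mem_longReturn hz hz1] with p hp
          (htp : t < |lsvBirkhoff z φ n (towerProj z p)|)
        refine or_iff_not_imp_left.2 fun hlow => ?_
        have hlow' : ∀ j < n, ((towerMap z)^[j] p).2 < s := fun j hj =>
          not_le.1 fun hsj => hlow ⟨j, hj, hsj⟩
        have hbound := hφ.abs_lsvBirkhoff_towerProj_le hz.le hχ c hp hlow'
        change t / 2 ≤ |S p|
        linarith
    _ ≤ _ := measureReal_union_le _ _
    _ ≤ _ := by
        gcongr
        exact measureReal_le_abs_le_integral_sq_div hS (half_pos ht)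

lemma exists_setIntegral_correctedExcursion_sq_le (hμ : IsAcip z μ) (hz : 1 / 2 < z)
    (hz1 : z < 1) {C₀ : ℝ} (hC₀ : 0 < C₀) {X : ℝ} (hX : 0 < X) : ∃ C, 0 < C ∧ ∀ s : ℕ, 1 ≤ s →
      ∀ c χ, |c| ≤ C₀ → Measurable χ → (∀ x, |χ x| ≤ X) →
        ∫ x in base, correctedExcursion z φ s c χ x ^ 2 ∂μ ≤ C * (s : ℝ) ^ (2 - 1 / z) := by
  have := hμ.prob
  obtain ⟨C, hC, hexc⟩ := hφ.exists_setIntegral_excursionSum_sq_le hμ hz hz1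
  refine ⟨2 * C + 2 * (C₀ + 2 * X) ^ 2, by positivity, fun s hs c χ hc hχm hχ => ?_⟩
  have hpow : 1 ≤ (s : ℝ) ^ (2 - 1 / z) :=
    Real.one_le_rpow (by exact_mod_cast hs) (sub_pos.2 (one_div_lt_two hz)).le
  calc _ ≤ _ := hφ.setIntegral_correctedExcursion_sq_le (by linarith) s hc hχm hχ
    _ ≤ 2 * (C * (s : ℝ) ^ (2 - 1 / z)) + 2 * (C₀ + 2 * X) ^ 2 * (s : ℝ) ^ (2 - 1 / z) := by
        exact add_le_add (mul_le_mul_of_nonneg_left (hexc s) zero_le_two)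
          (le_mul_of_one_le_right (by positivity) hpow)
    _ = _ := by ring

lemma exists_measureReal_lt_abs_lsvBirkhoff_le (hμ : IsAcip z μ) (hz : 1 / 2 < z) (hz1 : z < 1)
    (hmean : ∫ x, φ x ∂μ = 0) : ∃ C X C₀ : ℝ, 0 < C ∧ 0 < X ∧ 0 < C₀ ∧
      ∀ (n s : ℕ) (t : ℝ), 1 ≤ s → 0 < t →
        2 * (B * s + X) + n * (C₀ * (s : ℝ) ^ (1 - 1 / z)) ≤ t / 2 →
        μ.real {x | t < |lsvBirkhoff z φ n x|} ≤
          C * (s : ℝ) ^ (1 - 1 / z) + n * (C * (s : ℝ) ^ (-(1 / z))) +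
            (n * (C * (s : ℝ) ^ (2 - 1 / z)) + 1) / (t / 2) ^ 2 := by
  have hz0 : 0 < z := by linarith
  obtain ⟨X, C₁, θ, C₀, hX, hC₁, hθ, hθ1, hC₀, hgordin⟩ :=
    hφ.exists_gordin_excursionSum hμ hz0 hz1 hmean
  obtain ⟨C₂, hC₂, hlevel⟩ := hμ.exists_towerMeasure_real_exists_le_level_le hz0 hz1
  obtain ⟨C₃, hC₃, hmoment⟩ :=
    hφ.exists_setIntegral_correctedExcursion_sq_le hμ hz hz1 hC₀ hX
  refine ⟨C₂ + C₃, X, C₀, by positivity, hX, hC₀, fun n s t hs ht hts => ?_⟩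
  obtain ⟨c, hc, hχ⟩ := hgordin s hs
  have hc₀ : |c| ≤ C₀ := hc.trans (mul_le_of_le_one_right hC₀.le
    (Real.rpow_le_one_of_one_le_of_nonpos (by exact_mod_cast hs)
      (sub_nonpos.2 (one_lt_one_div hz0 hz1).le)))
  set D := B * s + (C₀ + 2 * X)
  have hB := hφ.bound_pos
  have : 0 < D := by positivity
  obtain ⟨N, hN⟩ := exists_pow_lt_of_lt_one (x := (2 * (n : ℝ) ^ 2 * (C₁ * D) + 1)⁻¹)
    (by positivity) hθ1
  have herr : 2 * (n : ℝ) ^ 2 * (C₁ * θ ^ N * D) ≤ 1 := by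
    have hle := (le_inv_mul_iff₀ (c := 2 * (n : ℝ) ^ 2 * (C₁ * D) + 1) (by positivity)).1
      (hN.le.trans_eq (mul_one _).symm)
    linarith [pow_pos hθ N]
  obtain ⟨χ, hχm, hχX, horth⟩ := hχ N
  have hM := hφ.measurable_correctedExcursion hz0.le s c hχm
  calc _ ≤ _ := hφ.measureReal_lt_abs_lsvBirkhoff_le hμ hz0 hz1.le hc₀ hχm hχX ht
        (le_trans (by gcongr) hts)
    _ ≤ C₂ * (s : ℝ) ^ (1 - 1 / z) + n * (C₂ * (s : ℝ) ^ (-(1 / z))) +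
        (n * (C₃ * (s : ℝ) ^ (2 - 1 / z)) + 1) / (t / 2) ^ 2 := by
        gcongr
        · exact hlevel n s hs
        · refine (hμ.integral_birkhoffSum_indicator_towerTop_sq_le hz0 hz1.le hM
            (hφ.abs_correctedExcursion_le s hc₀ hχX) (by positivity) horth n).trans ?_
          gcongr
          exact hmoment s hs c χ hc₀ hχm hχX
    _ ≤ _ := by gcongr <;> linarith

end IsHolderObservable

end Tail

/-! ### From tails to moments -/

lemma natFloor_rpow_le {x β γ : ℝ} (hx : 1 ≤ x) (hβ : 0 ≤ β) (hγ : -β ≤ γ) :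
    (⌊x⌋₊ : ℝ) ^ γ ≤ 2 ^ β * x ^ γ := by
  have hx0 : 0 < x := by linarith
  have hlt := Nat.lt_floor_add_one x
  have hfloor : (1 : ℝ) ≤ ⌊x⌋₊ := by exact_mod_cast Nat.le_floor (by simpa using hx)
  rcases le_total 0 γ with h0 | h0
  · calc _ ≤ 1 * x ^ γ := by
          rw [one_mul]
          gcongr
          exact Nat.floor_le hx0.le
      _ ≤ _ := by gcongr; exact Real.one_le_rpow one_le_two hβ
  · calc _ ≤ (2⁻¹ * x) ^ γ := Real.rpow_le_rpow_of_nonpos (by positivity) (by linarith) h0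
      _ = 2 ^ (-γ) * x ^ γ := by
          rw [Real.mul_rpow (by norm_num) hx0.le, Real.inv_rpow zero_le_two,
            Real.rpow_neg zero_le_two]
      _ ≤ _ := by
          gcongr
          · exact one_le_two
          · linarith

lemma natFloor_tail_le {C D α x : ℝ} {n : ℕ} (hC : 0 ≤ C) (hD : 0 < D) (hα : 0 ≤ α) (hα2 : α ≤ 2)
    (hx : 1 ≤ x) (hxn : x ≤ n) :
    C * (⌊x⌋₊ : ℝ) ^ (1 - α) + n * (C * (⌊x⌋₊ : ℝ) ^ (-α)) +
        (n * (C * (⌊x⌋₊ : ℝ) ^ (2 - α)) + 1) / (D * x) ^ 2 ≤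
      (2 * (C * 2 ^ α) + (C * 2 ^ α + 1) / D ^ 2) * (n * x ^ (-α)) := by
  have hx0 : 0 < x := by linarith
  have hpow₁ : x ^ (1 - α) = x * x ^ (-α) := by
    rw [sub_eq_add_neg, Real.rpow_add hx0, Real.rpow_one]
  have hpow₂ : x ^ (2 - α) = x ^ 2 * x ^ (-α) := by
    rw [sub_eq_add_neg, Real.rpow_add hx0, Real.rpow_two]
  have hone : 1 ≤ n * x ^ (2 - α) :=
    one_le_mul_of_one_le_of_one_le (hx.trans hxn) (Real.one_le_rpow hx (by linarith))
  calc _ ≤ C * (2 ^ α * x ^ (1 - α)) + n * (C * (2 ^ α * x ^ (-α))) +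
        (n * (C * (2 ^ α * x ^ (2 - α))) + n * x ^ (2 - α)) / (D * x) ^ 2 := by
        gcongr
        all_goals exact natFloor_rpow_le hx hα (by linarith)
    _ = C * (2 ^ α * (x * x ^ (-α))) + n * (C * (2 ^ α * x ^ (-α))) +
        (C * 2 ^ α + 1) / D ^ 2 * (n * x ^ (-α)) := by
        rw [hpow₁, hpow₂]
        field_simp
    _ ≤ C * (2 ^ α * (n * x ^ (-α))) + n * (C * (2 ^ α * x ^ (-α))) +
        (C * 2 ^ α + 1) / D ^ 2 * (n * x ^ (-α)) := by gcongr
    _ = _ := by ring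

lemma one_le_mul_mul_rpow_neg {x y α : ℝ} {n : ℕ} (hx : 0 < x) (hxy : x ≤ y) (hα : 0 ≤ α)
    (hn : 1 ≤ n) : 1 ≤ y ^ α * (n * x ^ (-α)) := by
  have hy := hx.trans_le hxy
  calc 1 = y ^ α * (1 * y ^ (-α)) := by
        rw [one_mul, ← Real.rpow_add hy, add_neg_cancel, Real.rpow_zero]
    _ ≤ _ := by
        gcongr y ^ α * (?_ * ?_)
        · exact_mod_cast hn
        · exact Real.rpow_le_rpow_of_nonpos hx hxy (neg_nonpos.2 hα)

lemma one_le_of_lt_mul_natFloor_rpow {C D α x : ℝ} {n : ℕ} (hC : 0 ≤ C) (hD : 0 < D) (hα : 0 ≤ α)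
    (hx : 1 ≤ x) (hlt : D * x < n * (C * (⌊x⌋₊ : ℝ) ^ (1 - α))) :
    1 ≤ C * 2 ^ α / D * (n * x ^ (-α)) := by
  have hx0 : 0 < x := by linarith
  have hle : D * x ≤ D * x * (C * 2 ^ α / D * (n * x ^ (-α))) :=
    calc _ ≤ _ := hlt.le
      _ ≤ n * (C * (2 ^ α * x ^ (1 - α))) := by
          gcongr
          exact natFloor_rpow_le hx hα (by linarith)
      _ = _ := by
          rw [sub_eq_add_neg, Real.rpow_add hx0, Real.rpow_one]
          field_simp
  exact (le_mul_iff_one_le_right (by positivity)).1 hle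

section Moments

variable {α : Type*} [MeasurableSpace α] {ν : Measure α} [IsFiniteMeasure ν] {f : α → ℝ}
  {A T β q : ℝ}

lemma setIntegral_Ioc_mul_rpow_sub_one (hT : 0 ≤ T) (hβ : 0 < β) (A : ℝ) :
    ∫ t in Ioc 0 T, A * t ^ (β - 1) = A * (T ^ β / β) := by
  rw [← intervalIntegral.integral_of_le hT, intervalIntegral.integral_const_mul,
    integral_rpow (Or.inl (by linarith)), sub_add_cancel, Real.zero_rpow hβ.ne', sub_zero]

lemma lintegral_meas_lt_abs_mul_rpow_le (hA : 0 ≤ A) (hT : 0 ≤ T) (hβ : β < q)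
    (hbound : ∀ x, |f x| ≤ T)
    (htail : ∀ t ∈ Ioc 0 T, ν.real {x | t < |f x|} ≤ A * t ^ (-β)) :
    ∫⁻ t in Ioi 0, ν {x | t < |f x|} * ENNReal.ofReal (t ^ (q - 1)) ≤
      ENNReal.ofReal (A * (T ^ (q - β) / (q - β))) := by
  have hint : IntegrableOn (fun t => A * t ^ (q - β - 1)) (Ioc 0 T) :=
    (intervalIntegrable_iff_integrableOn_Ioc_of_le hT).1
      ((intervalIntegral.intervalIntegrable_rpow' (by linarith)).const_mul A)
  have hempty : ∀ t ∈ Ioi T, ν {x | t < |f x|} * ENNReal.ofReal (t ^ (q - 1)) = 0 :=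
    fun t ht => by
      simp only [((hbound _).trans_lt ht).not_gt, ofPred_false, measure_empty, zero_mul]
  rw [← setIntegral_Ioc_mul_rpow_sub_one hT (sub_pos.2 hβ) A,
    ofReal_integral_eq_lintegral_ofReal hint ((ae_restrict_mem measurableSet_Ioc).mono fun t ht =>
      mul_nonneg hA (Real.rpow_nonneg ht.1.le _)),
    ← Ioc_union_Ioi_eq_Ioi hT]
  refine (lintegral_union_le _ _ _).trans ?_
  rw [setLIntegral_congr_fun measurableSet_Ioi hempty, lintegral_zero, add_zero]
  refine setLIntegral_mono' measurableSet_Ioc fun t ht => ?_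
  have ht0 : 0 < t := ht.1
  calc _ ≤ ENNReal.ofReal (A * t ^ (-β)) * ENNReal.ofReal (t ^ (q - 1)) := by
        gcongr
        rw [← ofReal_measureReal]
        exact ENNReal.ofReal_le_ofReal (htail t ht)
    _ = ENNReal.ofReal (A * t ^ (q - β - 1)) := by
        rw [← ENNReal.ofReal_mul (by positivity), mul_assoc, ← Real.rpow_add ht0]
        ring_nf

lemma integral_abs_rpow_le_of_measureReal_lt_abs_le (hA : 0 ≤ A) (hT : 0 ≤ T) (hq : 0 < q)
    (hβ : β < q) (hf : Measurable f) (hbound : ∀ x, |f x| ≤ T)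
    (htail : ∀ t ∈ Ioc 0 T, ν.real {x | t < |f x|} ≤ A * t ^ (-β)) :
    ∫ x, |f x| ^ q ∂ν ≤ q * (A * (T ^ (q - β) / (q - β))) := by
  have := sub_pos.2 hβ
  rw [integral_eq_lintegral_of_nonneg_ae (ae_of_all _ fun x => Real.rpow_nonneg (abs_nonneg _) q)
    (hf.abs.pow_const q).aestronglyMeasurable]
  refine ENNReal.toReal_le_of_le_ofReal (by positivity) ?_
  rw [lintegral_rpow_eq_lintegral_meas_lt_mul ν (ae_of_all _ fun x => abs_nonneg _)
    hf.abs.aemeasurable hq, ENNReal.ofReal_mul hq.le]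
  gcongr
  exact lintegral_meas_lt_abs_mul_rpow_le hA hT hβ hbound htail

end Moments

lemma lsvBirkhoff_congr {z : ℝ} {φ ψ : ℝ → ℝ} (hz : 0 ≤ z) (h : EqOn φ ψ (Ico 0 1)) (n : ℕ)
    {x : ℝ} (hx : x ∈ Ico (0 : ℝ) 1) : lsvBirkhoff z φ n x = lsvBirkhoff z ψ n x :=
  Finset.sum_congr rfl fun j _ => h (lsv_iterate_mem hz hx j)

lemma lsv_iterate_mem_Ico_preHalf {z : ℝ} (hz : 0 ≤ z) {j k N : ℕ} (hj : j + N ≤ k) {x : ℝ}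
    (hx : x ∈ Ico 0 (preHalf z k)) : (lsv z)^[j] x ∈ Ico 0 (preHalf z N) := by
  have hx1 : x ∈ Ico (0 : ℝ) 1 := ⟨hx.1, hx.2.trans (preHalf_mem hz k).2⟩
  have hmem := lsv_iterate_mem hz hx1 j
  refine ⟨hmem.1, (forall_lsv_iterate_lt_half_iff hz hmem N).1 fun i hi => ?_⟩
  rw [← Function.iterate_add_apply]
  exact (forall_lsv_iterate_lt_half_iff hz hx1 k).2 hx.2 _ (by omega)

lemma abs_lsvBirkhoff_sub_le {z ε c : ℝ} {φ : ℝ → ℝ} {n : ℕ} {x : ℝ}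
    (h : ∀ j < n, |φ ((lsv z)^[j] x) - c| ≤ ε) : |lsvBirkhoff z φ n x - n * c| ≤ n * ε := by
  have hsum : lsvBirkhoff z φ n x - n * c = ∑ j ∈ Finset.range n, (φ ((lsv z)^[j] x) - c) := by
    simp only [lsvBirkhoff, Finset.sum_sub_distrib, Finset.sum_const, Finset.card_range,
      nsmul_eq_mul]
  rw [hsum]
  calc _ ≤ _ := Finset.abs_sum_le_sum_abs _ _
    _ ≤ (Finset.range n).card • ε :=
        Finset.sum_le_card_nsmul _ _ _ fun j hj => h j (Finset.mem_range.1 hj)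
    _ = n * ε := by rw [Finset.card_range, nsmul_eq_mul]

lemma mul_half_le_abs_lsvBirkhoff {z : ℝ} (hz : 0 ≤ z) {φ : ℝ → ℝ} {N : ℕ}
    (h : ∀ y ∈ Ico 0 (preHalf z N), |φ y - φ 0| ≤ |φ 0| / 2) {n : ℕ} {x : ℝ}
    (hx : x ∈ Ico 0 (preHalf z (n + N))) : n * (|φ 0| / 2) ≤ |lsvBirkhoff z φ n x| := by
  have hsub := abs_lsvBirkhoff_sub_le (z := z) (c := φ 0) (n := n) fun j hj =>
    h _ (lsv_iterate_mem_Ico_preHalf hz (by omega : j + N ≤ n + N) hx)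
  have htri := abs_sub_abs_le_abs_sub (n * φ 0) (lsvBirkhoff z φ n x)
  rw [abs_mul, Nat.abs_cast, abs_sub_comm] at htri
  linarith

lemma exists_forall_abs_sub_le_of_continuousAt {z : ℝ} (hz : 0 < z) (hz1 : z ≤ 1) {φ : ℝ → ℝ}
    (hφ : ContinuousAt φ 0) {ε : ℝ} (hε : 0 < ε) :
    ∃ N, ∀ y ∈ Ico 0 (preHalf z N), |φ y - φ 0| ≤ ε := by
  obtain ⟨δ, hδ, hclose⟩ := Metric.continuousAt_iff.1 hφ ε hε
  obtain ⟨N, hN⟩ := ((preHalf_tendsto_zero hz hz1).eventually (gt_mem_nhds hδ)).exists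
  refine ⟨N, fun y hy => (hclose ?_).le⟩
  rw [Real.dist_eq, sub_zero, abs_of_nonneg hy.1]
  exact hy.2.trans hN

section Moments

variable {z B H r q : ℝ} {μ : Measure ℝ} {φ : ℝ → ℝ}

namespace IsHolderObservable

variable (hφ : IsHolderObservable φ B H r)
include hφ

lemma exists_measureReal_mul_lt_abs_lsvBirkhoff_le (hμ : IsAcip z μ) (hz : 1 / 2 < z)
    (hz1 : z < 1) (hmean : ∫ x, φ x ∂μ = 0) : ∃ C, 0 < C ∧ ∀ (n : ℕ) (x : ℝ), 1 ≤ n → 0 < x →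
      x ≤ n → μ.real {y | 16 * B * x < |lsvBirkhoff z φ n y|} ≤ C * (n * x ^ (-(1 / z))) := by
  have : 0 < z := by linarith
  have := hμ.prob
  have hB := hφ.bound_pos
  have hα : 0 ≤ 1 / z := by positivity
  obtain ⟨C, X, C₀, hC, hX, hC₀, htail⟩ :=
    hφ.exists_measureReal_lt_abs_lsvBirkhoff_le hμ hz hz1 hmean
  refine ⟨(1 + X / B) ^ (1 / z) + C₀ * 2 ^ (1 / z) / (4 * B) +
    (2 * (C * 2 ^ (1 / z)) + (C * 2 ^ (1 / z) + 1) / (8 * B) ^ 2), by positivity,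
    fun n x hn hx hxn => ?_⟩
  have : 0 ≤ (n : ℝ) * x ^ (-(1 / z)) := by positivity
  rcases le_total x (1 + X / B) with hsmall | hlarge
  · refine measureReal_le_one.trans
      ((one_le_mul_mul_rpow_neg hx hsmall hα hn).trans (mul_le_mul_of_nonneg_right ?_ this))
    exact (le_add_of_nonneg_right (by positivity)).trans (le_add_of_nonneg_right (by positivity))
  have hx1 : 1 ≤ x := le_trans (le_add_of_nonneg_right (by positivity)) hlarge
  have hXx : X ≤ B * x := (div_le_iff₀' hB).1 (by linarith)
  have hfloor : B * ⌊x⌋₊ ≤ B * x := mul_le_mul_of_nonneg_left (Nat.floor_le hx.le) hB.le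
  rcases lt_or_ge (4 * B * x) (n * (C₀ * (⌊x⌋₊ : ℝ) ^ (1 - 1 / z))) with hdrift | hdrift
  · refine measureReal_le_one.trans ((one_le_of_lt_mul_natFloor_rpow hC₀.le (by positivity) hα hx1
      hdrift).trans (mul_le_mul_of_nonneg_right ?_ this))
    exact (le_add_of_nonneg_left (by positivity)).trans (le_add_of_nonneg_right (by positivity))
  · refine (htail n ⌊x⌋₊ _ (Nat.le_floor (by simpa using hx1)) (by positivity)
      (by linarith)).trans ?_
    rw [show 16 * B * x / 2 = 8 * B * x by ring]
    refine (natFloor_tail_le hC.le (by positivity) hα (one_div_lt_two hz).le hx1 hxn).trans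
      (mul_le_mul_of_nonneg_right ?_ this)
    exact le_add_of_nonneg_left (by positivity)

lemma exists_measureReal_lt_abs_lsvBirkhoff_le_rpow (hμ : IsAcip z μ) (hz : 1 / 2 < z)
    (hz1 : z < 1) (hmean : ∫ x, φ x ∂μ = 0) : ∃ C, 0 < C ∧ ∀ (n : ℕ) (t : ℝ), 1 ≤ n →
      t ∈ Ioc 0 (B * n) → μ.real {x | t < |lsvBirkhoff z φ n x|} ≤ C * n * t ^ (-(1 / z)) := by
  have hB := hφ.bound_pos
  obtain ⟨C, hC, htail⟩ :=
    hφ.exists_measureReal_mul_lt_abs_lsvBirkhoff_le hμ hz hz1 hmean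
  refine ⟨C * (16 * B) ^ (1 / z), by positivity, fun n t hn ht => ?_⟩
  have ht0 : 0 < t := ht.1
  have htn : t / (16 * B) ≤ n := (div_le_iff₀' (by positivity)).2 (by nlinarith [ht.2])
  have hle := htail n (t / (16 * B)) hn (by positivity) htn
  rw [mul_div_cancel₀ _ (by positivity : 16 * B ≠ 0), Real.div_rpow ht0.le (by positivity),
    Real.rpow_neg (by positivity : 0 ≤ 16 * B), div_inv_eq_mul] at hle
  exact hle.trans_eq (by ring)

theorem exists_integral_abs_lsvBirkhoff_rpow_le (hμ : IsAcip z μ) (hz : 1 / 2 < z) (hz1 : z < 1)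
    (hmean : ∫ x, φ x ∂μ = 0) (hq : 1 / z < q) : ∃ C, 0 < C ∧ ∀ n : ℕ, 1 ≤ n →
      ∫ x, |lsvBirkhoff z φ n x| ^ q ∂μ ≤ C * (n : ℝ) ^ (q + 1 - 1 / z) := by
  have := hμ.prob
  have hB := hφ.bound_pos
  have hq0 : 0 < q := lt_trans (by positivity) hq
  have := sub_pos.2 hq
  obtain ⟨C, hC, htail⟩ := hφ.exists_measureReal_lt_abs_lsvBirkhoff_le_rpow hμ hz hz1 hmean
  refine ⟨q * (C * (B ^ (q - 1 / z) / (q - 1 / z))), by positivity, fun n hn => ?_⟩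
  have hn0 : (0 : ℝ) < n := by exact_mod_cast hn
  calc _ ≤ q * (C * n * ((B * n) ^ (q - 1 / z) / (q - 1 / z))) :=
        integral_abs_rpow_le_of_measureReal_lt_abs_le (by positivity) (by positivity) hq0 hq
          (measurable_lsvBirkhoff z hφ.measurable n) (hφ.abs_lsvBirkhoff_le n)
          fun t ht => htail n t hn ht
    _ = _ := by
        rw [Real.mul_rpow hB.le hn0.le, show q + 1 - 1 / z = 1 + (q - 1 / z) by ring,
          Real.rpow_add hn0, Real.rpow_one]
        ring

lemma integrable_abs_lsvBirkhoff_rpow [IsFiniteMeasure μ] (hq : 0 ≤ q) (n : ℕ) :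
    Integrable (fun x => |lsvBirkhoff z φ n x| ^ q) μ :=
  Integrable.of_bound
    ((measurable_lsvBirkhoff z hφ.measurable n).abs.pow_const q).aestronglyMeasurable ((B * n) ^ q)
    (ae_of_all _ fun x => by
      rw [Real.norm_of_nonneg (by positivity)]
      exact Real.rpow_le_rpow (abs_nonneg _) (hφ.abs_lsvBirkhoff_le n x) hq)

theorem exists_le_integral_abs_lsvBirkhoff_rpow (hμ : IsAcip z μ) (hz : 0 < z) (hz1 : z < 1)
    (h0 : φ 0 ≠ 0) (hq : 0 ≤ q) : ∃ C, 0 < C ∧ ∀ n : ℕ, 1 ≤ n →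
      C * (n : ℝ) ^ (q + 1 - 1 / z) ≤ ∫ x, |lsvBirkhoff z φ n x| ^ q ∂μ := by
  have := hμ.prob
  have hφ0 := abs_pos.2 h0
  obtain ⟨C, hC, hmeas⟩ := hμ.exists_le_measureReal_Ico_preHalf hz hz1
  obtain ⟨N, hN⟩ :=
    exists_forall_abs_sub_le_of_continuousAt hz hz1.le hφ.continuous.continuousAt (half_pos hφ0)
  refine ⟨(|φ 0| / 2) ^ q * (C * ((N : ℝ) + 2) ^ (1 - 1 / z)), by positivity, fun n hn => ?_⟩
  have hn1 : (1 : ℝ) ≤ n := by exact_mod_cast hn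
  have hn0 : (0 : ℝ) < n := by linarith
  calc _ = (n * (|φ 0| / 2)) ^ q * (C * (((N : ℝ) + 2) * n) ^ (1 - 1 / z)) := by
        rw [show q + 1 - 1 / z = q + (1 - 1 / z) by ring, Real.rpow_add hn0,
          Real.mul_rpow hn0.le (by positivity), Real.mul_rpow (by positivity) hn0.le]
        ring
    _ ≤ (n * (|φ 0| / 2)) ^ q * (C * (((n + N : ℕ) : ℝ) + 1) ^ (1 - 1 / z)) := by
        refine mul_le_mul_of_nonneg_left (mul_le_mul_of_nonneg_left ?_ hC.le) (by positivity)
        refine Real.rpow_le_rpow_of_nonpos (by positivity) ?_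
          (sub_nonpos.2 (one_lt_one_div hz hz1).le)
        push_cast
        nlinarith [Nat.cast_nonneg (α := ℝ) N]
    _ ≤ (n * (|φ 0| / 2)) ^ q *
        μ.real {x | (n * (|φ 0| / 2)) ^ q ≤ |lsvBirkhoff z φ n x| ^ q} := by
        refine mul_le_mul_of_nonneg_left ((hmeas (n + N)).trans (measureReal_mono fun x hx => ?_))
          (by positivity)
        exact Real.rpow_le_rpow (by positivity) (mul_half_le_abs_lsvBirkhoff hz.le hN hx) hq
    _ ≤ _ := mul_meas_ge_le_integral_of_nonneg (ae_of_all _ fun x => by positivity)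
        (hφ.integrable_abs_lsvBirkhoff_rpow hq n) _

end IsHolderObservable

end Moments

lemma isHolderObservable_comp_projIcc {φ : ℝ → ℝ} {C r : ℝ≥0} (hr : 0 < r) (hr1 : r ≤ 1)
    (hφ : HolderOnWith C r φ (Icc 0 1)) :
    IsHolderObservable (fun x => φ (projIcc 0 1 zero_le_one x)) (|φ 0| + C + 1) C r := by
  have hdist : ∀ x ∈ Icc (0 : ℝ) 1, ∀ y ∈ Icc (0 : ℝ) 1, |φ x - φ y| ≤ C * |x - y| ^ (r : ℝ) :=
    fun x hx y hy => by simpa only [Real.dist_eq] using hφ.dist_le hx hy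
  refine ⟨hr, hr1, by positivity, C.2, (hφ.continuousOn hr).comp_continuous
    (continuous_subtype_val.comp continuous_projIcc) fun x => Subtype.prop _, fun x => ?_,
    fun x y => ?_⟩
  · have hx := (projIcc (0 : ℝ) 1 zero_le_one x).2
    have hle : |φ (projIcc 0 1 zero_le_one x) - φ 0| ≤ C * 1 :=
      (hdist _ hx 0 (left_mem_Icc.2 zero_le_one)).trans (mul_le_mul_of_nonneg_left
        (Real.rpow_le_one (abs_nonneg _) (by rw [sub_zero, abs_of_nonneg hx.1]; exact hx.2) r.2)
        C.2)
    have := abs_sub_abs_le_abs_sub (φ (projIcc 0 1 zero_le_one x)) (φ 0)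
    linarith
  · refine (hdist _ (Subtype.prop _) _ (Subtype.prop _)).trans ?_
    have := (LipschitzWith.projIcc (zero_le_one' ℝ)).dist_le_mul x y
    rw [NNReal.coe_one, one_mul, Subtype.dist_eq, Real.dist_eq, Real.dist_eq] at this
    gcongr

end LSV

/-- For `z ∈ (1/2, 1)`, `α = 1/z`, `μ` the unique absolutely continuous
`f_z`-invariant Borel probability measure on `[0,1]`, and `φ` Hölder with mean zero and
`φ(0) ≠ 0`, the moments of order `q > α` satisfy
`C₁ n^{q+1−α} ≤ ∫ |Φ_n|^q dμ ≤ C₂ n^{q+1−α}` for all `n ≥ 1`. -/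
theorem lsv_high_moment_scaling
    (z : ℝ) (hz : z ∈ Set.Ioo (1 / 2 : ℝ) 1)
    (μ : Measure ℝ) (hμprob : IsProbabilityMeasure μ) (hμsupp : μ (Set.Icc (0 : ℝ) 1)ᶜ = 0)
    (hμac : μ ≪ volume) (hμinv : MeasurePreserving (lsv z) μ μ)
    (φ : ℝ → ℝ) (hφ : ∃ C r : ℝ≥0, 0 < r ∧ r ≤ 1 ∧ HolderOnWith C r φ (Set.Icc (0 : ℝ) 1))
    (hmean : ∫ x, φ x ∂μ = 0) (h0 : φ 0 ≠ 0)
    (q : ℝ) (hq : 1 / z < q) :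
    ∃ C₁ C₂ : ℝ, 0 < C₁ ∧ 0 < C₂ ∧ ∀ n : ℕ, 1 ≤ n →
      C₁ * (n : ℝ) ^ (q + 1 - 1 / z) ≤ ∫ x, |lsvBirkhoff z φ n x| ^ q ∂μ ∧
      (∫ x, |lsvBirkhoff z φ n x| ^ q ∂μ) ≤ C₂ * (n : ℝ) ^ (q + 1 - 1 / z) := by
  have hμ : LSV.IsAcip z μ := ⟨hμprob, hμsupp, hμac, hμinv⟩
  obtain ⟨C, r, hr, hr1, hholder⟩ := hφ
  have hz0 : 0 < z := by linarith [hz.1]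
  set ψ : ℝ → ℝ := fun x => φ (projIcc 0 1 zero_le_one x)
  have hψ := LSV.isHolderObservable_comp_projIcc hr hr1 hholder
  have heq : EqOn φ ψ (Ico 0 1) := fun x hx =>
    congrArg φ (congrArg Subtype.val (projIcc_of_mem zero_le_one (Ico_subset_Icc_self hx))).symm
  have hmeanψ : ∫ x, ψ x ∂μ = 0 :=
    (integral_congr_ae (hμ.ae_mem.mono fun x hx => (heq hx).symm)).trans hmean
  have hmoment (n : ℕ) :
      ∫ x, |lsvBirkhoff z φ n x| ^ q ∂μ = ∫ x, |lsvBirkhoff z ψ n x| ^ q ∂μ :=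
    integral_congr_ae (hμ.ae_mem.mono fun x hx =>
      congrArg (|·| ^ q) (LSV.lsvBirkhoff_congr hz0.le heq n hx))
  have h0ψ : ψ 0 ≠ 0 := (heq (left_mem_Ico.2 one_pos)).symm.trans_ne h0
  obtain ⟨C₁, hC₁, hlower⟩ := hψ.exists_le_integral_abs_lsvBirkhoff_rpow hμ hz0 hz.2 h0ψ
    ((one_div_pos.2 hz0).trans hq).le
  obtain ⟨C₂, hC₂, hupper⟩ := hψ.exists_integral_abs_lsvBirkhoff_rpow_le hμ hz.1 hz.2 hmeanψ hq
  exact ⟨C₁, C₂, hC₁, hC₂, fun n hn => hmoment n ▸ ⟨hlower n hn, hupper n hn⟩⟩
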